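/- arXiv:1908.06794 — 4 statements merged into one kernel-verified Lean document; each statement's English description precedes it below -/
import Mathlib

section
/- Let n ≥ 2, 1 < k ≤ n, and let a ∈ ℝ^{n+1} with |a| > 1. Suppose f₁ and f₂ are continuous functions on S^n satisfying the functional equation f_i(x) = (W_a f_i)(x) for all x ∈ S^n (i = 1, 2), and suppose that ∫_{S^n ∩ τ} f₁ dH^{k−1} = ∫_{S^n ∩ τ} f₂ dH^{k−1} for every k-dimensional affine plane τ passing through a and meeting the open unit ball B^{n+1}. Then f₁ = f₂ on S^n. -/
open MeasureTheory Metric Matrix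
open scoped InnerProductSpace ENNReal

/-- `Euc m` is the Euclidean space `ℝ^m`. -/
abbrev Euc (m : ℕ) : Type := EuclideanSpace ℝ (Fin m)

/-- The Möbius transformation `φ_b x = (b − P_b x − s_b Q_b x)/(1 − x·b)`,
where `P_b x = ((b·x)/|b|²) b`, `Q_b x = x − P_b x`, `s_b = √(1 − |b|²)`. -/
noncomputable def phiMap {n : ℕ} (b x : Euc (n + 1)) : Euc (n + 1) :=
  (1 - ⟪x, b⟫_ℝ)⁻¹ •
    (b - (⟪b, x⟫_ℝ / ‖b‖ ^ 2) • b -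
      Real.sqrt (1 - ‖b‖ ^ 2) • (x - (⟪b, x⟫_ℝ / ‖b‖ ^ 2) • b))

/-- `a* = a/|a|²`, the inversion of `a` in the unit sphere. -/
noncomputable def aStar {n : ℕ} (a : Euc (n + 1)) : Euc (n + 1) := (‖a‖ ^ 2)⁻¹ • a

/-- `s_{a*} = √(1 − |a*|²)`. -/
noncomputable def sStar {n : ℕ} (a : Euc (n + 1)) : ℝ := Real.sqrt (1 - ‖aStar a‖ ^ 2)

/-- The reflection `R_a x = x − 2((x·a)/|a|²) a` in the hyperplane `a^⊥`. -/
noncomputable def reflMap {n : ℕ} (a x : Euc (n + 1)) : Euc (n + 1) :=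
  x - ((2 * ⟪x, a⟫_ℝ) / ‖a‖ ^ 2) • a

/-- `τ_a x = ((|a|² − 1) x + 2(1 − x·a) a)/|x − a|²`, the second point at which the
line through `a` and `x` meets the unit sphere. -/
noncomputable def tauMap {n : ℕ} (a x : Euc (n + 1)) : Euc (n + 1) :=
  (‖x - a‖ ^ 2)⁻¹ • ((‖a‖ ^ 2 - 1) • x + (2 * (1 - ⟪x, a⟫_ℝ)) • a)

/-- `(W_a f)(x) = ρ_{a*}(x) f(τ_a x)` with `ρ_{a*}(x) = ((|a|²−1)/|a−x|²)^{k−1}`. -/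
noncomputable def Wop {n : ℕ} (k : ℕ) (a : Euc (n + 1)) (f : Euc (n + 1) → ℝ)
    (x : Euc (n + 1)) : ℝ :=
  ((‖a‖ ^ 2 - 1) / ‖a - x‖ ^ 2) ^ (k - 1) * f (tauMap a x)


open Set in
set_option maxHeartbeats 1000000 in
theorem hausdorff_conformal_set {F E : Type*} [MetricSpace F] [MeasurableSpace F]
    [BorelSpace F] [MetricSpace E] [MeasurableSpace E] [BorelSpace E]
    [PolishSpace F]
    (d : ℕ) (T : Set F) (Ψ : F → E) (J : F → ℝ)
    (hc : ContinuousOn Ψ T) (hJ : Measurable J) (hJ0 : ∀ x ∈ T, 0 < J x)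
    (hd : ∀ x ∈ T, ∀ y ∈ T, dist (Ψ x) (Ψ y) ^ 2 = J x * J y * dist x y ^ 2)
    (A : Set F) (hA : MeasurableSet A) (hAT : A ⊆ T) :
    μH[(d : ℝ)] (Ψ '' A) = ∫⁻ x in A, ENNReal.ofReal (J x) ^ d ∂μH[(d : ℝ)] := by
  have hinj : InjOn Ψ T := by
    intro x hx y hy h
    have := hd x hx y hy
    rw [h, dist_self] at this
    have h1 := mul_pos (hJ0 x hx) (hJ0 y hy)
    have h2 : dist x y ^ 2 = 0 := by
      have h3 : J x * J y * dist x y ^ 2 = 0 := by rw [← this]; norm_num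
      exact (mul_eq_zero.1 h3).resolve_left h1.ne'
    exact dist_eq_zero.1 (pow_eq_zero_iff (two_ne_zero) |>.1 h2)
  -- main estimates
  have key : ∀ t : ℝ, 1 < t →
      μH[(d : ℝ)] (Ψ '' A) ≤ ENNReal.ofReal t ^ d * ∫⁻ x in A, ENNReal.ofReal (J x) ^ d ∂μH[(d : ℝ)] ∧
      ∫⁻ x in A, ENNReal.ofReal (J x) ^ d ∂μH[(d : ℝ)] ≤ ENNReal.ofReal t ^ d * μH[(d : ℝ)] (Ψ '' A) := by
    intro t ht
    have t0 : 0 < t := by linarith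
    let An : ℤ → Set F := fun j => A ∩ J ⁻¹' Ico (t ^ j) (t ^ (j + 1))
    have hAn : ∀ j, MeasurableSet (An j) := fun j => hA.inter (hJ measurableSet_Ico)
    have hAnA : ∀ j, An j ⊆ A := fun j => inter_subset_left
    have hdisj : Pairwise (Function.onFun Disjoint An) := by
      intro i j hij
      have : Disjoint (Ico (t ^ i) (t ^ (i + 1))) (Ico (t ^ j) (t ^ (j + 1))) :=
        (zpow_right_mono₀ ht.le).pairwise_disjoint_on_Ico_succ hij
      exact ((this.preimage J).mono inter_subset_right inter_subset_right)
    have hU : A = ⋃ j, An j := by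
      ext x
      simp only [mem_iUnion]
      constructor
      · intro hx
        obtain ⟨j, hj⟩ := exists_mem_Ico_zpow (hJ0 x (hAT hx)) ht
        exact ⟨j, hx, hj⟩
      · rintro ⟨j, hj⟩; exact hj.1
    have hint : ∫⁻ x in A, ENNReal.ofReal (J x) ^ d ∂μH[(d : ℝ)]
        = ∑' j, ∫⁻ x in An j, ENNReal.ofReal (J x) ^ d ∂μH[(d : ℝ)] := by
      conv_lhs => rw [hU]
      exact lintegral_iUnion hAn hdisj _
    have himg : μH[(d : ℝ)] (Ψ '' A) = ∑' j, μH[(d : ℝ)] (Ψ '' An j) := by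
      conv_lhs => rw [hU, image_iUnion]
      refine measure_iUnion ?_ ?_
      · intro i j hij
        rw [Function.onFun, Set.disjoint_left]
        rintro _ ⟨x, hx, rfl⟩ ⟨y, hy, hxy⟩
        have := hinj (hAT (hAnA j hy)) (hAT (hAnA i hx)) hxy
        subst this
        exact Set.disjoint_left.1 (hdisj hij) hx hy
      · intro j
        exact (hAn j).image_of_continuousOn_injOn (hc.mono ((hAnA j).trans hAT))
          (hinj.mono ((hAnA j).trans hAT))
    -- distance estimates on a piece
    have hup : ∀ j, ∀ x ∈ An j, ∀ y ∈ An j, dist (Ψ x) (Ψ y) ≤ t ^ (j + 1) * dist x y := by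
      intro j x hx y hy
      refine (pow_le_pow_iff_left₀ (by positivity) (by positivity) two_ne_zero).1 ?_
      rw [hd x (hAT hx.1) y (hAT hy.1), mul_pow, sq (t ^ (j + 1))]
      have h1 := hx.2.2.le
      have h2 := hy.2.2.le
      have h3 := hJ0 x (hAT hx.1)
      have h4 := hJ0 y (hAT hy.1)
      gcongr
    have hlo : ∀ j, ∀ x ∈ An j, ∀ y ∈ An j, dist x y ≤ (t ^ j)⁻¹ * dist (Ψ x) (Ψ y) := by
      intro j x hx y hy
      have : t ^ j * dist x y ≤ dist (Ψ x) (Ψ y) := by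
        refine (pow_le_pow_iff_left₀ (by positivity) (by positivity) two_ne_zero).1 ?_
        rw [hd x (hAT hx.1) y (hAT hy.1), mul_pow, sq (t ^ j)]
        have h1 := hx.2.1
        have h2 := hy.2.1
        have h3 := hJ0 x (hAT hx.1)
        gcongr
      rw [inv_mul_eq_div, le_div_iff₀ (by positivity)]
      linarith
    have hH1 : ∀ j, μH[(d : ℝ)] (Ψ '' An j) ≤ ENNReal.ofReal (t ^ (j + 1)) ^ d * μH[(d : ℝ)] (An j) := by
      intro j
      have : LipschitzOnWith (t ^ (j + 1)).toNNReal Ψ (An j) := by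
        refine LipschitzOnWith.of_dist_le_mul fun x hx y hy => ?_
        rw [Real.coe_toNNReal _ (by positivity)]
        exact hup j x hx y hy
      have h := this.hausdorffMeasure_image_le (d := (d : ℝ)) (by positivity)
      rwa [ENNReal.rpow_natCast] at h
    have hH2 : ∀ j, μH[(d : ℝ)] (An j) ≤ ENNReal.ofReal ((t ^ j)⁻¹) ^ d * μH[(d : ℝ)] (Ψ '' An j) := by
      intro j
      rcases (An j).eq_empty_or_nonempty with he | hne
      · simp [he]
      have : Nonempty F := ⟨hne.some⟩
      have hinjj : InjOn Ψ (An j) := hinj.mono ((hAnA j).trans hAT)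
      have hl : LipschitzOnWith ((t ^ j)⁻¹).toNNReal (Function.invFunOn Ψ (An j)) (Ψ '' An j) := by
        refine LipschitzOnWith.of_dist_le_mul ?_
        rintro _ ⟨x, hx, rfl⟩ _ ⟨y, hy, rfl⟩
        rw [Real.coe_toNNReal _ (by positivity), hinjj.leftInvOn_invFunOn hx,
          hinjj.leftInvOn_invFunOn hy]
        exact hlo j x hx y hy
      have h := hl.hausdorffMeasure_image_le (d := (d : ℝ)) (by positivity)
      rwa [ENNReal.rpow_natCast, hinjj.leftInvOn_invFunOn.image_image] at h
    have hI1 : ∀ j, ENNReal.ofReal (t ^ j) ^ d * μH[(d : ℝ)] (An j) ≤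
        ∫⁻ x in An j, ENNReal.ofReal (J x) ^ d ∂μH[(d : ℝ)] := by
      intro j
      rw [← setLIntegral_const]
      refine setLIntegral_mono' (hAn j) fun x hx => ?_
      gcongr
      exact hx.2.1
    have hI2 : ∀ j, ∫⁻ x in An j, ENNReal.ofReal (J x) ^ d ∂μH[(d : ℝ)] ≤
        ENNReal.ofReal (t ^ (j + 1)) ^ d * μH[(d : ℝ)] (An j) := by
      intro j
      rw [← setLIntegral_const]
      refine setLIntegral_mono' (hAn j) fun x hx => ?_
      gcongr
      exact hx.2.2.le
    have hs : ∀ j : ℤ, ENNReal.ofReal (t ^ (j + 1)) ^ d =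
        ENNReal.ofReal t ^ d * ENNReal.ofReal (t ^ j) ^ d := by
      intro j
      rw [← mul_pow, ← ENNReal.ofReal_mul t0.le, zpow_add_one₀ t0.ne', mul_comm]
    have hi : ∀ j : ℤ, ENNReal.ofReal (t ^ j) ^ d * ENNReal.ofReal ((t ^ j)⁻¹) ^ d = 1 := by
      intro j
      rw [← mul_pow, ← ENNReal.ofReal_mul (by positivity), mul_inv_cancel₀ (by positivity)]
      simp
    constructor
    · rw [hint, himg, ← ENNReal.tsum_mul_left]
      refine ENNReal.tsum_le_tsum fun j => ?_
      calc _ ≤ _ := hH1 j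
        _ = ENNReal.ofReal t ^ d * (ENNReal.ofReal (t ^ j) ^ d * μH[(d : ℝ)] (An j)) := by
            rw [hs, mul_assoc]
        _ ≤ _ := by gcongr; exact hI1 j
    · rw [hint, himg, ← ENNReal.tsum_mul_left]
      refine ENNReal.tsum_le_tsum fun j => ?_
      calc _ ≤ _ := hI2 j
        _ ≤ ENNReal.ofReal t ^ d * ENNReal.ofReal (t ^ j) ^ d *
              (ENNReal.ofReal ((t ^ j)⁻¹) ^ d * μH[(d : ℝ)] (Ψ '' An j)) := by
            rw [hs]; gcongr; exact hH2 j
        _ = ENNReal.ofReal t ^ d * (ENNReal.ofReal (t ^ j) ^ d *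
              ENNReal.ofReal ((t ^ j)⁻¹) ^ d) * μH[(d : ℝ)] (Ψ '' An j) := by ring
        _ = _ := by rw [hi, mul_one]
  -- limit t → 1
  have lim : ∀ a b : ℝ≥0∞, (∀ t : ℝ, 1 < t → a ≤ ENNReal.ofReal t ^ d * b) → a ≤ b := by
    intro a b h
    have hcont : Filter.Tendsto (fun t : ℝ => ENNReal.ofReal t ^ d * b) (nhdsWithin 1 (Ioi 1))
        (nhds (ENNReal.ofReal 1 ^ d * b)) := by
      refine ENNReal.Tendsto.mul_const ?_ (Or.inl (by simp))
      refine Filter.Tendsto.mono_left ?_ nhdsWithin_le_nhds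
      exact ((ENNReal.continuous_pow d).comp ENNReal.continuous_ofReal).tendsto 1
    simp only [ENNReal.ofReal_one, one_pow, one_mul] at hcont
    exact ge_of_tendsto hcont (eventually_nhdsWithin_of_forall fun t ht => h t ht)
  exact le_antisymm (lim _ _ fun t ht => (key t ht).1) (lim _ _ fun t ht => (key t ht).2)

open Set in
theorem hausdorff_conformal {F E : Type*} [MetricSpace F] [MeasurableSpace F]
    [BorelSpace F] [MetricSpace E] [MeasurableSpace E] [BorelSpace E]
    [PolishSpace F]
    (d : ℕ) (T : Set F) (hT : MeasurableSet T) (Ψ : F → E) (J : F → ℝ)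
    (hc : ContinuousOn Ψ T) (hm : Measurable Ψ) (hJ : Measurable J) (hJ0 : ∀ x ∈ T, 0 < J x)
    (hd : ∀ x ∈ T, ∀ y ∈ T, dist (Ψ x) (Ψ y) ^ 2 = J x * J y * dist x y ^ 2)
    (K : E → ℝ≥0∞) (hK : Measurable K) :
    ∫⁻ x in Ψ '' T, K x ∂μH[(d : ℝ)]
      = ∫⁻ x in T, ENNReal.ofReal (J x) ^ d * K (Ψ x) ∂μH[(d : ℝ)] := by
  have hJm : Measurable fun x => ENNReal.ofReal (J x) ^ d := by fun_prop
  have : (μH[(d : ℝ)] : Measure E).restrict (Ψ '' T) =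
      (((μH[(d : ℝ)] : Measure F).restrict T).withDensity
        (fun x => ENNReal.ofReal (J x) ^ d)).map Ψ := by
    ext B hB
    rw [Measure.map_apply hm hB, Measure.restrict_apply hB, withDensity_apply _ (hm hB),
      Measure.restrict_restrict (hm hB),
      ← hausdorff_conformal_set d T Ψ J hc hJ hJ0 hd _ ((hm hB).inter hT) inter_subset_right]
    congr 1
    ext y
    constructor
    · rintro ⟨hy, x, hx, rfl⟩; exact ⟨x, ⟨hy, hx⟩, rfl⟩
    · rintro ⟨x, ⟨hy, hx⟩, rfl⟩; exact ⟨hy, x, hx, rfl⟩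
  rw [this, lintegral_map hK hm]
  exact lintegral_withDensity_eq_lintegral_mul _ hJm (hK.comp hm)

open scoped NNReal in
theorem christensen_le {X : Type*} [MetricSpace X] [SecondCountableTopology X]
    [MeasurableSpace X] [BorelSpace X]
    (μ ν : Measure X) [IsFiniteMeasure μ] [IsFiniteMeasure ν] (T : Set X) (hT : IsCompact T)
    (hμT : ∀ᵐ x ∂μ, x ∈ T) (hνT : ∀ᵐ x ∂ν, x ∈ T)
    (hμ : ∀ r : ℝ, ∀ x ∈ T, ∀ y ∈ T, μ (ball x r) = μ (ball y r))
    (hν : ∀ r : ℝ, ∀ x ∈ T, ∀ y ∈ T, ν (ball x r) = ν (ball y r))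
    (hν0 : ν Set.univ ≠ 0) (f : BoundedContinuousFunction X ℝ≥0) :
    (∫⁻ x, f x ∂μ) * ν Set.univ ≤ μ Set.univ * ∫⁻ x, f x ∂ν := by
  obtain ⟨x0, hx0⟩ : T.Nonempty := by
    by_contra hne
    rw [Set.not_nonempty_iff_eq_empty] at hne
    subst hne
    apply hν0
    have : ∀ᵐ x ∂ν, False := by simpa using hνT
    simpa [ae_iff] using this
  -- positivity of balls
  have hpos : ∀ r : ℝ, 0 < r → ν (ball x0 r) ≠ 0 := by
    intro r hr h0
    apply hν0
    have hTn : ν T = 0 := by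
      refine measure_null_of_locally_null T fun x hx => ?_
      exact ⟨ball x r, mem_nhdsWithin_of_mem_nhds (ball_mem_nhds x hr), by rw [hν r x hx x0 hx0, h0]⟩
    have h2 : ν Tᶜ = 0 := hνT
    rw [← Set.union_compl_self T]
    exact measure_union_null hTn h2
  -- the basic double integral
  have hswap : ∀ (μ ν : Measure X) [IsFiniteMeasure μ] [IsFiniteMeasure ν] (F : X → ℝ≥0∞) (_ : Measurable F) (r : ℝ),
      ∫⁻ x, F x * ν (ball x r) ∂μ = ∫⁻ x, ∫⁻ y, (if dist x y < r then F x else 0) ∂ν ∂μ := by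
    intro μ ν _ _ F hF r
    refine lintegral_congr fun x => ?_
    have : (fun y => if dist x y < r then F x else 0) = (ball x r).indicator fun _ => F x := by
      ext y
      simp [Set.indicator, mem_ball, dist_comm y x]
    rw [this, lintegral_indicator measurableSet_ball, setLIntegral_const]
  have hmeas : ∀ (F : X → ℝ≥0∞) (_ : Measurable F) (r : ℝ),
      Measurable (Function.uncurry fun y x : X => if dist x y < r then F y else 0) := by
    intro F hF r
    refine Measurable.ite ?_ (hF.comp measurable_fst) measurable_const
    exact measurableSet_lt (by fun_prop) measurable_const
  have hfm : Measurable fun x => (f x : ℝ≥0∞) := by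
    exact measurable_coe_nnreal_ennreal.comp f.continuous.measurable
  -- total masses
  have hone : ∀ r : ℝ, ν (ball x0 r) * μ Set.univ = μ (ball x0 r) * ν Set.univ := by
    intro r
    have h1 := hswap μ ν (fun _ => 1) measurable_const r
    have h2 := hswap ν μ (fun _ => 1) measurable_const r
    rw [lintegral_congr_ae (g := fun _ => ν (ball x0 r))
      (by filter_upwards [hμT] with x hx; rw [one_mul, hν r x hx x0 hx0]), lintegral_const] at h1
    rw [lintegral_congr_ae (g := fun _ => μ (ball x0 r))
      (by filter_upwards [hνT] with x hx; rw [one_mul, hμ r x hx x0 hx0]), lintegral_const] at h2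
    rw [h1, h2, lintegral_lintegral_swap]
    · simp_rw [dist_comm]
    · exact ((hmeas (fun _ => 1) measurable_const r).comp measurable_swap).aemeasurable
  -- epsilon estimate
  have heps : ∀ ε : ℝ≥0, 0 < ε → (∫⁻ x, f x ∂μ) * ν Set.univ ≤
      μ Set.univ * (∫⁻ x, f x ∂ν + ε * ν Set.univ) := by
    intro ε hε
    have huc := hT.uniformContinuousOn_of_continuous f.continuous.continuousOn
    obtain ⟨r, hr, hfr⟩ := Metric.uniformContinuousOn_iff.1 huc ε hε
    have hle : ν (ball x0 r) * ∫⁻ x, f x ∂μ ≤ μ (ball x0 r) * (∫⁻ x, f x ∂ν + ε * ν Set.univ) := by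
      calc ν (ball x0 r) * ∫⁻ x, f x ∂μ = ∫⁻ x, f x * ν (ball x r) ∂μ := by
            rw [← lintegral_const_mul _ hfm]
            refine lintegral_congr_ae ?_
            filter_upwards [hμT] with x hx
            rw [hν r x hx x0 hx0, mul_comm]
        _ = ∫⁻ x, ∫⁻ y, (if dist x y < r then (f x : ℝ≥0∞) else 0) ∂ν ∂μ := hswap μ ν _ hfm r
        _ ≤ ∫⁻ x, ∫⁻ y, (if dist x y < r then (f y + ε : ℝ≥0∞) else 0) ∂ν ∂μ := by
            refine lintegral_mono_ae ?_
            filter_upwards [hμT] with x hx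
            refine lintegral_mono_ae ?_
            filter_upwards [hνT] with y hy
            split_ifs with h
            · have := hfr x hx y hy h
              rw [NNReal.dist_eq, abs_lt] at this
              have h3 : (f x : ℝ) ≤ f y + ε := by linarith [this.2]
              exact_mod_cast h3
            · exact le_rfl
        _ = ∫⁻ y, ∫⁻ x, (if dist y x < r then (f y + ε : ℝ≥0∞) else 0) ∂μ ∂ν := by
            rw [lintegral_lintegral_swap]
            · simp_rw [dist_comm]
            · have := (hmeas (fun x => f x + ε) (hfm.add_const _) r).comp measurable_swap
              exact this.aemeasurable
        _ = ∫⁻ y, (f y + ε) * μ (ball y r) ∂ν := (hswap ν μ _ (hfm.add_const _) r).symm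
        _ = ∫⁻ y, μ (ball x0 r) * (f y + ε) ∂ν := by
            refine lintegral_congr_ae ?_
            filter_upwards [hνT] with x hx
            rw [hμ r x hx x0 hx0, mul_comm]
        _ = _ := by
            rw [lintegral_const_mul _ (hfm.add_const _), lintegral_add_left hfm, lintegral_const]
    have h0 := hpos r hr
    have ht : ν (ball x0 r) ≠ ∞ := measure_ne_top _ _
    rw [← ENNReal.mul_le_mul_iff_right h0 ht]
    calc ν (ball x0 r) * ((∫⁻ x, f x ∂μ) * ν Set.univ)
        = (ν (ball x0 r) * (∫⁻ x, f x ∂μ)) * ν Set.univ := by ring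
      _ ≤ (μ (ball x0 r) * (∫⁻ x, f x ∂ν + ε * ν Set.univ)) * ν Set.univ := by gcongr
      _ = (μ (ball x0 r) * ν Set.univ) * (∫⁻ x, f x ∂ν + ε * ν Set.univ) := by ring
      _ = _ := by rw [← hone r]; ring
  have hcont : Filter.Tendsto (fun ε : ℝ≥0 => μ Set.univ * (∫⁻ x, f x ∂ν + ε * ν Set.univ))
      (nhdsWithin 0 (Set.Ioi 0)) (nhds (μ Set.univ * (∫⁻ x, f x ∂ν + ((0 : ℝ≥0) : ℝ≥0∞) * ν Set.univ))) := by
    refine Filter.Tendsto.mono_left ?_ nhdsWithin_le_nhds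
    refine ENNReal.Tendsto.const_mul ?_ (Or.inr (measure_ne_top _ _))
    refine Filter.Tendsto.const_add _ ?_
    exact ENNReal.Tendsto.mul_const (ENNReal.continuous_coe.tendsto 0) (Or.inr (measure_ne_top _ _))
  simp only [ENNReal.coe_zero, zero_mul, add_zero] at hcont
  exact ge_of_tendsto hcont (eventually_nhdsWithin_of_forall fun t ht => heps t ht)

theorem christensen {X : Type*} [MetricSpace X] [SecondCountableTopology X]
    [MeasurableSpace X] [BorelSpace X]
    (μ ν : Measure X) [IsFiniteMeasure μ] [IsFiniteMeasure ν] (T : Set X) (hT : IsCompact T)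
    (hμT : ∀ᵐ x ∂μ, x ∈ T) (hνT : ∀ᵐ x ∂ν, x ∈ T)
    (hμ : ∀ r : ℝ, ∀ x ∈ T, ∀ y ∈ T, μ (ball x r) = μ (ball y r))
    (hν : ∀ r : ℝ, ∀ x ∈ T, ∀ y ∈ T, ν (ball x r) = ν (ball y r))
    (hμ0 : μ Set.univ ≠ 0) (hν0 : ν Set.univ ≠ 0) :
    ∃ C : ℝ≥0∞, C ≠ 0 ∧ C ≠ ∞ ∧ μ = C • ν := by
  have ht := measure_ne_top ν Set.univ
  have ht' := measure_ne_top μ Set.univ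
  refine ⟨μ Set.univ / ν Set.univ, by simp [ENNReal.div_eq_zero_iff, hμ0, ht],
    by simp [ENNReal.div_eq_top, hν0, ht'], ?_⟩
  refine ext_of_forall_lintegral_eq_of_IsFiniteMeasure fun f => ?_
  rw [lintegral_smul_measure]
  have h1 := christensen_le μ ν T hT hμT hνT hμ hν hν0 f
  have h2 := christensen_le ν μ T hT hνT hμT hν hμ hμ0 f
  have h3 : (∫⁻ x, f x ∂μ) * ν Set.univ = μ Set.univ * ∫⁻ x, f x ∂ν :=
    le_antisymm h1 (by rwa [mul_comm, mul_comm (∫⁻ x, f x ∂μ)])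
  rw [smul_eq_mul, ENNReal.div_eq_inv_mul, mul_assoc, ← h3, mul_comm (∫⁻ x, f x ∂μ), ← mul_assoc,
    ENNReal.inv_mul_cancel hν0 ht, one_mul]

theorem normalize_dist_le {F : Type*} [NormedAddCommGroup F] [InnerProductSpace ℝ F]
    (x y : F) (hx : 1 ≤ ‖x‖) (hy : 1 ≤ ‖y‖) :
    dist (‖x‖⁻¹ • x) (‖y‖⁻¹ • y) ≤ dist x y := by
  rw [dist_eq_norm, dist_eq_norm]
  refine (pow_le_pow_iff_left₀ (by positivity) (by positivity) two_ne_zero).1 ?_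
  rw [norm_sub_sq_real, norm_sub_sq_real]
  have hx0 : 0 < ‖x‖ := by linarith
  have hy0 : 0 < ‖y‖ := by linarith
  simp only [norm_smul, norm_inv, norm_norm, inner_smul_left, inner_smul_right, inv_mul_cancel₀ hx0.ne',
    inv_mul_cancel₀ hy0.ne', conj_trivial]
  have hcs : ⟪x, y⟫_ℝ ≤ ‖x‖ * ‖y‖ := real_inner_le_norm x y
  set p := ‖x‖
  set q := ‖y‖
  set c := p⁻¹ * (q⁻¹ * ⟪x, y⟫_ℝ) with hc
  have hi : ⟪x, y⟫_ℝ = p * q * c := by rw [hc]; field_simp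
  have hc1 : c ≤ 1 := by
    rw [hi] at hcs
    have : 0 < p * q := by positivity
    nlinarith
  have hpq : 1 ≤ p * q := by nlinarith
  have : q⁻¹ * (p⁻¹ * ⟪x, y⟫_ℝ) = c := by rw [hc]; ring
  rw [this, hi]
  nlinarith [sq_nonneg (p - q), mul_nonneg (sub_nonneg.2 hpq) (sub_nonneg.2 hc1)]

section sphere
variable {F : Type*} [NormedAddCommGroup F] [InnerProductSpace ℝ F] [FiniteDimensional ℝ F]
  [MeasurableSpace F] [BorelSpace F]

theorem finrank_orth_unit (d : ℕ) (hF : Module.finrank ℝ F = d + 1) (w : F) (hw : ‖w‖ = 1) :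
    Module.finrank ℝ (ℝ ∙ w)ᗮ = d := by
  have : Fact (Module.finrank ℝ F = d + 1) := ⟨hF⟩
  exact Submodule.finrank_orthogonal_span_singleton (by rintro rfl; simp at hw)

theorem hausdorff_sphere_lt_top (d : ℕ) (hF : Module.finrank ℝ F = d + 1) :
    μH[(d : ℝ)] (sphere (0 : F) 1) < ∞ := by
  refine (isCompact_sphere (0 : F) 1).measure_lt_top_of_nhdsWithin fun w hw => ?_
  have hw1 : ‖w‖ = 1 := by simpa using hw
  have hww : ⟪w, w⟫_ℝ = 1 := by rw [real_inner_self_eq_norm_sq, hw1]; norm_num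
  refine ⟨sphere 0 1 ∩ {x | 1 / 2 < ⟪x, w⟫_ℝ}, ?_, ?_⟩
  · refine Filter.inter_mem self_mem_nhdsWithin (mem_nhdsWithin_of_mem_nhds ?_)
    refine IsOpen.mem_nhds (isOpen_lt (by fun_prop) (by fun_prop)) ?_
    simp only [Set.mem_ofPred_eq, hww]; norm_num
  · let W : Submodule ℝ F := (ℝ ∙ w)ᗮ
    let q : W → F := fun y => ‖w + (y : F)‖⁻¹ • (w + (y : F))
    have hin : ∀ y : W, ⟪w, (y : F)⟫_ℝ = 0 := fun y => Submodule.mem_orthogonal_singleton_iff_inner_right.1 y.2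
    have hn : ∀ y : W, 1 ≤ ‖w + (y : F)‖ := by
      intro y
      refine (pow_le_pow_iff_left₀ (by positivity) (by positivity) two_ne_zero).1 ?_
      rw [norm_add_sq_real, hin, hw1]
      nlinarith [norm_nonneg (y : F)]
    have hq : LipschitzOnWith 1 q (closedBall 0 3) := by
      refine LipschitzOnWith.of_dist_le_mul fun x _ y _ => ?_
      rw [NNReal.coe_one, one_mul]
      refine (normalize_dist_le _ _ (hn x) (hn y)).trans ?_
      rw [dist_add_left]
      exact le_rfl
    have hsub : sphere (0 : F) 1 ∩ {x | 1 / 2 < ⟪x, w⟫_ℝ} ⊆ q '' closedBall 0 3 := by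
      rintro x ⟨hx, hxw⟩
      have hx1 : ‖x‖ = 1 := by simpa using hx
      simp only [Set.mem_ofPred_eq] at hxw
      set c := ⟪x, w⟫_ℝ with hc
      have hc0 : 0 < c := by linarith
      have hyW : c⁻¹ • x - w ∈ W := by
        rw [Submodule.mem_orthogonal_singleton_iff_inner_right, inner_sub_right, inner_smul_right, real_inner_comm,
          ← hc, hww, inv_mul_cancel₀ hc0.ne', sub_self]
      refine ⟨⟨_, hyW⟩, ?_, ?_⟩
      · rw [mem_closedBall_zero_iff]
        refine (norm_sub_le (c⁻¹ • x) w).trans ?_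
        rw [norm_smul, hx1, hw1, norm_inv, Real.norm_of_nonneg hc0.le]
        have : c⁻¹ ≤ 2 := by rw [inv_le_comm₀ hc0 (by norm_num)]; linarith
        linarith
      · simp only [q, add_sub_cancel]
        rw [norm_smul, hx1, norm_inv, Real.norm_of_nonneg hc0.le, mul_one, inv_inv, smul_smul,
          mul_inv_cancel₀ hc0.ne', one_smul]
    have h := hq.hausdorffMeasure_image_le (d := (d : ℝ)) (by positivity)
    refine (measure_mono hsub).trans_lt (h.trans_lt ?_)
    have hfr : Module.finrank ℝ W = d := finrank_orth_unit d hF w hw1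
    rw [← hfr]
    simp only [ENNReal.coe_one, ENNReal.one_rpow, one_mul]
    exact (isCompact_closedBall (0 : W) 3).measure_lt_top

theorem hausdorff_sphere_ne_zero (d : ℕ) (hF : Module.finrank ℝ F = d + 1) :
    μH[(d : ℝ)] (sphere (0 : F) 1) ≠ 0 := by
  have : Nontrivial F := Module.nontrivial_of_finrank_pos (R := ℝ) (by omega)
  obtain ⟨w, hw1⟩ := exists_norm_eq F (zero_le_one)
  let W : Submodule ℝ F := (ℝ ∙ w)ᗮ
  have hin : ∀ y : W, ⟪(y : F), w⟫_ℝ = 0 := fun y => Submodule.mem_orthogonal_singleton_iff_inner_left.1 y.2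
  have hfr : Module.finrank ℝ W = d := finrank_orth_unit d hF w hw1
  have hle := hausdorffMeasure_orthogonalProjectionOnto_le (𝕜 := ℝ) W (d : ℝ) (sphere (0 : F) 1) (by positivity)
  have hsub : ball (0 : W) 1 ⊆ W.orthogonalProjectionOnto '' sphere (0 : F) 1 := by
    intro y hy
    have hy1 : ‖y‖ < 1 := by simpa using hy
    have hy1' : ‖(y : F)‖ < 1 := hy1
    refine ⟨(y : F) + √(1 - ‖y‖ ^ 2) • w, ?_, ?_⟩
    · rw [mem_sphere_zero_iff_norm]
      have h0 : 0 ≤ 1 - ‖y‖ ^ 2 := by nlinarith [norm_nonneg y]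
      have : ‖(y : F) + √(1 - ‖y‖ ^ 2) • w‖ ^ 2 = 1 := by
        rw [norm_add_sq_real, inner_smul_right, hin, norm_smul, hw1, mul_one, Real.norm_eq_abs, sq_abs,
          Real.sq_sqrt h0, Submodule.norm_coe]
        ring
      nlinarith [norm_nonneg ((y : F) + √(1 - ‖y‖ ^ 2) • w)]
    · rw [map_add, map_smul, Submodule.orthogonalProjectionOnto_mem_subspace_eq_self,
        Submodule.orthogonalProjectionOnto_eq_zero_iff.2 (by simp [W, Submodule.mem_span_singleton_self]), smul_zero, add_zero]
  intro h0
  rw [h0] at hle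
  have h1 : μH[(d : ℝ)] (ball (0 : W) 1) = 0 := le_antisymm ((measure_mono hsub).trans hle) zero_le
  rw [← hfr] at h1
  exact (measure_ball_pos (μH[(Module.finrank ℝ W : ℝ)] : Measure W) 0 one_pos).ne' h1

/-- cone measure -/
noncomputable def coneMeasure (F : Type*) [NormedAddCommGroup F] [InnerProductSpace ℝ F] [FiniteDimensional ℝ F]
  [MeasurableSpace F] [BorelSpace F] : Measure F :=
  ((volume : Measure F).restrict (ball 0 1)).map fun x => ‖x‖⁻¹ • x

theorem measurable_normalize : Measurable fun x : F => ‖x‖⁻¹ • x := by fun_prop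

theorem hausdorff_sphere_eq (d : ℕ) (hF : Module.finrank ℝ F = d + 1) :
    ∃ C : ℝ≥0∞, C ≠ 0 ∧ C ≠ ∞ ∧
      (μH[(d : ℝ)] : Measure F).restrict (sphere (0 : F) 1) = C • coneMeasure F := by
  have : Nontrivial F := Module.nontrivial_of_finrank_pos (R := ℝ) (by omega)
  have hrot : ∀ x ∈ sphere (0 : F) 1, ∀ y ∈ sphere (0 : F) 1, ∃ R : F ≃ₗᵢ[ℝ] F, R x = y := by
    intro x hx y hy
    rw [mem_sphere_zero_iff_norm] at hx hy
    exact ⟨_, Submodule.reflection_sub (hx.trans hy.symm)⟩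
  have : IsFiniteMeasure ((μH[(d : ℝ)] : Measure F).restrict (sphere (0 : F) 1)) :=
    ⟨by rw [Measure.restrict_apply_univ]; exact hausdorff_sphere_lt_top d hF⟩
  have hfin : IsFiniteMeasure ((volume : Measure F).restrict (ball 0 1)) :=
    ⟨by rw [Measure.restrict_apply_univ]; exact measure_ball_lt_top⟩
  have : IsFiniteMeasure (coneMeasure F) := by unfold coneMeasure; infer_instance
  refine christensen _ (coneMeasure F) (sphere 0 1) (isCompact_sphere _ _) ?_ ?_ ?_ ?_ ?_ ?_
  · exact ae_restrict_mem isClosed_sphere.measurableSet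
  · unfold coneMeasure
    refine (ae_map_iff (p := fun x : F => x ∈ sphere (0 : F) 1) measurable_normalize.aemeasurable
      isClosed_sphere.measurableSet).2 ?_
    refine ae_restrict_of_ae ?_
    have : ∀ᵐ x : F, x ≠ 0 := by
      simp [ae_iff]
    filter_upwards [this] with x hx
    simp [norm_smul, hx]
  · intro r x hx y hy
    obtain ⟨R, hR⟩ := hrot x hx y hy
    rw [Measure.restrict_apply measurableSet_ball, Measure.restrict_apply measurableSet_ball]
    rw [← R.toIsometryEquiv.hausdorffMeasure_image (d : ℝ) (ball x r ∩ sphere 0 1)]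
    congr 1
    rw [Set.image_inter R.toIsometryEquiv.injective, IsometryEquiv.image_ball, IsometryEquiv.image_sphere]
    simp [hR]
  · intro r x hx y hy
    obtain ⟨R, hR⟩ := hrot y hy x hx
    unfold coneMeasure
    rw [Measure.map_apply measurable_normalize measurableSet_ball, Measure.map_apply measurable_normalize measurableSet_ball,
      Measure.restrict_apply (measurable_normalize measurableSet_ball),
      Measure.restrict_apply (measurable_normalize measurableSet_ball)]
    rw [← R.measurePreserving.measure_preimage
      ((measurable_normalize measurableSet_ball).inter measurableSet_ball).nullMeasurableSet]
    congr 1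
    ext z
    simp only [Set.mem_inter_iff, Set.mem_preimage, mem_ball, R.norm_map, ← hR, ← map_smul, R.dist_map,
      dist_zero_right]
  · rw [Measure.restrict_apply_univ]; exact hausdorff_sphere_ne_zero d hF
  · unfold coneMeasure
    rw [Measure.map_apply measurable_normalize MeasurableSet.univ, Set.preimage_univ, Measure.restrict_apply_univ]
    exact (measure_ball_pos _ _ one_pos).ne'

end sphere


section cone
variable {V : Type*} [NormedAddCommGroup V] [InnerProductSpace ℝ V] [FiniteDimensional ℝ V]
  [MeasurableSpace V] [BorelSpace V]

theorem lintegral_scale (ρ : ℝ) (hρ : 0 < ρ) (g : V → ℝ≥0∞) (hg : Measurable g) :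
    ∫⁻ v, g v = ENNReal.ofReal (ρ ^ Module.finrank ℝ V) * ∫⁻ y, g (ρ • y) := by
  have h := Measure.map_addHaar_smul (volume : Measure V) hρ.ne'
  have h2 : ∫⁻ y, g (ρ • y) = ENNReal.ofReal (abs (ρ ^ Module.finrank ℝ V)⁻¹) * ∫⁻ v, g v := by
    rw [← smul_eq_mul, ← lintegral_smul_measure, ← h, lintegral_map hg (by fun_prop)]
  rw [h2, ← mul_assoc, ← ENNReal.ofReal_mul (by positivity), abs_of_pos (by positivity),
    mul_inv_cancel₀ (by positivity), ENNReal.ofReal_one, one_mul]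

theorem lintegral_even (g : ℝ → ℝ≥0∞) (hg : ∀ z, g (-z) = g z) :
    ∫⁻ z, g z = 2 * ∫⁻ z in Set.Ioi 0, g z := by
  have h1 : ∫⁻ z, g z = (∫⁻ z in Set.Iic 0, g z) + (∫⁻ z in Set.Ioi 0, g z) := by
    rw [← lintegral_add_compl g (measurableSet_Iic (a := (0 : ℝ))), Set.compl_Iic]
  have h2 : ∫⁻ z in Set.Iic 0, g z = ∫⁻ z in Set.Ioi 0, g z := by
    have hmp := (Measure.measurePreserving_neg (volume : Measure ℝ))
    have := hmp.setLIntegral_comp_emb (MeasurableEquiv.neg ℝ).measurableEmbedding g (Set.Ici (0 : ℝ))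
    simp only [hg] at this
    have h3 : (Neg.neg '' Set.Ici (0 : ℝ)) = Set.Iic 0 := by simp
    rw [h3] at this
    rw [← setLIntegral_congr Ioi_ae_eq_Ici] at this
    exact this.symm
  rw [h1, h2, two_mul]

theorem cone_inner (v : V) (g : ℝ → ℝ≥0∞) :
    ∫⁻ z in Set.Ioi 0, g z = ∫⁻ ρ in Set.Ioi ‖v‖,
      ENNReal.ofReal (ρ / √(ρ ^ 2 - ‖v‖ ^ 2)) * g √(ρ ^ 2 - ‖v‖ ^ 2) := by
  have hpos : ∀ ρ ∈ Set.Ioi ‖v‖, 0 < ρ ^ 2 - ‖v‖ ^ 2 := by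
    intro ρ hρ
    have : ‖v‖ < ρ := hρ
    nlinarith [norm_nonneg v]
  have himg : (fun ρ : ℝ => √(ρ ^ 2 - ‖v‖ ^ 2)) '' Set.Ioi ‖v‖ = Set.Ioi 0 := by
    ext z
    constructor
    · rintro ⟨ρ, hρ, rfl⟩
      exact Real.sqrt_pos.2 (hpos ρ hρ)
    · intro hz
      have hz' : 0 < z := hz
      refine ⟨√(z ^ 2 + ‖v‖ ^ 2), ?_, ?_⟩
      · exact Real.lt_sqrt_of_sq_lt (by nlinarith)
      · dsimp only
        rw [Real.sq_sqrt (by positivity), add_sub_cancel_right, Real.sqrt_sq hz'.le]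
  rw [← himg, lintegral_image_eq_lintegral_abs_deriv_mul (f' := fun ρ => ρ / √(ρ ^ 2 - ‖v‖ ^ 2))
    measurableSet_Ioi]
  · refine setLIntegral_congr_fun measurableSet_Ioi fun ρ hρ => ?_
    have h0 : 0 < ρ := (norm_nonneg v).trans_lt hρ
    rw [abs_of_nonneg (by positivity)]
  · intro ρ hρ
    have h := ((hasDerivAt_pow 2 ρ).sub_const (‖v‖ ^ 2)).sqrt (hpos ρ hρ).ne'
    have he : ((2 : ℕ) : ℝ) * ρ ^ (2 - 1) / (2 * √(ρ ^ 2 - ‖v‖ ^ 2)) = ρ / √(ρ ^ 2 - ‖v‖ ^ 2) := by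
      push_cast
      rw [mul_div_mul_left _ _ two_ne_zero, pow_one]
    rw [he] at h
    exact h.hasDerivWithinAt
  · intro x hx y hy hxy
    have h1 := hpos x hx
    have h2 := hpos y hy
    have h3 := (Real.sqrt_inj h1.le h2.le).1 hxy
    have hx0 : 0 < x := (norm_nonneg v).trans_lt hx
    have hy0 : 0 < y := (norm_nonneg v).trans_lt hy
    have h4 : x ^ 2 = y ^ 2 := by linarith
    exact (pow_left_inj₀ hx0.le hy0.le two_ne_zero).1 h4

variable (V) in
theorem cone_lintegral : ∃ c : ℝ≥0∞, c ≠ 0 ∧ c ≠ ∞ ∧ ∀ K : V → ℝ → ℝ≥0∞,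
    Measurable (Function.uncurry K) → (∀ v z, K v (-z) = K v z) →
    ∫⁻ x, K x.fst x.snd ∂(coneMeasure (WithLp 2 (V × ℝ))) =
      c * ∫⁻ v in ball (0 : V) 1, ENNReal.ofReal (√(1 - ‖v‖ ^ 2))⁻¹ * K v √(1 - ‖v‖ ^ 2) := by
  set d := Module.finrank ℝ V with hd
  refine ⟨2 * ∫⁻ ρ in Set.Ioo (0 : ℝ) 1, ENNReal.ofReal (ρ ^ d), ?_, ?_, ?_⟩
  · refine mul_ne_zero two_ne_zero ?_
    rw [← pos_iff_ne_zero, setLIntegral_pos_iff (by fun_prop)]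
    have : (Function.support fun ρ : ℝ => ENNReal.ofReal (ρ ^ d)) ∩ Set.Ioo (0 : ℝ) 1 = Set.Ioo 0 1 := by
      refine Set.inter_eq_right.2 fun ρ hρ => ?_
      rw [Function.mem_support, ← pos_iff_ne_zero, ENNReal.ofReal_pos]
      exact pow_pos hρ.1 _
    rw [this]; simp
  · refine ENNReal.mul_ne_top (by simp) ?_
    refine ne_of_lt (lt_of_le_of_lt (setLIntegral_mono' (g := fun _ => 1) measurableSet_Ioo fun ρ hρ => ?_) ?_)
    · rw [← ENNReal.ofReal_one]
      exact ENNReal.ofReal_le_ofReal (pow_le_one₀ hρ.1.le hρ.2.le)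
    · simp
  intro K hK heven
  let Φ : V → ℝ → ℝ≥0∞ := fun v z =>
    if ‖v‖ ^ 2 + z ^ 2 < 1 then K ((√(‖v‖ ^ 2 + z ^ 2))⁻¹ • v) ((√(‖v‖ ^ 2 + z ^ 2))⁻¹ * z) else 0
  have hΦm : Measurable (Function.uncurry Φ) := by
    refine Measurable.ite (measurableSet_lt (by fun_prop) measurable_const) ?_ measurable_const
    exact hK.comp (f := fun p : V × ℝ => ((√(‖p.1‖ ^ 2 + p.2 ^ 2))⁻¹ • p.1, (√(‖p.1‖ ^ 2 + p.2 ^ 2))⁻¹ * p.2))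
      (by fun_prop)
  have hKF : Measurable fun x : WithLp 2 (V × ℝ) => K x.fst x.snd :=
    hK.comp (f := fun x : WithLp 2 (V × ℝ) => (x.fst, x.snd)) (by fun_prop)
  have e1 : ∫⁻ x, K x.fst x.snd ∂(coneMeasure (WithLp 2 (V × ℝ))) = ∫⁻ v, ∫⁻ z, Φ v z := by
    unfold coneMeasure
    rw [lintegral_map hKF measurable_normalize, ← lintegral_indicator measurableSet_ball,
      ← (WithLp.volume_preserving_toLp V ℝ).lintegral_comp]
    · have hpr := lintegral_prod (μ := (volume : Measure V)) (ν := (volume : Measure ℝ)) _ hΦm.aemeasurable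
      refine Eq.trans ?_ hpr
      rw [Measure.volume_eq_prod]
      refine lintegral_congr fun p => ?_
      have hn : ‖(WithLp.toLp 2 p : WithLp 2 (V × ℝ))‖ = √(‖p.1‖ ^ 2 + p.2 ^ 2) := by
        rw [WithLp.prod_norm_eq_of_L2]; simp
      have hiff : (WithLp.toLp 2 p : WithLp 2 (V × ℝ)) ∈ ball (0 : WithLp 2 (V × ℝ)) 1 ↔
          ‖p.1‖ ^ 2 + p.2 ^ 2 < 1 := by
        rw [mem_ball_zero_iff, hn, Real.sqrt_lt' one_pos, one_pow]
      by_cases hp : ‖p.1‖ ^ 2 + p.2 ^ 2 < 1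
      · rw [Set.indicator_of_mem (hiff.2 hp)]
        simp only [hn, Function.uncurry, Φ, if_pos hp]
        rfl
      · rw [Set.indicator_of_notMem (fun h => hp (hiff.1 h))]
        simp only [Function.uncurry, Φ, if_neg hp]
    · exact (hKF.comp measurable_normalize).indicator measurableSet_ball
  let Θ : V → ℝ → ℝ≥0∞ := fun v ρ => if ‖v‖ < ρ ∧ ρ < 1 then
    ENNReal.ofReal (ρ / √(ρ ^ 2 - ‖v‖ ^ 2)) * K (ρ⁻¹ • v) (ρ⁻¹ * √(ρ ^ 2 - ‖v‖ ^ 2)) else 0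
  have hΘm : Measurable (Function.uncurry Θ) := by
    have hset : MeasurableSet {p : V × ℝ | ‖p.1‖ < p.2 ∧ p.2 < 1} :=
      (measurableSet_lt (f := fun p : V × ℝ => ‖p.1‖) (g := fun p => p.2) (by fun_prop) (by fun_prop)).inter
      (measurableSet_lt (f := fun p : V × ℝ => p.2) (g := fun _ => 1) (by fun_prop) measurable_const)
    refine Measurable.ite hset ?_ measurable_const
    refine Measurable.mul (by fun_prop) ?_
    exact hK.comp (f := fun p : V × ℝ => (p.2⁻¹ • p.1, p.2⁻¹ * √(p.2 ^ 2 - ‖p.1‖ ^ 2)))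
      (by fun_prop)
  have e2 : ∀ v, ∫⁻ z, Φ v z = 2 * ∫⁻ ρ, Θ v ρ := by
    intro v
    rw [lintegral_even _ (by intro z; simp [Φ, heven]), cone_inner v,
      ← lintegral_indicator measurableSet_Ioi]
    congr 1
    refine lintegral_congr fun ρ => ?_
    by_cases hρ : ‖v‖ < ρ
    · rw [Set.indicator_of_mem (show ρ ∈ Set.Ioi ‖v‖ from hρ)]
      have h0 : 0 < ρ := (norm_nonneg v).trans_lt hρ
      have h1 : 0 ≤ ρ ^ 2 - ‖v‖ ^ 2 := by nlinarith [norm_nonneg v]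
      have h2 : ρ ^ 2 < 1 ↔ ρ < 1 := by
        rw [sq_lt_one_iff₀ h0.le]
      simp only [Φ, Θ, Real.sq_sqrt h1, add_sub_cancel, Real.sqrt_sq h0.le, hρ, true_and, h2]
      split_ifs <;> simp
    · rw [Set.indicator_of_notMem (by simpa using hρ)]
      simp [Θ, hρ]
  have e3 : ∀ ρ : ℝ, ∫⁻ v, Θ v ρ = (Set.Ioo (0 : ℝ) 1).indicator (fun ρ => ENNReal.ofReal (ρ ^ d)) ρ *
      ∫⁻ v in ball (0 : V) 1, ENNReal.ofReal (√(1 - ‖v‖ ^ 2))⁻¹ * K v √(1 - ‖v‖ ^ 2) := by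
    intro ρ
    by_cases hρ : ρ ∈ Set.Ioo (0 : ℝ) 1
    · rw [Set.indicator_of_mem hρ, lintegral_scale ρ hρ.1 (fun v => Θ v ρ) (by exact hΘm.comp (measurable_id.prodMk measurable_const)),
        ← lintegral_indicator measurableSet_ball]
      congr 1
      refine lintegral_congr fun v => ?_
      have h0 := hρ.1
      have hs : √(ρ ^ 2 - (ρ * ‖v‖) ^ 2) = ρ * √(1 - ‖v‖ ^ 2) := by
        rw [show ρ ^ 2 - (ρ * ‖v‖) ^ 2 = ρ ^ 2 * (1 - ‖v‖ ^ 2) by ring, Real.sqrt_mul (by positivity),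
          Real.sqrt_sq h0.le]
      have hlt : ρ * ‖v‖ < ρ ↔ ‖v‖ < 1 := by
        constructor <;> intro h <;> nlinarith
      simp only [Θ, norm_smul, Real.norm_of_nonneg h0.le, hs, hlt, hρ.2, and_true, smul_smul, inv_mul_cancel₀ h0.ne', one_smul]
      rw [← mul_assoc ρ⁻¹, inv_mul_cancel₀ h0.ne', one_mul, ← div_div, div_self h0.ne', one_div]
      by_cases hv : ‖v‖ < 1
      · rw [Set.indicator_of_mem (mem_ball_zero_iff.2 hv), if_pos hv]
      · rw [Set.indicator_of_notMem (fun h => hv (mem_ball_zero_iff.1 h)), if_neg hv]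
    · rw [Set.indicator_of_notMem hρ, zero_mul]
      refine (lintegral_congr fun v => ?_).trans lintegral_zero
      simp only [Θ]
      rw [if_neg]
      rintro ⟨h1, h2⟩
      exact hρ ⟨(norm_nonneg v).trans_lt h1, h2⟩
  rw [e1]
  simp_rw [e2]
  rw [lintegral_const_mul _ (by exact hΘm.lintegral_prod_right), lintegral_lintegral_swap hΘm.aemeasurable]
  simp_rw [e3]
  rw [lintegral_mul_const _ ((by fun_prop : Measurable fun ρ : ℝ => ENNReal.ofReal (ρ ^ d)).indicator measurableSet_Ioo),
    lintegral_indicator measurableSet_Ioo, mul_assoc]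

end cone


section psi
variable {E : Type*} [NormedAddCommGroup E] [InnerProductSpace ℝ E]

/-- The conformal parametrization. -/
noncomputable def Psi (e : E) (β s z : ℝ) (y : E) : E := (1 + β * z)⁻¹ • (s • y + (z + β) • e)

variable {e : E} {β s : ℝ}

theorem psi_den (hβ0 : 0 < β) (hβ1 : β < 1) {y : E} {z : ℝ} (h : ‖y‖ ^ 2 + z ^ 2 = 1) : 0 < 1 + β * z := by
  have h1 : -1 ≤ z := by nlinarith [sq_nonneg ‖y‖]
  nlinarith

theorem psi_den' (hβ0 : 0 < β) (hβ1 : β < 1) {y : E} {z : ℝ} (h : ‖y‖ ^ 2 + z ^ 2 = 1) : 0 < 1 - β * z := by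
  have h1 : z ≤ 1 := by nlinarith [sq_nonneg ‖y‖]
  nlinarith

theorem psi_inner (he : ‖e‖ = 1) {y y' : E} (hy : ⟪y, e⟫_ℝ = 0) (hy' : ⟪y', e⟫_ℝ = 0) (z z' : ℝ) :
    ⟪Psi e β s z y, Psi e β s z' y'⟫_ℝ =
      (1 + β * z)⁻¹ * (1 + β * z')⁻¹ * (s ^ 2 * ⟪y, y'⟫_ℝ + (z + β) * (z' + β)) := by
  unfold Psi
  simp only [inner_smul_left, inner_smul_right, inner_add_left, inner_add_right, hy,
    real_inner_comm y' e ▸ hy', real_inner_self_eq_norm_sq, he]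
  simp
  ring

theorem psi_inner_e (he : ‖e‖ = 1) {y : E} (hy : ⟪y, e⟫_ℝ = 0) (z : ℝ) :
    ⟪Psi e β s z y, e⟫_ℝ = (1 + β * z)⁻¹ * (z + β) := by
  unfold Psi
  simp only [inner_smul_left, inner_add_left, hy, real_inner_self_eq_norm_sq, he]
  simp

theorem psi_norm (he : ‖e‖ = 1) (hβ0 : 0 < β) (hβ1 : β < 1) (hs : s ^ 2 = 1 - β ^ 2) {y : E} (hy : ⟪y, e⟫_ℝ = 0) {z : ℝ}
    (h : ‖y‖ ^ 2 + z ^ 2 = 1) : ‖Psi e β s z y‖ = 1 := by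
  have hd := psi_den hβ0 hβ1 h
  have h1 : ‖Psi e β s z y‖ ^ 2 = 1 := by
    rw [← real_inner_self_eq_norm_sq, psi_inner he hy hy, real_inner_self_eq_norm_sq, hs,
      show ‖y‖ ^ 2 = 1 - z ^ 2 by linarith]
    field_simp
    ring
  exact (pow_eq_one_iff_of_nonneg (norm_nonneg _) two_ne_zero).1 h1

theorem psi_dist (he : ‖e‖ = 1) (hβ0 : 0 < β) (hβ1 : β < 1) (hs : s ^ 2 = 1 - β ^ 2) {y y' : E} (hy : ⟪y, e⟫_ℝ = 0)
    (hy' : ⟪y', e⟫_ℝ = 0) {z z' : ℝ}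
    (h : ‖y‖ ^ 2 + z ^ 2 = 1) (h' : ‖y'‖ ^ 2 + z' ^ 2 = 1) :
    dist (Psi e β s z y) (Psi e β s z' y') ^ 2 =
      s / (1 + β * z) * (s / (1 + β * z')) * (dist y y' ^ 2 + (z - z') ^ 2) := by
  have hd := psi_den hβ0 hβ1 h
  have hd' := psi_den hβ0 hβ1 h'
  rw [dist_eq_norm, dist_eq_norm, norm_sub_sq_real, norm_sub_sq_real, psi_norm he hβ0 hβ1 hs hy h,
    psi_norm he hβ0 hβ1 hs hy' h', psi_inner he hy hy', show ‖y‖ ^ 2 = 1 - z ^ 2 by linarith,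
      show ‖y'‖ ^ 2 = 1 - z' ^ 2 by linarith]
  field_simp
  rw [hs]
  ring

theorem psi_surj (he : ‖e‖ = 1) (hβ0 : 0 < β) (hβ1 : β < 1) (hs0 : 0 < s) (hs : s ^ 2 = 1 - β ^ 2) {x : E} (hx : ‖x‖ = 1) :
    let t := ⟪x, e⟫_ℝ
    let y := (s / (1 - β * t)) • (x - t • e)
    let z := (t - β) / (1 - β * t)
    0 < 1 - β * t ∧ ⟪y, e⟫_ℝ = 0 ∧ ‖y‖ ^ 2 + z ^ 2 = 1 ∧ Psi e β s z y = x := by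
  intro t y z
  have ht : t ≤ 1 := by
    have := real_inner_le_norm x e
    rw [hx, he] at this; simpa using this
  have hd : 0 < 1 - β * t := by nlinarith
  refine ⟨hd, ?_, ?_, ?_⟩
  · simp only [y, inner_smul_left, inner_sub_left, real_inner_self_eq_norm_sq, he]
    simp [t]
  · have h1 : ‖x - t • e‖ ^ 2 = 1 - t ^ 2 := by
      rw [norm_sub_sq_real, inner_smul_right, norm_smul, hx, he]
      simp [t]; ring
    simp only [y, z, norm_smul, mul_pow, h1, Real.norm_eq_abs, sq_abs, div_pow, hs]
    field_simp
    ring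
  · have h2 : 1 + β * z = s ^ 2 / (1 - β * t) := by
      simp only [z, hs]; field_simp; ring
    have h3 : z + β = t * s ^ 2 / (1 - β * t) := by
      rw [eq_div_iff hd.ne', add_mul, div_mul_cancel₀ _ hd.ne', hs]; ring
    unfold Psi
    rw [h2, h3]
    simp only [y, smul_smul]
    rw [show s * (s / (1 - β * t)) = s ^ 2 / (1 - β * t) by ring, show t * s ^ 2 / (1 - β * t) = s ^ 2 / (1 - β * t) * t by ring,
      mul_smul, ← smul_add, smul_smul, inv_mul_cancel₀ (by positivity), one_smul]
    abel

theorem psi_sub (hβ0 : 0 < β) (hs : s ^ 2 = 1 - β ^ 2) {z : ℝ} (hz : 0 < 1 + β * z) (y : E) :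
    Psi e β s z y - β⁻¹ • e = (1 + β * z)⁻¹ • (s • y - (s ^ 2 / β) • e) := by
  unfold Psi
  have : (β⁻¹ : ℝ) = (1 + β * z)⁻¹ * ((1 + β * z) / β) := by field_simp
  rw [this, mul_smul, ← smul_sub, add_sub_assoc, ← sub_smul, sub_eq_add_neg (s • y), ← neg_smul]
  congr 4
  rw [hs]; field_simp; ring

theorem psi_sub_norm (he : ‖e‖ = 1) (hβ0 : 0 < β) (hβ1 : β < 1) (hs : s ^ 2 = 1 - β ^ 2) {y : E} (hy : ⟪y, e⟫_ℝ = 0) {z : ℝ}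
    (h : ‖y‖ ^ 2 + z ^ 2 = 1) :
    ‖Psi e β s z y - β⁻¹ • e‖ ^ 2 = (s / β) ^ 2 * ((1 - β * z) / (1 + β * z)) := by
  have hd := psi_den hβ0 hβ1 h
  rw [norm_sub_sq_real, psi_norm he hβ0 hβ1 hs hy h, inner_smul_right, psi_inner_e he hy, norm_smul, he, div_pow, hs]
  simp
  field_simp
  ring
end psi


section sect
variable {H : Type*} [NormedAddCommGroup H] [InnerProductSpace ℝ H] [FiniteDimensional ℝ H]
  [MeasurableSpace H] [BorelSpace H]
  {E : Type*} [NormedAddCommGroup E] [InnerProductSpace ℝ E]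
  [MeasurableSpace E] [BorelSpace E]

/-- The chord density. -/
noncomputable def GK (e : E) (β s : ℝ) (ι : H →ₗᵢ[ℝ] E) (d : ℕ) (K : E → ℝ≥0∞) (y : H) : ℝ≥0∞ :=
  (ball (0 : H) 1).indicator (fun y => ENNReal.ofReal (√(1 - ‖y‖ ^ 2))⁻¹ *
    (ENNReal.ofReal ((1 + β * √(1 - ‖y‖ ^ 2))⁻¹) ^ d * K (Psi e β s √(1 - ‖y‖ ^ 2) (ι y)))) y

/-- The parametrization of the section. -/
noncomputable def sectMap (e : E) (β s : ℝ) (ι : H →ₗᵢ[ℝ] E) (V : Submodule ℝ H) (w : H) (r : ℝ)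
    (x : WithLp 2 (V × ℝ)) : E := Psi e β s (r * x.snd) (ι (w + r • (x.fst : H)))

variable [FiniteDimensional ℝ E]

theorem measurable_psi (e : E) (β s : ℝ) : Measurable fun p : ℝ × E => Psi e β s p.1 p.2 := by
  unfold Psi; fun_prop

theorem measurable_GK (e : E) (β s : ℝ) (ι : H →ₗᵢ[ℝ] E) (d : ℕ) (K : E → ℝ≥0∞) (hK : Measurable K) :
    Measurable (GK e β s ι d K) := by
  unfold GK
  refine Measurable.indicator ?_ measurableSet_ball
  have hι : Measurable ι := ι.continuous.measurable
  refine Measurable.mul (by fun_prop) (Measurable.mul (by fun_prop) ?_)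
  exact hK.comp ((measurable_psi e β s).comp (f := fun y : H => (√(1 - ‖y‖ ^ 2), ι y)) (by fun_prop))

variable {e : E} {β s : ℝ} {ι : H →ₗᵢ[ℝ] E}

theorem norm_sect {V : Submodule ℝ H} {w : H} (hw : w ∈ Vᗮ) (r : ℝ) (v : V) :
    ‖w + r • (v : H)‖ ^ 2 = ‖w‖ ^ 2 + r ^ 2 * ‖v‖ ^ 2 := by
  rw [norm_add_sq_real, inner_smul_right, Submodule.inner_left_of_mem_orthogonal v.2 hw, norm_smul, mul_pow]
  simp

theorem norm_sect_sphere {V : Submodule ℝ H} {w : H} (hw : w ∈ Vᗮ) {r : ℝ} (hr : r ^ 2 = 1 - ‖w‖ ^ 2) (v : V) (z : ℝ)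
    (h : ‖v‖ ^ 2 + z ^ 2 = 1) :
    ‖ι (w + r • (v : H))‖ ^ 2 + (r * z) ^ 2 = 1 := by
  rw [ι.norm_map, norm_sect hw, mul_pow, add_assoc, ← mul_add, h, hr]; ring

theorem sphere_withLp {V : Submodule ℝ H} {x : WithLp 2 (V × ℝ)} (hx : x ∈ sphere (0 : WithLp 2 (V × ℝ)) 1) :
    ‖x.fst‖ ^ 2 + x.snd ^ 2 = 1 := by
  rw [mem_sphere_zero_iff_norm] at hx
  have := WithLp.prod_norm_sq_eq_of_L2 x
  rw [hx] at this
  simpa using this.symm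

theorem sect_conformal (he : ‖e‖ = 1) (hβ0 : 0 < β) (hβ1 : β < 1) (hs0 : 0 < s) (hs : s ^ 2 = 1 - β ^ 2)
    (hι : ∀ y, ⟪ι y, e⟫_ℝ = 0) (d : ℕ) (V : Submodule ℝ H) {w : H} (hw : w ∈ Vᗮ) {r : ℝ} (hr0 : 0 < r)
    (hr : r ^ 2 = 1 - ‖w‖ ^ 2) (K : E → ℝ≥0∞) (hK : Measurable K) :
    ∫⁻ x in sectMap e β s ι V w r '' sphere 0 1, K x ∂μH[(d : ℝ)] =
      ∫⁻ x in sphere (0 : WithLp 2 (V × ℝ)) 1, ENNReal.ofReal (r * s / (1 + β * (r * x.snd))) ^ d *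
        K (sectMap e β s ι V w r x) ∂μH[(d : ℝ)] := by
  have hιm : Measurable ι := ι.continuous.measurable
  have hιc : Continuous ι := ι.continuous
  have hin : Continuous fun x : WithLp 2 (V × ℝ) => ι (w + r • (x.fst : H)) := by fun_prop
  have hden : ∀ x ∈ sphere (0 : WithLp 2 (V × ℝ)) 1, 0 < 1 + β * (r * x.snd) := fun x hx =>
    psi_den hβ0 hβ1 (norm_sect_sphere (ι := ι) hw hr _ _ (sphere_withLp hx))
  refine hausdorff_conformal d (sphere 0 1) isClosed_sphere.measurableSet (sectMap e β s ι V w r)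
    (fun x => r * s / (1 + β * (r * x.snd))) ?_ ?_ (by fun_prop) ?_ ?_ K hK
  · unfold sectMap Psi
    refine ContinuousOn.smul (ContinuousOn.inv₀ (by fun_prop) fun x hx => (hden x hx).ne') ?_
    fun_prop
  · exact (measurable_psi e β s).comp (f := fun x : WithLp 2 (V × ℝ) => (r * x.snd, ι (w + r • (x.fst : H)))) (by fun_prop)
  · intro x hx
    have := hden x hx
    positivity
  · intro x hx y hy
    have h1 := hden x hx
    have h2 := hden y hy
    have hxy : dist x y ^ 2 = dist x.fst y.fst ^ 2 + (x.snd - y.snd) ^ 2 := by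
      rw [WithLp.prod_dist_eq_of_L2, Real.sq_sqrt (by positivity), Real.dist_eq, sq_abs]
    unfold sectMap
    rw [psi_dist he hβ0 hβ1 hs (hι _) (hι _) (norm_sect_sphere hw hr _ _ (sphere_withLp hx))
      (norm_sect_sphere hw hr _ _ (sphere_withLp hy)), ι.dist_map, dist_add_left, dist_smul₀, hxy,
      Real.norm_eq_abs, mul_pow, sq_abs]
    have : dist (x.fst : H) (y.fst : H) = dist x.fst y.fst := rfl
    rw [this]
    ring

theorem sect_finite (he : ‖e‖ = 1) (hβ0 : 0 < β) (hβ1 : β < 1) (hs0 : 0 < s) (hs : s ^ 2 = 1 - β ^ 2)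
    (hι : ∀ y, ⟪ι y, e⟫_ℝ = 0) (d : ℕ) (V : Submodule ℝ H) (hV : Module.finrank ℝ V = d)
    {w : H} (hw : w ∈ Vᗮ) {r : ℝ} (hr0 : 0 < r)
    (hr : r ^ 2 = 1 - ‖w‖ ^ 2) :
    μH[(d : ℝ)] (sectMap e β s ι V w r '' sphere 0 1) < ∞ := by
  have h := sect_conformal he hβ0 hβ1 hs0 hs hι d V hw hr0 hr (fun _ => 1) measurable_const
  rw [setLIntegral_one] at h
  rw [h]
  have hF : Module.finrank ℝ (WithLp 2 (V × ℝ)) = d + 1 := by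
    rw [(WithLp.linearEquiv 2 ℝ (V × ℝ)).finrank_eq, Module.finrank_prod, hV, Module.finrank_self]
  refine lt_of_le_of_lt (setLIntegral_mono' (g := fun _ => ENNReal.ofReal (r * s / (1 - β)) ^ d)
    isClosed_sphere.measurableSet fun x hx => ?_) ?_
  · rw [mul_one]
    have h0 := norm_sect_sphere (ι := ι) hw hr _ _ (sphere_withLp hx)
    have h1 : -1 ≤ r * x.snd := by nlinarith [sq_nonneg ‖ι (w + r • (x.fst : H))‖]
    have h2 : 0 < 1 - β := by linarith
    have h3 : 1 - β ≤ 1 + β * (r * x.snd) := by nlinarith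
    gcongr
  · rw [setLIntegral_const]
    exact ENNReal.mul_lt_top (ENNReal.pow_lt_top ENNReal.ofReal_lt_top) (hausdorff_sphere_lt_top d hF)

theorem sect_formula (he : ‖e‖ = 1) (hβ0 : 0 < β) (hβ1 : β < 1) (hs0 : 0 < s) (hs : s ^ 2 = 1 - β ^ 2)
    (hι : ∀ y, ⟪ι y, e⟫_ℝ = 0) (d : ℕ) (V : Submodule ℝ H) (hV : Module.finrank ℝ V = d)
    {w : H} (hw : w ∈ Vᗮ) {r : ℝ} (hr0 : 0 < r)
    (hr : r ^ 2 = 1 - ‖w‖ ^ 2) :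
    ∃ A B : ℝ≥0∞, A ≠ 0 ∧ A ≠ ∞ ∧ B ≠ 0 ∧ B ≠ ∞ ∧ ∀ K : E → ℝ≥0∞, Measurable K →
      (∀ (y : H) (z : ℝ), ‖y‖ ^ 2 + z ^ 2 = 1 →
        ENNReal.ofReal ((1 + β * z)⁻¹) ^ d * K (Psi e β s z (ι y)) =
        ENNReal.ofReal ((1 - β * z)⁻¹) ^ d * K (Psi e β s (-z) (ι y))) →
      A * ∫⁻ x in sectMap e β s ι V w r '' sphere 0 1, K x ∂μH[(d : ℝ)] =
        B * ∫⁻ u : V, GK e β s ι d K (w + (u : H)) := by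
  have hF : Module.finrank ℝ (WithLp 2 (V × ℝ)) = d + 1 := by
    rw [(WithLp.linearEquiv 2 ℝ (V × ℝ)).finrank_eq, Module.finrank_prod, hV, Module.finrank_self]
  obtain ⟨C, hC0, hCt, hC⟩ := hausdorff_sphere_eq (F := WithLp 2 (V × ℝ)) d hF
  obtain ⟨c, hc0, hct, hc⟩ := cone_lintegral V
  have hrd : ENNReal.ofReal (r ^ d) ≠ 0 := by
    rw [← pos_iff_ne_zero, ENNReal.ofReal_pos]; positivity
  have hrs : ENNReal.ofReal (r * s) ^ d * ENNReal.ofReal r ≠ 0 := by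
    refine mul_ne_zero (pow_ne_zero _ ?_) ?_ <;> rw [← pos_iff_ne_zero, ENNReal.ofReal_pos] <;> positivity
  refine ⟨ENNReal.ofReal (r ^ d), C * c * (ENNReal.ofReal (r * s) ^ d * ENNReal.ofReal r), hrd,
    ENNReal.ofReal_ne_top, mul_ne_zero (mul_ne_zero hC0 hc0) hrs,
    ENNReal.mul_ne_top (ENNReal.mul_ne_top hCt hct) (ENNReal.mul_ne_top (ENNReal.pow_ne_top ENNReal.ofReal_ne_top)
      ENNReal.ofReal_ne_top), ?_⟩
  intro K hK hev
  have hιm : Measurable ι := ι.continuous.measurable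
  let L : V → ℝ → ℝ≥0∞ := fun v z => if ‖v‖ ^ 2 + z ^ 2 = 1 then
    ENNReal.ofReal (r * s / (1 + β * (r * z))) ^ d * K (Psi e β s (r * z) (ι (w + r • (v : H)))) else 0
  have hLm : Measurable (Function.uncurry L) := by
    refine Measurable.ite (measurableSet_eq_fun (f := fun p : V × ℝ => ‖p.1‖ ^ 2 + p.2 ^ 2) (g := fun _ => 1)
      (by fun_prop) measurable_const) ?_ measurable_const
    refine Measurable.mul (by fun_prop) ?_
    exact hK.comp ((measurable_psi e β s).comp (f := fun p : V × ℝ => (r * p.2, ι (w + r • (p.1 : H)))) (by fun_prop))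
  have hsplit : ∀ z : ℝ, ENNReal.ofReal (r * s / (1 + β * z)) = ENNReal.ofReal (r * s) * ENNReal.ofReal ((1 + β * z)⁻¹) := by
    intro z
    rw [div_eq_mul_inv, ENNReal.ofReal_mul (by positivity)]
  have hLe : ∀ v z, L v (-z) = L v z := by
    intro v z
    simp only [L, neg_sq]
    split_ifs with h
    · have h1 := norm_sect_sphere (ι := ι) hw hr v z h
      rw [ι.norm_map] at h1
      have h2 := hev _ _ h1
      rw [hsplit, hsplit, mul_pow, mul_pow, mul_assoc, mul_assoc, h2, mul_neg, mul_neg, ← sub_eq_add_neg]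
    · rfl
  have e1 : ∫⁻ x in sectMap e β s ι V w r '' sphere 0 1, K x ∂μH[(d : ℝ)] =
      C * (c * ∫⁻ v in ball (0 : V) 1, ENNReal.ofReal (√(1 - ‖v‖ ^ 2))⁻¹ * L v √(1 - ‖v‖ ^ 2)) := by
    rw [sect_conformal he hβ0 hβ1 hs0 hs hι d V hw hr0 hr K hK, ← hc L hLm hLe, ← smul_eq_mul (a := C),
      ← lintegral_smul_measure, ← hC]
    refine setLIntegral_congr_fun isClosed_sphere.measurableSet fun x hx => ?_
    simp only [L, sphere_withLp hx, if_true]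
    rfl
  have e2 : ∫⁻ u : V, GK e β s ι d K (w + (u : H)) =
      ENNReal.ofReal (r ^ d) * ∫⁻ v : V, GK e β s ι d K (w + r • (v : H)) := by
    have := lintegral_scale r hr0 (fun u : V => GK e β s ι d K (w + (u : H)))
      ((measurable_GK e β s ι d K hK).comp (by fun_prop))
    rw [hV] at this
    exact this
  have e3 : (∫⁻ v in ball (0 : V) 1, ENNReal.ofReal (√(1 - ‖v‖ ^ 2))⁻¹ * L v √(1 - ‖v‖ ^ 2)) =
      (ENNReal.ofReal (r * s) ^ d * ENNReal.ofReal r) * ∫⁻ v : V, GK e β s ι d K (w + r • (v : H)) := by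
    have hmG : Measurable fun v : V => GK e β s ι d K (w + r • (v : H)) :=
      (measurable_GK e β s ι d K hK).comp (by fun_prop)
    rw [← lintegral_const_mul _ hmG, ← lintegral_indicator measurableSet_ball]
    refine lintegral_congr fun v => ?_
    have hn : 1 - ‖w + r • (v : H)‖ ^ 2 = r ^ 2 * (1 - ‖v‖ ^ 2) := by
      rw [norm_sect hw, hr]; ring
    have hn' : √(1 - ‖w + r • (v : H)‖ ^ 2) = r * √(1 - ‖v‖ ^ 2) := by
      rw [hn, Real.sqrt_mul (by positivity), Real.sqrt_sq hr0.le]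
    by_cases hv : ‖v‖ < 1
    · have hpos : 0 < 1 - ‖v‖ ^ 2 := by nlinarith [norm_nonneg v]
      have hwv : w + r • (v : H) ∈ ball (0 : H) 1 := by
        rw [mem_ball_zero_iff]
        have : 0 < 1 - ‖w + r • (v : H)‖ ^ 2 := by rw [hn]; positivity
        nlinarith [norm_nonneg (w + r • (v : H))]
      have h1 : ‖v‖ ^ 2 + √(1 - ‖v‖ ^ 2) ^ 2 = 1 := by rw [Real.sq_sqrt hpos.le]; ring
      rw [Set.indicator_of_mem (mem_ball_zero_iff.2 hv)]
      unfold GK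
      rw [Set.indicator_of_mem hwv, hn']
      simp only [L, h1, if_true]
      rw [hsplit, mul_pow, mul_inv, ENNReal.ofReal_mul (p := r⁻¹) (by positivity)]
      have h2 : ENNReal.ofReal r * ENNReal.ofReal r⁻¹ = 1 := by
        rw [← ENNReal.ofReal_mul hr0.le, mul_inv_cancel₀ hr0.ne', ENNReal.ofReal_one]
      generalize ENNReal.ofReal (√(1 - ‖v‖ ^ 2))⁻¹ = q1
      generalize K (Psi e β s (r * √(1 - ‖v‖ ^ 2)) (ι (w + r • (v : H)))) = q2
      generalize ENNReal.ofReal (1 + β * (r * √(1 - ‖v‖ ^ 2)))⁻¹ ^ d = q3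
      calc q1 * (ENNReal.ofReal (r * s) ^ d * q3 * q2)
          = (1 : ℝ≥0∞) * (q1 * (ENNReal.ofReal (r * s) ^ d * q3 * q2)) := by rw [one_mul]
        _ = _ := by rw [← h2]; ring
    · rw [Set.indicator_of_notMem (fun h => hv (mem_ball_zero_iff.1 h))]
      unfold GK
      rw [Set.indicator_of_notMem, mul_zero]
      rw [mem_ball_zero_iff]
      intro hlt
      have h3 : 0 < 1 - ‖w + r • (v : H)‖ ^ 2 := by nlinarith [norm_nonneg (w + r • (v : H))]
      rw [hn] at h3
      have h4 : 0 < 1 - ‖v‖ ^ 2 := (pos_iff_pos_of_mul_pos h3).1 (by positivity)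
      exact hv (by nlinarith [norm_nonneg v])
  rw [e1, e2, e3]
  ring

theorem GK_finite (hβ0 : 0 < β) (d : ℕ) (K : E → ℝ≥0∞) (M : ℝ≥0∞) (hM : M ≠ ∞) (hKM : ∀ x, K x ≤ M) :
    ∫⁻ y : H, GK e β s ι d K y ≠ ∞ := by
  obtain ⟨c, hc0, hct, hc⟩ := cone_lintegral H
  have h := hc (fun _ _ => 1) measurable_const (fun _ _ => rfl)
  have hfin : IsFiniteMeasure ((volume : Measure (WithLp 2 (H × ℝ))).restrict (ball 0 1)) :=
    ⟨by rw [Measure.restrict_apply_univ]; exact measure_ball_lt_top⟩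
  have hcf : IsFiniteMeasure (coneMeasure (WithLp 2 (H × ℝ))) := by unfold coneMeasure; infer_instance
  rw [lintegral_one] at h
  have h2 : ∫⁻ v in ball (0 : H) 1, ENNReal.ofReal (√(1 - ‖v‖ ^ 2))⁻¹ * 1 ≠ ∞ := by
    intro ht
    rw [ht, ENNReal.mul_top hc0] at h
    exact measure_ne_top _ _ h
  have h3 : ∫⁻ y : H, GK e β s ι d K y ≤ ∫⁻ v in ball (0 : H) 1, ENNReal.ofReal (√(1 - ‖v‖ ^ 2))⁻¹ * 1 * M := by
    unfold GK
    rw [lintegral_indicator measurableSet_ball]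
    refine lintegral_mono fun v => ?_
    dsimp only
    rw [mul_one]
    have h5 : ENNReal.ofReal ((1 + β * √(1 - ‖v‖ ^ 2))⁻¹) ^ d ≤ 1 := by
      refine pow_le_one₀ (by positivity) ?_
      rw [ENNReal.ofReal_le_one]
      refine inv_le_one_of_one_le₀ ?_
      have : 0 ≤ β * √(1 - ‖v‖ ^ 2) := by positivity
      linarith
    calc _ ≤ ENNReal.ofReal (√(1 - ‖v‖ ^ 2))⁻¹ * (1 * M) := by gcongr; exact hKM _
      _ = _ := by rw [one_mul]
  refine ne_top_of_le_ne_top ?_ h3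
  rw [lintegral_mul_const' _ _ hM]
  exact ENNReal.mul_ne_top h2 hM

end sect


section radon
variable {H : Type*} [NormedAddCommGroup H] [InnerProductSpace ℝ H] [FiniteDimensional ℝ H]
  [MeasurableSpace H] [BorelSpace H]

theorem exists_sub_perp (d : ℕ) (hd : d + 1 ≤ Module.finrank ℝ H) (ξ : H) :
    ∃ V : Submodule ℝ H, Module.finrank ℝ V = d ∧ ∀ v ∈ V, ⟪v, ξ⟫_ℝ = 0 := by
  have h1 := (ℝ ∙ ξ).finrank_add_finrank_orthogonal
  have h2 : Module.finrank ℝ (ℝ ∙ ξ) ≤ 1 :=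
    (finrank_span_le_card ({ξ} : Set H)).trans (by simp)
  obtain ⟨b, hb⟩ := exists_linearIndependent_of_le_finrank (R := ℝ) (M := ((ℝ ∙ ξ)ᗮ : Submodule ℝ H)) (n := d) (by omega)
  have hb' : LinearIndependent ℝ (fun i => (b i : H)) := hb.map' (Submodule.subtype _) (Submodule.ker_subtype _)
  refine ⟨Submodule.span ℝ (Set.range fun i => (b i : H)), ?_, ?_⟩
  · rw [finrank_span_eq_card hb', Fintype.card_fin]
  · intro v hv
    have hle : Submodule.span ℝ (Set.range fun i => (b i : H)) ≤ (ℝ ∙ ξ)ᗮ := by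
      rw [Submodule.span_le]
      rintro _ ⟨i, rfl⟩
      exact (b i).2
    exact Submodule.mem_orthogonal_singleton_iff_inner_left.1 (hle hv)

theorem lintegral_orth (V : Submodule ℝ H) (g : H → ℝ≥0∞) (hg : Measurable g) :
    ∫⁻ x, g x = ∫⁻ w : Vᗮ, ∫⁻ u : V, g ((w : H) + (u : H)) := by
  have h1 := (V.orthogonalDecomposition.symm.measurePreserving).lintegral_comp hg
  have h2 := (WithLp.volume_preserving_toLp V Vᗮ).lintegral_comp
    (hg.comp V.orthogonalDecomposition.symm.continuous.measurable)
  have hm : Measurable fun p : V × Vᗮ => g ((p.2 : H) + (p.1 : H)) := hg.comp (by fun_prop)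
  rw [← h1]
  refine h2.symm.trans ?_
  rw [Measure.volume_eq_prod, ← lintegral_prod_symm' _ hm]
  refine lintegral_congr fun p => ?_
  simp [add_comm]

theorem radon_inj (d : ℕ) (hd : d + 1 ≤ Module.finrank ℝ H) (G₁ G₂ : H → ℝ≥0∞)
    (h₁ : Measurable G₁) (h₂ : Measurable G₂) (hi₁ : ∫⁻ x, G₁ x ≠ ∞) (hi₂ : ∫⁻ x, G₂ x ≠ ∞)
    (h : ∀ V : Submodule ℝ H, Module.finrank ℝ V = d → ∀ w ∈ Vᗮ,
      ∫⁻ u : V, G₁ (w + (u : H)) = ∫⁻ u : V, G₂ (w + (u : H))) :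
    G₁ =ᵐ[volume] G₂ := by
  have : IsFiniteMeasure ((volume : Measure H).withDensity G₁) := isFiniteMeasure_withDensity hi₁
  have : IsFiniteMeasure ((volume : Measure H).withDensity G₂) := isFiniteMeasure_withDensity hi₂
  rw [← withDensity_eq_iff_of_sigmaFinite h₁.aemeasurable h₂.aemeasurable]
  refine Measure.ext_of_charFun (funext fun ξ => ?_)
  have hin : Measurable fun x : H => ⟪x, ξ⟫_ℝ := by fun_prop
  have key : ((volume : Measure H).withDensity G₁).map (fun x => ⟪x, ξ⟫_ℝ) =
      ((volume : Measure H).withDensity G₂).map (fun x => ⟪x, ξ⟫_ℝ) := by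
    obtain ⟨V, hV, hVξ⟩ := exists_sub_perp d hd ξ
    ext A hA
    rw [Measure.map_apply hin hA, Measure.map_apply hin hA, withDensity_apply _ (hin hA),
      withDensity_apply _ (hin hA), ← lintegral_indicator (hin hA), ← lintegral_indicator (hin hA),
      lintegral_orth V _ (h₁.indicator (hin hA)), lintegral_orth V _ (h₂.indicator (hin hA))]
    refine lintegral_congr fun w => ?_
    have hmem : ∀ u : V, ((w : H) + (u : H) ∈ (fun x => ⟪x, ξ⟫_ℝ) ⁻¹' A) ↔ ⟪(w : H), ξ⟫_ℝ ∈ A := by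
      intro u
      rw [Set.mem_preimage, inner_add_left, hVξ u u.2, add_zero]
    by_cases hw : ⟪(w : H), ξ⟫_ℝ ∈ A
    · rw [lintegral_congr fun u => Set.indicator_of_mem ((hmem u).2 hw) _,
        lintegral_congr fun u => Set.indicator_of_mem ((hmem u).2 hw) _]
      exact h V hV w w.2
    · rw [lintegral_congr fun u => Set.indicator_of_notMem (fun h => hw ((hmem u).1 h)) _,
        lintegral_congr fun u => Set.indicator_of_notMem (fun h => hw ((hmem u).1 h)) _]
  have hch : ∀ μ : Measure H, charFun μ ξ = ∫ t, Complex.exp ((t : ℂ) * Complex.I) ∂(μ.map (fun x => ⟪x, ξ⟫_ℝ)) := by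
    intro μ
    rw [integral_map hin.aemeasurable (by fun_prop), charFun_apply]
  rw [hch, hch, key]

end radon


section core
variable {H : Type*} [NormedAddCommGroup H] [InnerProductSpace ℝ H] [FiniteDimensional ℝ H]
  [MeasurableSpace H] [BorelSpace H]
  {E : Type*} [NormedAddCommGroup E] [InnerProductSpace ℝ E] [FiniteDimensional ℝ E]
  [MeasurableSpace E] [BorelSpace E]
  {e : E} {β s : ℝ} {ι : H →ₗᵢ[ℝ] E}

/-- The plane of a section. -/
noncomputable def sectPlane (e : E) (β s : ℝ) (ι : H →ₗᵢ[ℝ] E) (V : Submodule ℝ H) (w : H) : AffineSubspace ℝ E :=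
  AffineSubspace.mk' (β⁻¹ • e) (V.map ι.toLinearMap ⊔ Submodule.span ℝ {s • ι w - (s ^ 2 / β) • e})

theorem sectPlane_finrank (he : ‖e‖ = 1) (hβ0 : 0 < β) (hs0 : 0 < s)
    (hι : ∀ y, ⟪ι y, e⟫_ℝ = 0) (d : ℕ) (V : Submodule ℝ H) (hV : Module.finrank ℝ V = d) (w : H) :
    Module.finrank ℝ (sectPlane e β s ι V w).direction = d + 1 := by
  unfold sectPlane
  rw [AffineSubspace.direction_mk']
  have hq : ⟪s • ι w - (s ^ 2 / β) • e, e⟫_ℝ = -(s ^ 2 / β) := by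
    rw [inner_sub_left, inner_smul_left, inner_smul_left, hι, real_inner_self_eq_norm_sq, he]; simp
  have hpos : 0 < s ^ 2 / β := by positivity
  have hq0 : s • ι w - (s ^ 2 / β) • e ≠ 0 := by
    intro h
    rw [h, inner_zero_left] at hq
    linarith
  have hdis : V.map ι.toLinearMap ⊓ Submodule.span ℝ {s • ι w - (s ^ 2 / β) • e} = ⊥ := by
    rw [eq_bot_iff]
    rintro x ⟨hx1, hx2⟩
    obtain ⟨v, hv, rfl⟩ := hx1
    obtain ⟨c, hc⟩ := Submodule.mem_span_singleton.1 hx2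
    have h1 : ⟪c • (s • ι w - (s ^ 2 / β) • e), e⟫_ℝ = 0 := by rw [hc]; exact hι v
    rw [inner_smul_left, hq] at h1
    have h2 : c = 0 := by
      have : c * -(s ^ 2 / β) = 0 := by simpa using h1
      rcases mul_eq_zero.1 this with h | h
      · exact h
      · linarith
    rw [h2, zero_smul] at hc
    rw [← hc]
    exact Submodule.zero_mem _
  have h := Submodule.finrank_sup_add_finrank_inf_eq (V.map ι.toLinearMap) (Submodule.span ℝ {s • ι w - (s ^ 2 / β) • e})
  rw [hdis, finrank_bot, add_zero, finrank_span_singleton hq0,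
    ← (Submodule.equivMapOfInjective ι.toLinearMap ι.injective V).finrank_eq, hV] at h
  exact h

theorem sectPlane_mem (hβ0 : 0 < β) (hs : s ^ 2 = 1 - β ^ 2) (V : Submodule ℝ H) (w : H) {z : ℝ} (hz : 0 < 1 + β * z)
    (v : H) (hv : v ∈ V) : Psi e β s z (ι (w + v)) ∈ sectPlane e β s ι V w := by
  unfold sectPlane
  rw [AffineSubspace.mem_mk', vsub_eq_sub, psi_sub hβ0 hs hz]
  refine Submodule.smul_mem _ _ ?_
  rw [map_add, smul_add, add_comm, add_sub_assoc]
  refine Submodule.add_mem_sup (Submodule.smul_mem _ _ ⟨v, hv, rfl⟩) (Submodule.mem_span_singleton_self _)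

theorem sectPlane_ball (he : ‖e‖ = 1) (hβ0 : 0 < β) (hβ1 : β < 1) (hs0 : 0 < s) (hs : s ^ 2 = 1 - β ^ 2)
    (hι : ∀ y, ⟪ι y, e⟫_ℝ = 0) (V : Submodule ℝ H) {w : H} (hw : ‖w‖ < 1) :
    ∃ z ∈ sectPlane e β s ι V w, ‖z‖ < 1 := by
  refine ⟨Psi e β s 0 (ι (w + 0)), sectPlane_mem hβ0 hs V w (by simp) 0 V.zero_mem, ?_⟩
  have h1 : ‖Psi e β s 0 (ι (w + 0))‖ ^ 2 = s ^ 2 * ‖w‖ ^ 2 + β ^ 2 := by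
    rw [← real_inner_self_eq_norm_sq, psi_inner he (hι _) (hι _), real_inner_self_eq_norm_sq, ι.norm_map, add_zero]
    simp
    ring
  have h2 : ‖w‖ ^ 2 < 1 := by nlinarith [norm_nonneg w]
  have h3 : s ^ 2 * ‖w‖ ^ 2 < s ^ 2 := by nlinarith [pow_pos hs0 2]
  nlinarith [norm_nonneg (Psi e β s 0 (ι (w + 0)))]

theorem sect_image (he : ‖e‖ = 1) (hβ0 : 0 < β) (hβ1 : β < 1) (hs0 : 0 < s) (hs : s ^ 2 = 1 - β ^ 2)
    (hι : ∀ y, ⟪ι y, e⟫_ℝ = 0) (V : Submodule ℝ H) {w : H} (hw : w ∈ Vᗮ) {r : ℝ} (hr0 : 0 < r)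
    (hr : r ^ 2 = 1 - ‖w‖ ^ 2) :
    sectMap e β s ι V w r '' sphere 0 1 = sphere (0 : E) 1 ∩ (sectPlane e β s ι V w : Set E) := by
  ext x
  constructor
  · rintro ⟨p, hp, rfl⟩
    have h1 := norm_sect_sphere (ι := ι) hw hr _ _ (sphere_withLp hp)
    refine ⟨?_, ?_⟩
    · rw [mem_sphere_zero_iff_norm]
      exact psi_norm he hβ0 hβ1 hs (hι _) h1
    · exact sectPlane_mem hβ0 hs V w (psi_den hβ0 hβ1 h1) _ (V.smul_mem _ p.fst.2)
  · rintro ⟨hx1, hx2⟩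
    rw [mem_sphere_zero_iff_norm] at hx1
    have hx3 : x - β⁻¹ • e ∈ V.map ι.toLinearMap ⊔ Submodule.span ℝ {s • ι w - (s ^ 2 / β) • e} := hx2
    obtain ⟨_, ⟨v, hv, rfl⟩, q, hq, hxq⟩ := Submodule.mem_sup.1 hx3
    obtain ⟨c, rfl⟩ := Submodule.mem_span_singleton.1 hq
    have hxq' : ι v + c • (s • ι w - (s ^ 2 / β) • e) = x - β⁻¹ • e := hxq
    have hx4 : x = ι v + (c * s) • ι w + (β⁻¹ - c * (s ^ 2 / β)) • e := by
      rw [eq_add_of_sub_eq hxq'.symm, sub_smul, smul_sub, smul_smul, smul_smul]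
      abel
    have ht : ⟪x, e⟫_ℝ = β⁻¹ - c * (s ^ 2 / β) := by
      rw [hx4, inner_add_left, inner_add_left, inner_smul_left, inner_smul_left, hι, hι, real_inner_self_eq_norm_sq, he]
      simp
    obtain ⟨h1, h2, h3, h4⟩ := psi_surj he hβ0 hβ1 hs0 hs hx1
    have hden : 1 - β * ⟪x, e⟫_ℝ = c * s ^ 2 := by
      rw [ht]; field_simp; ring
    have hc : 0 < c := by
      rw [hden] at h1
      exact (pos_iff_pos_of_mul_pos h1).2 (by positivity)
    have hy : (s / (1 - β * ⟪x, e⟫_ℝ)) • (x - ⟪x, e⟫_ℝ • e) = ι (w + (c * s)⁻¹ • v) := by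
      rw [hden, ht]
      nth_rewrite 1 [hx4]
      rw [add_sub_cancel_right, map_add, map_smul, show s / (c * s ^ 2) = (c * s)⁻¹ by field_simp, smul_add, smul_smul,
        inv_mul_cancel₀ (by positivity), one_smul, add_comm]
    rw [hy] at h3 h4
    set z := (⟪x, e⟫_ℝ - β) / (1 - β * ⟪x, e⟫_ℝ) with hz
    let v' : V := ⟨(c * s)⁻¹ • v, V.smul_mem _ hv⟩
    refine ⟨WithLp.toLp 2 (r⁻¹ • v', r⁻¹ * z), ?_, ?_⟩
    · rw [mem_sphere_zero_iff_norm]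
      have h5 := WithLp.prod_norm_sq_eq_of_L2 (WithLp.toLp 2 (r⁻¹ • v', r⁻¹ * z) : WithLp 2 (V × ℝ))
      have h6 : ‖w + (1 : ℝ) • (v' : H)‖ ^ 2 = ‖w‖ ^ 2 + 1 ^ 2 * ‖v'‖ ^ 2 := norm_sect hw 1 v'
      rw [one_smul] at h6
      rw [ι.norm_map] at h3
      have h7 : ‖v'‖ ^ 2 + z ^ 2 = r ^ 2 := by
        have : (v' : H) = (c * s)⁻¹ • v := rfl
        rw [this] at h6
        rw [hr]; linarith
      have h8 : ‖(WithLp.toLp 2 (r⁻¹ • v', r⁻¹ * z) : WithLp 2 (V × ℝ))‖ ^ 2 = 1 := by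
        rw [h5]
        change ‖r⁻¹ • v'‖ ^ 2 + ‖r⁻¹ * z‖ ^ 2 = 1
        simp only [norm_smul, norm_mul, mul_pow, Real.norm_eq_abs, sq_abs]
        rw [← mul_add, h7, inv_pow, inv_mul_cancel₀ (by positivity)]
      exact (pow_eq_one_iff_of_nonneg (norm_nonneg _) two_ne_zero).1 h8
    · unfold sectMap
      rw [← h4]
      have h9 : r * (r⁻¹ * z) = z := by rw [← mul_assoc, mul_inv_cancel₀ hr0.ne', one_mul]
      have h10 : r • ((r⁻¹ • v' : V) : H) = (c * s)⁻¹ • v := by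
        rw [Submodule.coe_smul, smul_smul, mul_inv_cancel₀ hr0.ne', one_smul]
      exact congrArg₂ (fun a b => Psi e β s a (ι (w + b))) h9 h10

theorem core (he : ‖e‖ = 1) (hβ0 : 0 < β) (hβ1 : β < 1) (hs0 : 0 < s) (hs : s ^ 2 = 1 - β ^ 2)
    (hι : ∀ y, ⟪ι y, e⟫_ℝ = 0) (hsurj : ∀ x : E, ⟪x, e⟫_ℝ = 0 → ∃ y, ι y = x)
    (d : ℕ) (hd : d + 1 ≤ Module.finrank ℝ H) (g : E → ℝ) (hgc : ContinuousOn g (sphere 0 1))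
    (hgs : ∀ x ∉ sphere (0 : E) 1, g x = 0)
    (hev : ∀ (y : H) (z : ℝ), ‖y‖ ^ 2 + z ^ 2 = 1 →
        (1 + β * z)⁻¹ ^ d * g (Psi e β s z (ι y)) = (1 - β * z)⁻¹ ^ d * g (Psi e β s (-z) (ι y)))
    (hint : ∀ τ : AffineSubspace ℝ E, Module.finrank ℝ τ.direction = d + 1 → β⁻¹ • e ∈ τ → (∃ z ∈ τ, ‖z‖ < 1) →
      μH[(d : ℝ)] (sphere (0 : E) 1 ∩ (τ : Set E)) < ∞ →
      ∫ x in sphere (0 : E) 1 ∩ (τ : Set E), g x ∂μH[(d : ℝ)] = 0) :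
    ∀ x ∈ sphere (0 : E) 1, g x = 0 := by
  classical
  have hgm : Measurable g := by
    have h1 : g = (sphere (0 : E) 1).piecewise g (fun _ => 0) := by
      ext x
      by_cases hx : x ∈ sphere (0 : E) 1
      · rw [Set.piecewise_eq_of_mem _ _ _ hx]
      · rw [Set.piecewise_eq_of_notMem _ _ _ hx, hgs x hx]
    rw [h1]
    exact hgc.measurable_piecewise continuousOn_const isClosed_sphere.measurableSet
  obtain ⟨M, hM⟩ := (isCompact_sphere (0 : E) 1).exists_bound_of_continuousOn hgc
  have hM' : ∀ x, |g x| ≤ max M 0 := by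
    intro x
    by_cases hx : x ∈ sphere (0 : E) 1
    · exact (hM x hx).trans (le_max_left _ _)
    · rw [hgs x hx]; simp
  have hmain : ∀ σ : ℝ, (∀ (y : H) (z : ℝ), ‖y‖ ^ 2 + z ^ 2 = 1 →
        ENNReal.ofReal ((1 + β * z)⁻¹) ^ d * ENNReal.ofReal (σ * g (Psi e β s z (ι y))) =
        ENNReal.ofReal ((1 - β * z)⁻¹) ^ d * ENNReal.ofReal (σ * g (Psi e β s (-z) (ι y)))) := by
    intro σ y z h
    have h' : ‖ι y‖ ^ 2 + z ^ 2 = 1 := by rwa [ι.norm_map]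
    have h1 := psi_den hβ0 hβ1 h'
    have h2 := psi_den' hβ0 hβ1 h'
    rw [← ENNReal.ofReal_pow (by positivity), ← ENNReal.ofReal_pow (by positivity),
      ← ENNReal.ofReal_mul (by positivity), ← ENNReal.ofReal_mul (by positivity)]
    congr 1
    rw [mul_left_comm, hev y z h, mul_left_comm]
  have hfin : ∀ σ : ℝ, ∫⁻ y : H, GK e β s ι d (fun x => ENNReal.ofReal (σ * g x)) y ≠ ∞ := by
    intro σ
    refine GK_finite hβ0 d _ (ENNReal.ofReal (|σ| * max M 0)) ENNReal.ofReal_ne_top fun x => ?_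
    refine ENNReal.ofReal_le_ofReal ((le_abs_self _).trans ?_)
    rw [abs_mul]
    gcongr
    exact hM' x
  have hmeas : ∀ σ : ℝ, Measurable fun x => ENNReal.ofReal (σ * g x) := by intro σ; fun_prop
  have hae := radon_inj d hd (GK e β s ι d (fun x => ENNReal.ofReal (1 * g x)))
    (GK e β s ι d (fun x => ENNReal.ofReal (-1 * g x))) (measurable_GK _ _ _ _ _ _ (hmeas _))
    (measurable_GK _ _ _ _ _ _ (hmeas _)) (hfin _) (hfin _) (by
      intro V hV w hw
      by_cases hw1 : ‖w‖ < 1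
      · have hpos : 0 < 1 - ‖w‖ ^ 2 := by nlinarith [norm_nonneg w]
        have hr0 : 0 < √(1 - ‖w‖ ^ 2) := Real.sqrt_pos.2 hpos
        have hr := Real.sq_sqrt hpos.le
        obtain ⟨A, B, hA0, hAt, hB0, hBt, hAB⟩ := sect_formula he hβ0 hβ1 hs0 hs hι d V hV hw hr0 hr
        have hμ := sect_finite he hβ0 hβ1 hs0 hs hι d V hV hw hr0 hr
        have hp := hAB _ (hmeas 1) (hmain 1)
        have hm := hAB _ (hmeas (-1)) (hmain (-1))
        rw [sect_image he hβ0 hβ1 hs0 hs hι V hw hr0 hr] at hp hm hμ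
        have hz := hint (sectPlane e β s ι V w) (sectPlane_finrank he hβ0 hs0 hι d V hV w)
          (AffineSubspace.self_mem_mk' _ _) (sectPlane_ball he hβ0 hβ1 hs0 hs hι V hw1) hμ
        have hgi : IntegrableOn g (sphere (0 : E) 1 ∩ (sectPlane e β s ι V w : Set E)) μH[(d : ℝ)] := by
          refine IntegrableOn.of_bound hμ hgm.aestronglyMeasurable (max M 0) ?_
          exact Filter.Eventually.of_forall hM'
        have hL : ∀ σ : ℝ, ∫⁻ x in sphere (0 : E) 1 ∩ (sectPlane e β s ι V w : Set E), ENNReal.ofReal (σ * g x) ∂μH[(d : ℝ)] ≠ ∞ :=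
          fun σ => (hgi.const_mul σ).lintegral_lt_top.ne
        rw [integral_eq_lintegral_pos_part_sub_lintegral_neg_part hgi, sub_eq_zero,
          ENNReal.toReal_eq_toReal_iff' (by simpa using hL 1) (by simpa using hL (-1))] at hz
        have hz' : ∫⁻ x in sphere (0 : E) 1 ∩ (sectPlane e β s ι V w : Set E), ENNReal.ofReal (1 * g x) ∂μH[(d : ℝ)] =
          ∫⁻ x in sphere (0 : E) 1 ∩ (sectPlane e β s ι V w : Set E), ENNReal.ofReal (-1 * g x) ∂μH[(d : ℝ)] := by
          simpa using hz
        rw [hz', hm] at hp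
        exact ((ENNReal.mul_right_inj hB0 hBt).1 hp).symm
      · have h0 : ∀ (K : E → ℝ≥0∞) (u : V), GK e β s ι d K (w + (u : H)) = 0 := by
          intro K u
          unfold GK
          refine Set.indicator_of_notMem ?_ _
          rw [mem_ball_zero_iff]
          intro hlt
          have h6 : ‖w + (1 : ℝ) • (u : H)‖ ^ 2 = ‖w‖ ^ 2 + 1 ^ 2 * ‖u‖ ^ 2 := norm_sect hw 1 u
          rw [one_smul] at h6
          nlinarith [norm_nonneg w, norm_nonneg (w + (u : H)), sq_nonneg ‖u‖]
        simp only [h0])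
  have hS : ∀ y ∈ closedBall (0 : H) 1, ‖y‖ ^ 2 + √(1 - ‖y‖ ^ 2) ^ 2 = 1 := by
    intro y hy
    rw [mem_closedBall_zero_iff] at hy
    rw [Real.sq_sqrt (by nlinarith [norm_nonneg y])]; ring
  have hS' : ∀ y ∈ closedBall (0 : H) 1, ‖ι y‖ ^ 2 + √(1 - ‖y‖ ^ 2) ^ 2 = 1 := by
    intro y hy; rw [ι.norm_map]; exact hS y hy
  have hint0 : interior (closedBall (0 : H) 1) = ball 0 1 := interior_closedBall _ one_ne_zero
  have hEq : Set.EqOn (fun y : H => g (Psi e β s √(1 - ‖y‖ ^ 2) (ι y))) (fun _ => 0) (closedBall 0 1) := by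
    have hcont : ContinuousOn (fun y : H => g (Psi e β s √(1 - ‖y‖ ^ 2) (ι y))) (closedBall 0 1) := by
      refine hgc.comp (f := fun y : H => Psi e β s √(1 - ‖y‖ ^ 2) (ι y)) ?_ ?_
      · unfold Psi
        have hιc : Continuous ι := ι.continuous
        exact ContinuousOn.smul (ContinuousOn.inv₀ (by fun_prop) fun y hy => (psi_den hβ0 hβ1 (hS' y hy)).ne')
          (by fun_prop)
      · intro y hy
        rw [mem_sphere_zero_iff_norm]
        exact psi_norm he hβ0 hβ1 hs (hι _) (hS' y hy)
    have hball : Set.EqOn (fun y : H => g (Psi e β s √(1 - ‖y‖ ^ 2) (ι y))) (fun _ => 0) (ball 0 1) := by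
      refine Measure.eqOn_open_of_ae_eq (μ := volume) ?_ isOpen_ball (hcont.mono ball_subset_closedBall) continuousOn_const
      rw [Filter.EventuallyEq, ae_restrict_iff' measurableSet_ball]
      filter_upwards [hae] with y hy hyb
      unfold GK at hy
      rw [Set.indicator_of_mem hyb, Set.indicator_of_mem hyb] at hy
      have hyb' := mem_ball_zero_iff.1 hyb
      have hq : 0 < √(1 - ‖y‖ ^ 2) := Real.sqrt_pos.2 (by nlinarith [norm_nonneg y])
      rw [ENNReal.mul_right_inj (by rw [← pos_iff_ne_zero, ENNReal.ofReal_pos]; positivity) ENNReal.ofReal_ne_top,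
        ENNReal.mul_right_inj (pow_ne_zero _ (by rw [← pos_iff_ne_zero, ENNReal.ofReal_pos]; positivity))
          (ENNReal.pow_ne_top ENNReal.ofReal_ne_top)] at hy
      simp only [one_mul, neg_one_mul] at hy
      rcases le_total 0 (g (Psi e β s √(1 - ‖y‖ ^ 2) (ι y))) with h | h
      · rw [ENNReal.ofReal_of_nonpos (p := -_) (by linarith), ENNReal.ofReal_eq_zero] at hy
        exact le_antisymm hy h
      · rw [ENNReal.ofReal_of_nonpos h, eq_comm, ENNReal.ofReal_eq_zero] at hy
        linarith
    refine hball.of_subset_closure hcont continuousOn_const ball_subset_closedBall ?_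
    rw [closure_ball _ one_ne_zero]
  have hfull : ∀ (y : H) (z : ℝ), ‖y‖ ^ 2 + z ^ 2 = 1 → 0 ≤ z → g (Psi e β s z (ι y)) = 0 := by
    intro y z h hz
    have hy : y ∈ closedBall (0 : H) 1 := by
      rw [mem_closedBall_zero_iff]; nlinarith [norm_nonneg y, sq_nonneg z]
    have : z = √(1 - ‖y‖ ^ 2) := by
      rw [show 1 - ‖y‖ ^ 2 = z ^ 2 by linarith, Real.sqrt_sq hz]
    rw [this]
    exact hEq hy
  intro x hx
  rw [mem_sphere_zero_iff_norm] at hx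
  obtain ⟨h1, h2, h3, h4⟩ := psi_surj he hβ0 hβ1 hs0 hs hx
  obtain ⟨y, hy⟩ := hsurj _ h2
  rw [← hy] at h3 h4
  rw [← h4]
  set z := (⟪x, e⟫_ℝ - β) / (1 - β * ⟪x, e⟫_ℝ)
  have hden := psi_den hβ0 hβ1 h3
  rw [ι.norm_map] at h3
  rcases le_total 0 z with hz | hz
  · exact hfull y z h3 hz
  · have h5 := hev y z h3
    rw [hfull y (-z) (by rw [neg_sq]; exact h3) (by linarith), mul_zero] at h5
    exact (mul_eq_zero.1 h5).resolve_left (by positivity)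

end core


theorem tau_psi {n : ℕ} {e : Euc (n + 1)} {β s : ℝ} (he : ‖e‖ = 1) (hβ0 : 0 < β) (hβ1 : β < 1) (hs0 : 0 < s)
    (hs : s ^ 2 = 1 - β ^ 2) {y : Euc (n + 1)} (hy : ⟪y, e⟫_ℝ = 0) {z : ℝ} (h : ‖y‖ ^ 2 + z ^ 2 = 1) :
    tauMap (β⁻¹ • e) (Psi e β s z y) = Psi e β s (-z) y ∧
    (‖β⁻¹ • e‖ ^ 2 - 1) / ‖β⁻¹ • e - Psi e β s z y‖ ^ 2 = (1 + β * z) / (1 - β * z) := by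
  have hd := psi_den hβ0 hβ1 h
  have hd' := psi_den' hβ0 hβ1 h
  have hx := psi_norm he hβ0 hβ1 hs hy h
  have hn := psi_sub_norm he hβ0 hβ1 hs hy h
  have ha : ‖β⁻¹ • e‖ ^ 2 - 1 = (s / β) ^ 2 := by
    rw [norm_smul, he, mul_one, Real.norm_eq_abs, sq_abs, div_pow, hs]; field_simp
  have hpos : 0 < ‖Psi e β s z y - β⁻¹ • e‖ ^ 2 := by rw [hn]; positivity
  have hρ : (‖β⁻¹ • e‖ ^ 2 - 1) / ‖Psi e β s z y - β⁻¹ • e‖ ^ 2 = (1 + β * z) / (1 - β * z) := by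
    rw [ha, hn]; field_simp
  refine ⟨?_, by rw [norm_sub_rev]; exact hρ⟩
  have h2 : Psi e β s (-z) y - β⁻¹ • e = (1 - β * z)⁻¹ • (s • y - (s ^ 2 / β) • e) := by
    have := psi_sub (e := e) hβ0 hs (z := -z) (by rw [mul_neg, ← sub_eq_add_neg]; exact hd') y
    rwa [mul_neg, ← sub_eq_add_neg] at this
  have h1 := psi_sub (e := e) hβ0 hs hd y
  have h3 : Psi e β s (-z) y - β⁻¹ • e = ((1 + β * z) / (1 - β * z)) • (Psi e β s z y - β⁻¹ • e) := by
    rw [h1, h2, smul_smul]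
    congr 1
    field_simp
  rw [← sub_left_inj (a := β⁻¹ • e), h3, ← hρ]
  unfold tauMap
  set x := Psi e β s z y
  set a := β⁻¹ • e
  have h4 : ‖x - a‖ ^ 2 = 1 - 2 * ⟪x, a⟫_ℝ + ‖a‖ ^ 2 := by rw [norm_sub_sq_real, hx]; ring
  have h5 : 2 * (1 - ⟪x, a⟫_ℝ) = ‖x - a‖ ^ 2 - (‖a‖ ^ 2 - 1) := by rw [h4]; ring
  rw [h5, sub_smul (‖x - a‖ ^ 2), smul_add, smul_sub, smul_smul _ (‖x - a‖ ^ 2), inv_mul_cancel₀ hpos.ne', one_smul,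
    smul_smul, smul_smul, smul_sub, div_eq_inv_mul]
  abel

/-- Injectivity of the shifted Funk transform with exterior center
on functions satisfying `f = W_a f` : if `f₁, f₂` are continuous on `S^n`, satisfy
`fᵢ = W_a fᵢ` on `S^n`, and have equal integrals over all sections of `S^n` by
`k`-planes through `a` meeting the open unit ball, then `f₁ = f₂` on `S^n`. -/
theorem statement8 (n k : ℕ) (hn : 2 ≤ n) (hk : 1 < k) (hkn : k ≤ n)
    (a : Euc (n + 1)) (ha : 1 < ‖a‖)
    (f₁ f₂ : Euc (n + 1) → ℝ)
    (hf₁ : ContinuousOn f₁ (sphere (0 : Euc (n + 1)) 1))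
    (hf₂ : ContinuousOn f₂ (sphere (0 : Euc (n + 1)) 1))
    (hW₁ : ∀ x ∈ sphere (0 : Euc (n + 1)) 1, f₁ x = Wop k a f₁ x)
    (hW₂ : ∀ x ∈ sphere (0 : Euc (n + 1)) 1, f₂ x = Wop k a f₂ x)
    (heq : ∀ τ : AffineSubspace ℝ (Euc (n + 1)),
        Module.finrank ℝ τ.direction = k → a ∈ τ →
        (∃ z ∈ τ, ‖z‖ < 1) →
        (∫ x in sphere (0 : Euc (n + 1)) 1 ∩ (τ : Set (Euc (n + 1))),
          f₁ x ∂μH[(k : ℝ) - 1]) =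
        ∫ x in sphere (0 : Euc (n + 1)) 1 ∩ (τ : Set (Euc (n + 1))),
          f₂ x ∂μH[(k : ℝ) - 1]) :
    ∀ x ∈ sphere (0 : Euc (n + 1)) 1, f₁ x = f₂ x := by
  obtain ⟨d, rfl⟩ : ∃ d, k = d + 1 := ⟨k - 1, by omega⟩
  have hα : 0 < ‖a‖ := by linarith
  set β := ‖a‖⁻¹ with hβ
  set e := β • a with he'
  have hβ0 : 0 < β := by positivity
  have hβ1 : β < 1 := inv_lt_one_of_one_lt₀ ha
  have he : ‖e‖ = 1 := by
    rw [he', norm_smul, Real.norm_of_nonneg hβ0.le, hβ, inv_mul_cancel₀ hα.ne']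
  have hae : a = β⁻¹ • e := by rw [he', smul_smul, inv_mul_cancel₀ hβ0.ne', one_smul]
  have hsp : 0 < 1 - β ^ 2 := by nlinarith
  set s := √(1 - β ^ 2) with hs'
  have hs0 : 0 < s := Real.sqrt_pos.2 hsp
  have hs : s ^ 2 = 1 - β ^ 2 := Real.sq_sqrt hsp.le
  clear_value e β s
  subst hae
  let H : Submodule ℝ (Euc (n + 1)) := (ℝ ∙ e)ᗮ
  let ι : H →ₗᵢ[ℝ] Euc (n + 1) := H.subtypeₗᵢ
  have hι : ∀ y : H, ⟪ι y, e⟫_ℝ = 0 := fun y => Submodule.mem_orthogonal_singleton_iff_inner_left.1 y.2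
  have hsurj : ∀ x : Euc (n + 1), ⟪x, e⟫_ℝ = 0 → ∃ y : H, ι y = x := fun x hx =>
    ⟨⟨x, Submodule.mem_orthogonal_singleton_iff_inner_left.2 hx⟩, rfl⟩
  have hdim : d + 1 ≤ Module.finrank ℝ H := by
    have h1 := (ℝ ∙ e).finrank_add_finrank_orthogonal
    rw [finrank_euclideanSpace_fin, finrank_span_singleton (by intro h; rw [h, norm_zero] at he; norm_num at he)] at h1
    have : Module.finrank ℝ H = n := by simp only [H]; omega
    omega
  let g : Euc (n + 1) → ℝ := (sphere (0 : Euc (n + 1)) 1).indicator (fun x => f₁ x - f₂ x)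
  have hg : ∀ x ∈ sphere (0 : Euc (n + 1)) 1, g x = f₁ x - f₂ x := fun x hx => Set.indicator_of_mem hx _
  have hgc : ContinuousOn g (sphere 0 1) := (hf₁.sub hf₂).congr hg
  have hmain := core (ι := ι) he hβ0 hβ1 hs0 hs hι hsurj d hdim g hgc
    (fun x hx => Set.indicator_of_notMem hx _) ?_ ?_
  · intro x hx
    have := hmain x hx
    rw [hg x hx] at this
    linarith
  · intro y z h
    have h' : ‖ι y‖ ^ 2 + z ^ 2 = 1 := by rwa [ι.norm_map]
    have hd := psi_den hβ0 hβ1 h'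
    have hd' := psi_den' hβ0 hβ1 h'
    have hx : Psi e β s z (ι y) ∈ sphere (0 : Euc (n + 1)) 1 := by
      rw [mem_sphere_zero_iff_norm]; exact psi_norm he hβ0 hβ1 hs (hι y) h'
    have hx' : Psi e β s (-z) (ι y) ∈ sphere (0 : Euc (n + 1)) 1 := by
      rw [mem_sphere_zero_iff_norm]; exact psi_norm he hβ0 hβ1 hs (hι y) (by rw [neg_sq]; exact h')
    obtain ⟨ht, hρ⟩ := tau_psi he hβ0 hβ1 hs0 hs (hι y) h'
    have e1 := hW₁ _ hx
    have e2 := hW₂ _ hx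
    unfold Wop at e1 e2
    rw [ht, hρ, Nat.add_sub_cancel] at e1 e2
    rw [hg _ hx, hg _ hx', e1, e2, ← mul_sub, ← mul_assoc, ← mul_pow]
    congr 2
    field_simp
  · intro τ h1 h2 h3 h4
    have h5 := heq τ h1 h2 h3
    rw [Nat.cast_add, Nat.cast_one, add_sub_cancel_right] at h5
    have hclosed : IsClosed (sphere (0 : Euc (n + 1)) 1 ∩ (τ : Set (Euc (n + 1)))) :=
      isClosed_sphere.inter (AffineSubspace.closed_of_finiteDimensional τ)
    have hm : MeasurableSet (sphere (0 : Euc (n + 1)) 1 ∩ (τ : Set (Euc (n + 1)))) := hclosed.measurableSet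
    have hI : ∀ f : Euc (n + 1) → ℝ, ContinuousOn f (sphere (0 : Euc (n + 1)) 1) →
        IntegrableOn f (sphere (0 : Euc (n + 1)) 1 ∩ (τ : Set (Euc (n + 1)))) μH[(d : ℝ)] := by
      intro f hf
      obtain ⟨M, hM⟩ := (isCompact_sphere (0 : Euc (n + 1)) 1).exists_bound_of_continuousOn hf
      refine IntegrableOn.of_bound h4 ((hf.mono Set.inter_subset_left).aestronglyMeasurable hm) M ?_
      exact (ae_restrict_iff' hm).2 (Filter.Eventually.of_forall fun x hx => hM x hx.1)
    rw [setIntegral_congr_fun hm (fun x hx => hg x hx.1), integral_sub (hI f₁ hf₁) (hI f₂ hf₂), h5, sub_self]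
end

section
/- Let n ≥ 2, 1 < k ≤ n, and let a ∈ ℝ^{n+1} with |a| > 1. For a continuous function f on S^n the following are equivalent: (i) ∫_{S^n ∩ τ} f dH^{k−1} = 0 for every k-dimensional affine plane τ passing through a and meeting the open unit ball B^{n+1}; (ii) f(x) = −(W_a f)(x) for every x ∈ S^n. -/
open MeasureTheory Metric Matrix
open scoped InnerProductSpace ENNReal

set_option linter.unusedSectionVars false

theorem conf_piece_le {X Y : Type*} [MetricSpace X] [MeasurableSpace X] [BorelSpace X]
    [MetricSpace Y] [MeasurableSpace Y] [BorelSpace Y] (m : ℕ) (φ : X → Y) (C : ℝ) (hC : 0 ≤ C)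
    (s : Set X) (hd : ∀ x ∈ s, ∀ y ∈ s, dist (φ x) (φ y) ≤ C * dist x y) :
    μH[(m : ℝ)] (φ '' s) ≤ ENNReal.ofReal (C ^ m) * μH[(m : ℝ)] s := by
  have h : LipschitzOnWith C.toNNReal φ s := by
    refine LipschitzOnWith.of_dist_le_mul fun x hx y hy => ?_
    rw [Real.coe_toNNReal _ hC]
    exact hd x hx y hy
  have := h.hausdorffMeasure_image_le (d := (m : ℝ)) (by positivity)
  rwa [ENNReal.rpow_natCast, ← ENNReal.ofReal, ← ENNReal.ofReal_pow hC] at this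

theorem conf_piece_ge {X Y : Type*} [MetricSpace X] [MeasurableSpace X] [BorelSpace X]
    [MetricSpace Y] [MeasurableSpace Y] [BorelSpace Y] (m : ℕ) (φ : X → Y) (C : ℝ) (hC : 0 ≤ C)
    (s : Set X) (hd : ∀ x ∈ s, ∀ y ∈ s, dist x y ≤ C * dist (φ x) (φ y)) :
    μH[(m : ℝ)] s ≤ ENNReal.ofReal (C ^ m) * μH[(m : ℝ)] (φ '' s) := by
  rcases s.eq_empty_or_nonempty with rfl | ⟨x0, hx0⟩
  · simp
  have : Nonempty X := ⟨x0⟩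
  have hinj : Set.InjOn φ s := by
    intro x hx y hy hxy
    have := hd x hx y hy
    rw [hxy, dist_self, mul_zero] at this
    exact dist_le_zero.1 this
  have h2 : (Function.invFunOn φ s) '' (φ '' s) = s := hinj.invFunOn_image subset_rfl
  have := conf_piece_le m (Function.invFunOn φ s) C hC (φ '' s) (by
    rintro _ ⟨x, hx, rfl⟩ _ ⟨y, hy, rfl⟩
    rw [hinj.leftInvOn_invFunOn hx, hinj.leftInvOn_invFunOn hy]
    exact hd x hx y hy)
  rwa [h2] at this

theorem conf_lintegral {X Y : Type*} [MetricSpace X] [CompleteSpace X] [SecondCountableTopology X]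
    [MeasurableSpace X] [BorelSpace X]
    [MetricSpace Y] [MeasurableSpace Y] [BorelSpace Y] (m : ℕ) (φ : X → Y) (κ : X → ℝ)
    (s : Set X) (hs : MeasurableSet s) (hκ : Measurable κ) (hpos : ∀ x ∈ s, 0 < κ x)
    (hd : ∀ x ∈ s, ∀ y ∈ s, dist (φ x) (φ y) ^ 2 = κ x * κ y * dist x y ^ 2) :
    μH[(m : ℝ)] (φ '' s) = ∫⁻ x in s, ENNReal.ofReal (κ x ^ m) ∂μH[(m : ℝ)] := by
  have hinj : Set.InjOn φ s := by
    intro x hx y hy hxy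
    have := hd x hx y hy
    rw [hxy, dist_self] at this
    have h1 := hpos x hx
    have h2 := hpos y hy
    have h3 : dist x y ^ 2 = 0 := by
      have : κ x * κ y * dist x y ^ 2 = 0 := by rw [← this]; norm_num
      rcases mul_eq_zero.1 this with h | h
      · exact absurd h (by positivity)
      · exact h
    exact dist_eq_zero.1 (by simpa using h3)
  have key : ∀ q : ℝ, 1 < q →
      μH[(m : ℝ)] (φ '' s) ≤ ENNReal.ofReal (q ^ m) *
        ∫⁻ x in s, ENNReal.ofReal (κ x ^ m) ∂μH[(m : ℝ)] ∧
      ∫⁻ x in s, ENNReal.ofReal (κ x ^ m) ∂μH[(m : ℝ)] ≤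
        ENNReal.ofReal (q ^ m) * μH[(m : ℝ)] (φ '' s) := by
    intro q hq
    have hq0 : 0 < q := by linarith
    let S : ℤ → Set X := fun i => s ∩ κ ⁻¹' Set.Ico (q ^ i) (q ^ (i + 1))
    have hSm : ∀ i, MeasurableSet (S i) := fun i => hs.inter (hκ measurableSet_Ico)
    have hSs : ∀ i, S i ⊆ s := fun i => Set.inter_subset_left
    have hSU : s = ⋃ i, S i := by
      ext x
      simp only [Set.mem_iUnion]
      constructor
      · intro hx
        obtain ⟨i, hi⟩ := exists_mem_Ico_zpow (hpos x hx) hq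
        exact ⟨i, hx, hi⟩
      · rintro ⟨i, hi⟩
        exact hi.1
    have hSd : Pairwise (Function.onFun Disjoint S) := by
      intro i j hij
      refine Set.disjoint_left.2 fun x hxi hxj => hij ?_
      have h1 := hxi.2
      have h2 := hxj.2
      simp only [Set.mem_preimage, Set.mem_Ico] at h1 h2
      have a1 : i < j + 1 := (zpow_lt_zpow_iff_right₀ hq).1 (h1.1.trans_lt h2.2)
      have a2 : j < i + 1 := (zpow_lt_zpow_iff_right₀ hq).1 (h2.1.trans_lt h1.2)
      omega
    have hup : ∀ i, ∀ x ∈ S i, ∀ y ∈ S i, dist (φ x) (φ y) ≤ q ^ (i + 1) * dist x y := by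
      intro i x hx y hy
      have hz : 0 < q ^ (i+1) := by positivity
      refine le_of_sq_le_sq ?_ (by positivity)
      rw [hd x hx.1 y hy.1, mul_pow, sq (q ^ (i+1))]
      have := hx.2.2; have := hy.2.2
      have := hpos x hx.1; have := hpos y hy.1
      gcongr
    have hlo : ∀ i, ∀ x ∈ S i, ∀ y ∈ S i, dist x y ≤ (q ^ i)⁻¹ * dist (φ x) (φ y) := by
      intro i x hx y hy
      have hz : 0 < q ^ i := by positivity
      rw [inv_mul_eq_div, le_div_iff₀ hz, mul_comm]
      refine le_of_sq_le_sq ?_ (by positivity)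
      rw [hd x hx.1 y hy.1, mul_pow, sq (q ^ i)]
      have := hx.2.1; have := hy.2.1
      have := hpos x hx.1; have := hpos y hy.1
      gcongr
    have himm : ∀ i, MeasurableSet (φ '' S i) := by
      intro i
      refine (hSm i).image_of_continuousOn_injOn ?_ (hinj.mono (hSs i))
      have h : LipschitzOnWith (q ^ (i+1)).toNNReal φ (S i) := by
        refine LipschitzOnWith.of_dist_le_mul fun x hx y hy => ?_
        rw [Real.coe_toNNReal _ (by positivity)]
        exact hup i x hx y hy
      exact h.continuousOn
    have himd : Pairwise (Function.onFun Disjoint fun i => φ '' S i) := by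
      intro i j hij
      exact (hinj.image (f := φ) |> fun _ => (Set.disjoint_image_image (by
        intro x hx y hy hxy
        have := hinj hx.1 hy.1 hxy
        subst this
        exact Set.disjoint_left.1 (hSd hij) hx hy)))
    have hA : μH[(m : ℝ)] (φ '' s) = ∑' i, μH[(m : ℝ)] (φ '' S i) := by
      conv_lhs => rw [hSU, Set.image_iUnion]
      exact measure_iUnion himd himm
    have hB : ∫⁻ x in s, ENNReal.ofReal (κ x ^ m) ∂μH[(m : ℝ)] =
        ∑' i, ∫⁻ x in S i, ENNReal.ofReal (κ x ^ m) ∂μH[(m : ℝ)] := by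
      conv_lhs => rw [hSU]
      exact lintegral_iUnion hSm hSd _
    have hlow : ∀ i, ENNReal.ofReal ((q ^ i) ^ m) * μH[(m : ℝ)] (S i) ≤
        ∫⁻ x in S i, ENNReal.ofReal (κ x ^ m) ∂μH[(m : ℝ)] := by
      intro i
      rw [← setLIntegral_const]
      refine setLIntegral_mono' (hSm i) fun x hx => ENNReal.ofReal_le_ofReal ?_
      have : 0 < q ^ i := by positivity
      exact pow_le_pow_left₀ this.le hx.2.1 _
    have hhigh : ∀ i, ∫⁻ x in S i, ENNReal.ofReal (κ x ^ m) ∂μH[(m : ℝ)] ≤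
        ENNReal.ofReal ((q ^ (i+1)) ^ m) * μH[(m : ℝ)] (S i) := by
      intro i
      rw [← setLIntegral_const]
      refine setLIntegral_mono' (hSm i) fun x hx => ENNReal.ofReal_le_ofReal ?_
      exact pow_le_pow_left₀ (hpos x hx.1).le hx.2.2.le _
    have hqq : ∀ i : ℤ, ENNReal.ofReal ((q ^ (i+1)) ^ m) =
        ENNReal.ofReal (q ^ m) * ENNReal.ofReal ((q ^ i) ^ m) := by
      intro i
      rw [← ENNReal.ofReal_mul (by positivity), zpow_add_one₀ hq0.ne', mul_pow, mul_comm]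
    have hqi : ∀ i : ℤ, ENNReal.ofReal ((q ^ i) ^ m) * ENNReal.ofReal (((q ^ i)⁻¹) ^ m) = 1 := by
      intro i
      have : 0 < q ^ i := by positivity
      rw [← ENNReal.ofReal_mul (by positivity), ← mul_pow, mul_inv_cancel₀ this.ne', one_pow,
        ENNReal.ofReal_one]
    constructor
    · rw [hA, hB, ← ENNReal.tsum_mul_left]
      refine ENNReal.tsum_le_tsum fun i => ?_
      refine (conf_piece_le m φ _ (by positivity) (S i) (hup i)).trans ?_
      rw [hqq, mul_assoc]
      gcongr
      exact hlow i
    · rw [hA, hB, ← ENNReal.tsum_mul_left]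
      refine ENNReal.tsum_le_tsum fun i => (hhigh i).trans ?_
      have := conf_piece_ge m φ _ (by positivity) (S i) (hlo i)
      rw [hqq, mul_assoc]
      gcongr
      calc _ ≤ ENNReal.ofReal ((q ^ i) ^ m) *
          (ENNReal.ofReal (((q ^ i)⁻¹) ^ m) * μH[(m : ℝ)] (φ '' S i)) := by gcongr
        _ = _ := by rw [← mul_assoc, hqi, one_mul]
  have hlim : ∀ B : ℝ≥0∞, Filter.Tendsto (fun q : ℝ => ENNReal.ofReal (q ^ m) * B)
      (nhdsWithin 1 (Set.Ioi 1)) (nhds B) := by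
    intro B
    have h1 : Filter.Tendsto (fun q : ℝ => ENNReal.ofReal (q ^ m)) (nhdsWithin 1 (Set.Ioi 1))
        (nhds 1) := by
      have : Continuous (fun q : ℝ => ENNReal.ofReal (q ^ m)) :=
        ENNReal.continuous_ofReal.comp (continuous_pow m)
      have h := this.tendsto 1
      simp only [one_pow, ENNReal.ofReal_one] at h
      exact h.mono_left nhdsWithin_le_nhds
    have := ENNReal.Tendsto.mul_const (b := B) h1 (Or.inl one_ne_zero)
    simpa using this
  refine le_antisymm ?_ ?_
  · exact ge_of_tendsto (hlim _) (by
      filter_upwards [self_mem_nhdsWithin] with q hq using (key q hq).1)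
  · exact ge_of_tendsto (hlim _) (by
      filter_upwards [self_mem_nhdsWithin] with q hq using (key q hq).2)

/-- conformal change of variables for Hausdorff measures -/
theorem conf_integral {X Y : Type*} [MetricSpace X] [CompleteSpace X] [SecondCountableTopology X]
    [MeasurableSpace X] [BorelSpace X]
    [MetricSpace Y] [MeasurableSpace Y] [BorelSpace Y] (m : ℕ) (φ : X → Y) (κ : X → ℝ)
    (s : Set X) (hs : MeasurableSet s) (hκ : Measurable κ) (hpos : ∀ x ∈ s, 0 < κ x)
    (hd : ∀ x ∈ s, ∀ y ∈ s, dist (φ x) (φ y) ^ 2 = κ x * κ y * dist x y ^ 2)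
    (hφ : Measurable φ) (him : MeasurableSet (φ '' s)) (f : Y → ℝ)
    (hf : ContinuousOn f (φ '' s)) :
    ∫ y in φ '' s, f y ∂μH[(m : ℝ)] = ∫ x in s, κ x ^ m * f (φ x) ∂μH[(m : ℝ)] := by
  have hmeas : Measurable fun x => ENNReal.ofReal (κ x ^ m) := (hκ.pow_const m).ennreal_ofReal
  have hmap : μH[(m : ℝ)].restrict (φ '' s) =
      ((μH[(m : ℝ)].restrict s).withDensity (fun x => ENNReal.ofReal (κ x ^ m))).map φ := by
    ext B hB
    rw [Measure.map_apply hφ hB, withDensity_apply _ (hφ hB), Measure.restrict_apply hB,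
      Measure.restrict_restrict (hφ hB), ← Set.image_preimage_inter, 
      conf_lintegral m φ κ _ ((hφ hB).inter hs) hκ (fun x hx => hpos x hx.2)
        (fun x hx y hy => hd x hx.2 y hy.2)]
  have hfs : AEStronglyMeasurable f (μH[(m : ℝ)].restrict (φ '' s)) := by
    have : AEMeasurable f (μH[(m : ℝ)].restrict (φ '' s)) := hf.aemeasurable him
    exact this.aestronglyMeasurable
  rw [hmap] at hfs ⊢
  rw [integral_map hφ.aemeasurable hfs, integral_withDensity_eq_integral_toReal_smul hmeas 
    (by simp)]
  refine setIntegral_congr_fun hs fun x hx => ?_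
  simp only [smul_eq_mul]
  rw [ENNReal.toReal_ofReal (pow_nonneg (hpos x hx).le m)]

section SphereMeasure

variable {E : Type*} [NormedAddCommGroup E] [InnerProductSpace ℝ E] [FiniteDimensional ℝ E]
  [MeasurableSpace E] [BorelSpace E]

theorem finrank_orth_succ (m : ℕ) (hm : Module.finrank ℝ E = m + 1) (u : E) (hu : u ≠ 0) :
    Module.finrank ℝ (ℝ ∙ u)ᗮ = m := by
  have : Fact (Module.finrank ℝ E = m + 1) := ⟨hm⟩
  exact Submodule.finrank_orthogonal_span_singleton hu

theorem exists_isometry_map (x y : E) (h : ‖x‖ = ‖y‖) : ∃ A : E ≃ₗᵢ[ℝ] E, A x = y ∧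
    ∀ z, ⟪z, x⟫_ℝ = 0 → ⟪z, y⟫_ℝ = 0 → A z = z := by
  refine ⟨(ℝ ∙ (x - y))ᗮ.reflection, Submodule.reflection_sub h, ?_⟩
  intro z hz1 hz2
  rw [Submodule.reflection_eq_self_iff, Submodule.mem_orthogonal_singleton_iff_inner_left,
    inner_sub_right, hz1, hz2, sub_zero]

theorem hausdorff_sphere_lt_top_s9 (m : ℕ) (hm : Module.finrank ℝ E = m + 1) :
    μH[(m : ℝ)] (sphere (0 : E) 1) < ∞ := by
  refine (isCompact_sphere (0 : E) 1).measure_lt_top_of_nhdsWithin fun x0 hx0 => ?_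
  have hx0n : ‖x0‖ = 1 := by simpa using hx0
  have hx00 : x0 ≠ 0 := by rintro rfl; simp at hx0n
  refine ⟨{x | 1 / 2 < ⟪x, x0⟫_ℝ} ∩ sphere 0 1, ?_, ?_⟩
  · refine Filter.inter_mem (mem_nhdsWithin_of_mem_nhds ?_) self_mem_nhdsWithin
    refine IsOpen.mem_nhds (isOpen_lt continuous_const (by fun_prop)) ?_
    simp only [Set.mem_ofPred_eq, real_inner_self_eq_norm_sq, hx0n]
    norm_num
  · set K := (ℝ ∙ x0)ᗮ with hK
    have hKm : Module.finrank ℝ K = m := finrank_orth_succ m hm x0 hx00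
    let Q : E → K := fun x => K.orthogonalProjectionOnto x
    have hdec : ∀ z : E, ((Q z : K) : E) = z - ⟪z, x0⟫_ℝ • x0 := by
      intro z
      have h1 : ((Q z : K) : E) = K.starProjection z := rfl
      have h2 : K.starProjection z = z - (ℝ ∙ x0).starProjection z :=
        Submodule.starProjection_orthogonal_val z
      rw [h1, h2, Submodule.starProjection_unit_singleton ℝ hx0n z, real_inner_comm]
    have hnorm : ∀ z : E, ‖Q z‖ ^ 2 = ‖z‖ ^ 2 - ⟪z, x0⟫_ℝ ^ 2 := by
      intro z
      rw [show ‖Q z‖ = ‖((Q z : K) : E)‖ from rfl, hdec, norm_sub_sq_real, norm_smul, hx0n, inner_smul_right,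
        mul_one, Real.norm_eq_abs, sq_abs]
      ring
    have hQs : ∀ x y, Q x - Q y = Q (x - y) := fun x y => (map_sub _ x y).symm
    refine (conf_piece_ge m Q 3 (by norm_num) _ ?_).trans_lt ?_
    · rintro x ⟨hx, hxs⟩ y ⟨hy, hys⟩
      simp only [Set.mem_ofPred_eq] at hx hy
      have hxs : ‖x‖ = 1 := by simpa using hxs
      have hys : ‖y‖ = 1 := by simpa using hys
      rw [dist_eq_norm, dist_eq_norm, hQs]
      have h1 := hnorm (x - y)
      rw [inner_sub_left] at h1
      have h2 := hnorm x
      have h3 := hnorm y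
      rw [hxs] at h2
      rw [hys] at h3
      have h4 : |‖Q x‖ - ‖Q y‖| ≤ ‖Q (x - y)‖ := by rw [← hQs]; exact abs_norm_sub_norm_le _ _
      have h5 : (‖Q x‖ - ‖Q y‖) ^ 2 ≤ ‖Q (x - y)‖ ^ 2 := by
        rw [← sq_abs]; gcongr
      generalize ⟪x, x0⟫_ℝ = s at *
      generalize ⟪y, x0⟫_ℝ = t at *
      generalize ‖Q x‖ = p at *
      generalize ‖Q y‖ = r at *
      refine le_of_sq_le_sq ?_ (by positivity)
      have h6 : (s - t) ^ 2 * (s + t) ^ 2 = (p - r) ^ 2 * (p + r) ^ 2 := by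
        have : s ^ 2 - t ^ 2 = r ^ 2 - p ^ 2 := by linarith
        have : (s ^ 2 - t ^ 2) ^ 2 = (r ^ 2 - p ^ 2) ^ 2 := by rw [this]
        nlinarith
      have h7 : (p + r) ^ 2 ≤ 4 := by nlinarith [sq_nonneg (p - r)]
      have h8 : 1 ≤ (s + t) ^ 2 := by nlinarith
      have h9 : (s - t) ^ 2 ≤ 4 * ‖Q (x - y)‖ ^ 2 := by
        nlinarith [mul_le_mul_of_nonneg_left h8 (sq_nonneg (s - t)),
          mul_le_mul_of_nonneg_left h7 (sq_nonneg (p - r))]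
      nlinarith [sq_nonneg ‖Q (x - y)‖]
    · refine ENNReal.mul_lt_top ENNReal.ofReal_lt_top ?_
      have hsub : Q '' ({x | 1 / 2 < ⟪x, x0⟫_ℝ} ∩ sphere 0 1) ⊆ closedBall 0 1 := by
        rintro _ ⟨x, ⟨-, hx⟩, rfl⟩
        have hx : ‖x‖ = 1 := by simpa using hx
        rw [mem_closedBall_zero_iff]
        have := hnorm x
        rw [hx] at this
        nlinarith [norm_nonneg (Q x), sq_nonneg ⟪x, x0⟫_ℝ]
      refine (measure_mono hsub).trans_lt ?_
      have : (μH[(m : ℝ)] : Measure K) = μH[Module.finrank ℝ K] := by rw [hKm]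
      rw [this]
      exact measure_closedBall_lt_top

theorem hausdorff_sphere_pos (m : ℕ) (hm : Module.finrank ℝ E = m + 1) :
    0 < μH[(m : ℝ)] (sphere (0 : E) 1) := by
  have : Nontrivial E := Module.nontrivial_of_finrank_pos (R := ℝ) (by omega)
  obtain ⟨x0, hx0n⟩ := exists_norm_eq E (zero_le_one)
  have hx00 : x0 ≠ 0 := by rintro rfl; simp at hx0n
  set K := (ℝ ∙ x0)ᗮ with hK
  have hKm : Module.finrank ℝ K = m := finrank_orth_succ m hm x0 hx00
  let Q : E → K := fun x => K.orthogonalProjectionOnto x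
  have hle := conf_piece_le m Q 1 zero_le_one (sphere (0 : E) 1) (by
    intro x _ y _
    rw [one_mul, dist_eq_norm, dist_eq_norm, ← map_sub]
    exact K.norm_orthogonalProjectionOnto_apply_le _)
  rw [one_pow, ENNReal.ofReal_one, one_mul] at hle
  refine lt_of_lt_of_le ?_ hle
  have hsub : closedBall 0 1 ⊆ Q '' sphere (0 : E) 1 := by
    intro v hv
    rw [mem_closedBall_zero_iff] at hv
    have hv1 : ‖v‖ ^ 2 ≤ 1 := by nlinarith [norm_nonneg v]
    have horth : ⟪(v : E), x0⟫_ℝ = 0 :=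
      Submodule.mem_orthogonal_singleton_iff_inner_left.1 v.2
    refine ⟨(v : E) + Real.sqrt (1 - ‖v‖ ^ 2) • x0, ?_, ?_⟩
    · rw [mem_sphere_zero_iff_norm, ← pow_left_inj₀ (norm_nonneg _) zero_le_one two_ne_zero,
        norm_add_sq_real, inner_smul_right, horth, norm_smul, hx0n, Real.norm_eq_abs, mul_one,
        sq_abs, Real.sq_sqrt (by linarith), Submodule.coe_norm]
      ring
    · simp only [Q, map_add, map_smul]
      rw [Submodule.orthogonalProjectionOnto_mem_subspace_eq_self,
        Submodule.orthogonalProjectionOnto_orthogonalComplement_singleton_eq_zero, smul_zero,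
        add_zero]
  refine lt_of_lt_of_le ?_ (measure_mono hsub)
  have : (μH[(m : ℝ)] : Measure K) = μH[Module.finrank ℝ K] := by rw [hKm]
  rw [this]
  exact measure_closedBall_pos _ _ one_pos

theorem hausdorff_equator (m : ℕ) (hm : Module.finrank ℝ E = m + 2) (u : E) (hu : u ≠ 0) :
    0 < μH[(m : ℝ)] (sphere (0 : E) 1 ∩ {v | ⟪v, u⟫_ℝ = 0}) ∧
      μH[(m : ℝ)] (sphere (0 : E) 1 ∩ {v | ⟪v, u⟫_ℝ = 0}) < ∞ := by
  have hKm : Module.finrank ℝ (ℝ ∙ u)ᗮ = m + 1 := finrank_orth_succ (m + 1) hm u hu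
  have him : sphere (0 : E) 1 ∩ {v | ⟪v, u⟫_ℝ = 0} =
      (fun v : (ℝ ∙ u)ᗮ => (v : E)) '' sphere 0 1 := by
    ext v
    simp only [Set.mem_inter_iff, mem_sphere_zero_iff_norm, Set.mem_ofPred_eq, Set.mem_image]
    constructor
    · rintro ⟨h1, h2⟩
      exact ⟨⟨v, Submodule.mem_orthogonal_singleton_iff_inner_left.2 h2⟩, h1, rfl⟩
    · rintro ⟨w, hw, rfl⟩
      exact ⟨hw, Submodule.mem_orthogonal_singleton_iff_inner_left.1 w.2⟩
  rw [him, Isometry.hausdorffMeasure_image isometry_subtype_coe (Or.inl (by positivity))]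
  exact ⟨hausdorff_sphere_pos m hKm, hausdorff_sphere_lt_top_s9 m hKm⟩

theorem hausdorff_restrict_map (d : ℝ) (s : Set E) (A : E ≃ₗᵢ[ℝ] E)
    (hA : ∀ x, A x ∈ s ↔ x ∈ s) :
    ((μH[d] : Measure E).restrict s).map A = μH[d].restrict s := by
  have h := (A.toIsometryEquiv.measurePreserving_hausdorffMeasure d)
  have h2 : A ⁻¹' s = s := by ext x; exact hA x
  have h3 : Measurable A := A.continuous.measurable
  ext B hB
  rw [Measure.map_apply h3 hB, Measure.restrict_apply hB, Measure.restrict_apply (h3 hB)]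
  conv_lhs => rw [← h2, ← Set.preimage_inter]
  exact A.toIsometryEquiv.hausdorffMeasure_preimage d _

theorem hausdorff_sphere_open_pos (m : ℕ) (hm : Module.finrank ℝ E = m + 1) (U : Set E)
    (hU : IsOpen U) (hne : (sphere (0 : E) 1 ∩ U).Nonempty) :
    μH[(m : ℝ)] (sphere (0 : E) 1 ∩ U) ≠ 0 := by
  intro h0
  obtain ⟨x0, hx0, hx0U⟩ := hne
  refine (hausdorff_sphere_pos m hm).ne' ?_
  refine (isCompact_sphere (0 : E) 1).measure_zero_of_nhdsWithin fun x hx => ?_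
  obtain ⟨A, hA, -⟩ := exists_isometry_map x x0 (by
    rw [mem_sphere_zero_iff_norm] at hx hx0; rw [hx, hx0])
  refine ⟨A ⁻¹' (sphere (0 : E) 1 ∩ U), ?_, ?_⟩
  · rw [Set.preimage_inter]
    refine Filter.inter_mem ?_ (mem_nhdsWithin_of_mem_nhds ?_)
    · filter_upwards [self_mem_nhdsWithin] with z hz
      simpa using hz
    · exact (hU.preimage A.continuous).mem_nhds (by simpa [hA] using hx0U)
  · rw [← h0]
    exact A.toIsometryEquiv.hausdorffMeasure_preimage _ _

end SphereMeasure

section Disintegration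

variable {E : Type*} [NormedAddCommGroup E] [InnerProductSpace ℝ E] [FiniteDimensional ℝ E]
  [MeasurableSpace E] [BorelSpace E]

/-- surface measure on the unit sphere -/
noncomputable def sphMeas (E : Type*) [NormedAddCommGroup E] [InnerProductSpace ℝ E]
    [MeasurableSpace E] [BorelSpace E] (d : ℕ) : Measure E :=
  (μH[(d : ℝ)] : Measure E).restrict (sphere 0 1)

/-- surface measure on the equator orthogonal to `u` -/
noncomputable def eqMeas (d : ℕ) (u : E) : Measure E :=
  (μH[(d : ℝ)] : Measure E).restrict (sphere 0 1 ∩ {v | ⟪v, u⟫_ℝ = 0})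

/-- the unimodular exponential -/
noncomputable def chx (r : ℝ) : ℂ := Complex.exp (r * Complex.I)

theorem chx_continuous : Continuous chx := by unfold chx; fun_prop

theorem chx_norm (r : ℝ) : ‖chx r‖ = 1 := Complex.norm_exp_ofReal_mul_I r

theorem chx_add (r s : ℝ) : chx (r + s) = chx r * chx s := by
  unfold chx
  rw [← Complex.exp_add]
  push_cast
  ring_nf

theorem measSet_eq (u : E) : MeasurableSet (sphere (0 : E) 1 ∩ {v | ⟪v, u⟫_ℝ = 0}) :=
  (isClosed_sphere.inter (isClosed_eq (by fun_prop) continuous_const)).measurableSet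

theorem sph_inv (d : ℕ) (A : E ≃ₗᵢ[ℝ] E) : (sphMeas E d).map A = sphMeas E d :=
  hausdorff_restrict_map _ _ A (by simp)

theorem eq_inv (d : ℕ) (u : E) (A : E ≃ₗᵢ[ℝ] E) (hA : A u = u) :
    (eqMeas d u).map A = eqMeas d u := by
  refine hausdorff_restrict_map _ _ A fun x => ?_
  have : ⟪A x, u⟫_ℝ = ⟪x, u⟫_ℝ := by
    conv_lhs => rw [← hA]
    exact A.inner_map_map x u
  simp [this]

theorem eq_char_inv (d : ℕ) (u w w' : E) (hw : ⟪u, w⟫_ℝ = 0) (hw' : ⟪u, w'⟫_ℝ = 0)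
    (hn : ‖w‖ = ‖w'‖) :
    ∫ v, chx ⟪v, w⟫_ℝ ∂(eqMeas d u) = ∫ v, chx ⟪v, w'⟫_ℝ ∂(eqMeas d u) := by
  obtain ⟨A, hA, hA2⟩ := exists_isometry_map w w' hn
  conv_rhs => rw [← eq_inv d u A (hA2 u hw hw')]
  rw [integral_map A.continuous.aemeasurable
    (by exact (chx_continuous.comp (by fun_prop)).aestronglyMeasurable)]
  refine integral_congr_ae (Filter.Eventually.of_forall fun v => ?_)
  beta_reduce
  rw [← hA, A.inner_map_map]

theorem sph_char_inv (d : ℕ) (u w w' : E) (α : ℝ) (hw : ⟪u, w⟫_ℝ = 0) (hw' : ⟪u, w'⟫_ℝ = 0)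
    (hn : ‖w‖ = ‖w'‖) :
    ∫ v, chx ⟪v, α • u + w⟫_ℝ ∂(sphMeas E d) = ∫ v, chx ⟪v, α • u + w'⟫_ℝ ∂(sphMeas E d) := by
  obtain ⟨A, hA, hA2⟩ := exists_isometry_map w w' hn
  have hAu := hA2 u hw hw'
  conv_rhs => rw [← sph_inv d A]
  rw [integral_map A.continuous.aemeasurable
    (by exact (chx_continuous.comp (by fun_prop)).aestronglyMeasurable)]
  refine integral_congr_ae (Filter.Eventually.of_forall fun v => ?_)
  beta_reduce
  have : α • u + w' = A (α • u + w) := by rw [map_add, map_smul, hAu, hA]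
  rw [this, A.inner_map_map]

theorem disint (m : ℕ) (hm : Module.finrank ℝ E = m + 2) (u : E) (hu : ‖u‖ = 1) :
    (eqMeas m u Set.univ) • sphMeas E (m + 1) =
      ((sphMeas E (m + 1)).prod (eqMeas m u)).map
        (fun p => ⟪p.1, u⟫_ℝ • u + Real.sqrt (1 - ⟪p.1, u⟫_ℝ ^ 2) • p.2) := by
  have hu0 : u ≠ 0 := by rintro rfl; simp at hu
  have huu : ⟪u, u⟫_ℝ = 1 := by rw [real_inner_self_eq_norm_sq, hu]; norm_num
  have hfin : eqMeas m u Set.univ < ∞ := by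
    rw [eqMeas, Measure.restrict_apply_univ]; exact (hausdorff_equator m hm u hu0).2
  have : IsFiniteMeasure (eqMeas m u) := ⟨hfin⟩
  have : IsFiniteMeasure (sphMeas E (m + 1)) := ⟨by
    rw [sphMeas, Measure.restrict_apply_univ]
    exact hausdorff_sphere_lt_top_s9 (m + 1) (by omega)⟩
  have : IsFiniteMeasure ((eqMeas m u Set.univ) • sphMeas E (m + 1)) := 
    Measure.smul_finite _ hfin.ne
  have : CompleteSpace E := FiniteDimensional.complete ℝ E
  set Φ : E × E → E := fun p => ⟪p.1, u⟫_ℝ • u + Real.sqrt (1 - ⟪p.1, u⟫_ℝ ^ 2) • p.2 with hΦ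
  have hΦc : Continuous Φ := by rw [hΦ]; fun_prop
  have : IsFiniteMeasure (((sphMeas E (m + 1)).prod (eqMeas m u)).map Φ) :=
    Measure.isFiniteMeasure_map _ _
  refine Measure.ext_of_charFun ?_
  funext ξ
  set α := ⟪u, ξ⟫_ℝ with hα
  set ξ' := ξ - α • u with hξ'
  have hξu : ⟪u, ξ'⟫_ℝ = 0 := by
    rw [hξ', inner_sub_right, inner_smul_right, huu, mul_one, hα, sub_self]
  have hξ : ξ = α • u + ξ' := by rw [hξ']; abel
  have hchar : ∀ μ : Measure E, charFun μ ξ = ∫ x, chx ⟪x, ξ⟫_ℝ ∂μ := fun μ => rfl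
  rw [hchar, hchar, integral_smul_measure, integral_map hΦc.aemeasurable
    (by exact (chx_continuous.comp (by fun_prop)).aestronglyMeasurable)]
  have hIntg : ∀ (μ : Measure (E × E)) [IsFiniteMeasure μ] (g : E × E → ℝ), Continuous g →
      Integrable (fun p => chx (g p)) μ := by
    intro μ _ g hg
    refine Integrable.of_bound (chx_continuous.comp hg).aestronglyMeasurable 1 
      (Filter.Eventually.of_forall fun p => (chx_norm _).le)
  rw [integral_prod _ (hIntg _ (fun p => ⟪Φ p, ξ⟫_ℝ) (by fun_prop))]
  have hL : (eqMeas m u Set.univ).toReal • ∫ x, chx ⟪x, ξ⟫_ℝ ∂(sphMeas E (m + 1)) =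
      ∫ η, ∫ x, chx ⟪x, α • u + ‖ξ'‖ • η⟫_ℝ ∂(sphMeas E (m + 1)) ∂(eqMeas m u) := by
    rw [← Measure.real, ← integral_const]
    refine setIntegral_congr_fun (measSet_eq u) fun η hη => ?_
    have h1 : ‖η‖ = 1 := by simpa using hη.1
    have h2 : ⟪u, η⟫_ℝ = 0 := by rw [real_inner_comm]; exact hη.2
    conv_lhs => rw [hξ]
    refine sph_char_inv (m + 1) u _ _ α hξu ?_ ?_
    · rw [inner_smul_right, h2, mul_zero]
    · rw [norm_smul, h1, mul_one, norm_norm]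
  rw [hL, integral_integral_swap (f := fun η x => chx ⟪x, α • u + ‖ξ'‖ • η⟫_ℝ) 
    (hIntg _ (fun p => ⟪p.2, α • u + ‖ξ'‖ • p.1⟫_ℝ) (by fun_prop))]
  refine setIntegral_congr_fun isClosed_sphere.measurableSet fun x hx => ?_
  have hx1 : ‖x‖ = 1 := by simpa using hx
  set t := ⟪x, u⟫_ℝ with ht
  have ht1 : 0 ≤ 1 - t ^ 2 := by
    have := abs_real_inner_le_norm x u
    rw [hx1, hu, mul_one, ← ht] at this
    nlinarith [abs_le.1 this]
  have e1 : ∫ η, chx ⟪x, α • u + ‖ξ'‖ • η⟫_ℝ ∂(eqMeas m u) =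
      ∫ η, chx (α * t) * chx ⟪η, ‖ξ'‖ • (x - t • u)⟫_ℝ ∂(eqMeas m u) := by
    refine setIntegral_congr_fun (measSet_eq u) fun η hη => ?_
    have h2 : ⟪η, u⟫_ℝ = 0 := hη.2
    rw [← chx_add, inner_add_right, inner_smul_right, inner_smul_right, inner_smul_right,
      inner_sub_right, inner_smul_right, h2, real_inner_comm x η, ← ht]
    ring_nf
  have e2 : ∫ v, chx ⟪Φ (x, v), ξ⟫_ℝ ∂(eqMeas m u) =
      ∫ v, chx (α * t) * chx ⟪v, Real.sqrt (1 - t ^ 2) • ξ'⟫_ℝ ∂(eqMeas m u) := by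
    refine setIntegral_congr_fun (measSet_eq u) fun η hη => ?_
    simp only [hΦ]
    have h2 : ⟪η, u⟫_ℝ = 0 := hη.2
    rw [← chx_add, inner_add_left, inner_smul_left, inner_smul_left, inner_smul_right, hξ',
      inner_sub_right, inner_smul_right, h2, ← hα, ← ht]
    simp only [conj_trivial]
    ring_nf
  rw [e1, e2, integral_const_mul, integral_const_mul]
  congr 1
  refine eq_char_inv m u _ _ ?_ ?_ ?_
  · rw [inner_smul_right, inner_sub_right, inner_smul_right, huu, real_inner_comm, ← ht]
    ring
  · rw [inner_smul_right, hξu, mul_zero]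
  · rw [norm_smul, norm_smul, norm_norm, Real.norm_of_nonneg (Real.sqrt_nonneg _), mul_comm]
    congr 1
    rw [eq_comm, Real.sqrt_eq_iff_mul_self_eq ht1 (norm_nonneg _), ← sq, norm_sub_sq_real,
      inner_smul_right, norm_smul, hx1, hu, ← ht, Real.norm_eq_abs, mul_one, sq_abs]
    ring

end Disintegration

section Slices

variable {E : Type*} [NormedAddCommGroup E] [InnerProductSpace ℝ E] [FiniteDimensional ℝ E]
  [MeasurableSpace E] [BorelSpace E]

theorem sph_finite (m : ℕ) (hm : Module.finrank ℝ E = m + 1) : IsFiniteMeasure (sphMeas E m) :=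
  ⟨by
    rw [sphMeas, Measure.restrict_apply_univ]
    exact hausdorff_sphere_lt_top_s9 m hm⟩

theorem sph_integrable {F : Type*} [NormedAddCommGroup F] (m : ℕ)
    (hm : Module.finrank ℝ E = m + 1) (g : E → F)
    (hg : Continuous g) : Integrable g (sphMeas E m) := by
  have := sph_finite m hm
  have h : IntegrableOn g (sphere (0 : E) 1) (sphMeas E m) :=
    hg.continuousOn.integrableOn_compact (isCompact_sphere 0 1)
  rwa [IntegrableOn, sphMeas, Measure.restrict_restrict isClosed_sphere.measurableSet,
    Set.inter_self] at h

theorem slice_eq_image (u : E) (hu : ‖u‖ = 1) (t : ℝ) (ht : t ^ 2 < 1) :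
    sphere (0 : E) 1 ∩ {z | ⟪z, u⟫_ℝ = t} =
      (fun v => t • u + Real.sqrt (1 - t ^ 2) • v) '' (sphere (0 : E) 1 ∩ {v | ⟪v, u⟫_ℝ = 0}) := by
  have huu : ⟪u, u⟫_ℝ = 1 := by rw [real_inner_self_eq_norm_sq, hu]; norm_num
  have hr : 0 < Real.sqrt (1 - t ^ 2) := Real.sqrt_pos.2 (by linarith)
  have hr2 : Real.sqrt (1 - t ^ 2) ^ 2 = 1 - t ^ 2 := Real.sq_sqrt (by linarith)
  generalize Real.sqrt (1 - t ^ 2) = r at *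
  ext z
  simp only [Set.mem_inter_iff, mem_sphere_zero_iff_norm, Set.mem_ofPred_eq, Set.mem_image]
  constructor
  · rintro ⟨h1, h2⟩
    refine ⟨r⁻¹ • (z - t • u), ⟨?_, ?_⟩, ?_⟩
    · rw [norm_smul, Real.norm_of_nonneg (by positivity), inv_mul_eq_one₀ hr.ne',
        ← pow_left_inj₀ hr.le (norm_nonneg _) two_ne_zero, norm_sub_sq_real, inner_smul_right,
        norm_smul, h1, h2, hu, Real.norm_eq_abs, mul_one, sq_abs, hr2]
      ring
    · rw [inner_smul_left, inner_sub_left, inner_smul_left, h2, huu]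
      simp
    · rw [smul_smul, mul_inv_cancel₀ hr.ne', one_smul]
      abel
  · rintro ⟨v, ⟨h1, h2⟩, rfl⟩
    constructor
    · rw [← pow_left_inj₀ (norm_nonneg _) zero_le_one two_ne_zero, norm_add_sq_real,
        inner_smul_left, inner_smul_right, real_inner_comm, h2, norm_smul, norm_smul, h1, hu,
        Real.norm_eq_abs, Real.norm_eq_abs, mul_one, mul_one, sq_abs, sq_abs, hr2]
      simp
    · rw [inner_add_left, inner_smul_left, inner_smul_left, h2, huu]
      simp

theorem slice_test (m : ℕ) (hm : Module.finrank ℝ E = m + 2) (G : E → ℝ) (hG : Continuous G)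
    (u : E) (hu : ‖u‖ = 1)
    (h0 : ∀ t : ℝ, t ^ 2 < 1 →
      ∫ z in sphere (0 : E) 1 ∩ {z | ⟪z, u⟫_ℝ = t}, G z ∂μH[(m : ℝ)] = 0)
    (h : ℝ → ℂ) (hh : Continuous h) :
    ∫ z, h ⟪z, u⟫_ℝ * (G z : ℂ) ∂(sphMeas E (m + 1)) = 0 := by
  have hu0 : u ≠ 0 := by rintro rfl; simp at hu
  have huu : ⟪u, u⟫_ℝ = 1 := by rw [real_inner_self_eq_norm_sq, hu]; norm_num
  have : CompleteSpace E := FiniteDimensional.complete ℝ E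
  have hpf := hausdorff_equator m hm u hu0
  have : IsFiniteMeasure (eqMeas m u) := ⟨by
    rw [eqMeas, Measure.restrict_apply_univ]; exact hpf.2⟩
  have := sph_finite (E := E) (m + 1) hm
  have hd := disint m hm u hu
  set Φ : E × E → E := fun p => ⟪p.1, u⟫_ℝ • u + Real.sqrt (1 - ⟪p.1, u⟫_ℝ ^ 2) • p.2 with hΦ
  have hΦc : Continuous Φ := by rw [hΦ]; fun_prop
  have hc : eqMeas m u Set.univ ≠ 0 ∧ eqMeas m u Set.univ ≠ ∞ := by
    rw [eqMeas, Measure.restrict_apply_univ]; exact ⟨hpf.1.ne', hpf.2.ne⟩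
  set F : E → ℂ := fun z => h ⟪z, u⟫_ℝ * (G z : ℂ) with hF
  have hFc : Continuous F := by rw [hF]; fun_prop
  have hFi : Integrable F (sphMeas E (m + 1)) := sph_integrable (m + 1) hm F hFc
  have hFi2 := hFi.smul_measure hc.2
  rw [hd, integrable_map_measure hFc.aestronglyMeasurable hΦc.aemeasurable] at hFi2
  have e1 : (eqMeas m u Set.univ).toReal • ∫ z, F z ∂(sphMeas E (m + 1)) = 0 := by
    rw [← integral_smul_measure, hd, integral_map hΦc.aemeasurable hFc.aestronglyMeasurable,
      integral_prod (fun p => F (Φ p)) hFi2]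
    have hae : ∀ᵐ x ∂(sphMeas E (m + 1)), ∫ v, F (Φ (x, v)) ∂(eqMeas m u) = 0 := by
      have hna : NullSingletonClass (μH[((m + 1 : ℕ) : ℝ)] : Measure E) :=
        Measure.nullSingletonClass_hausdorff E (by positivity)
      have hnu : ∀ᵐ x ∂(sphMeas E (m + 1)), x ≠ u :=
        ae_restrict_of_ae (Measure.ae_ne (μH[((m + 1 : ℕ) : ℝ)] : Measure E) u)
      have hnu' : ∀ᵐ x ∂(sphMeas E (m + 1)), x ≠ -u :=
        ae_restrict_of_ae (Measure.ae_ne (μH[((m + 1 : ℕ) : ℝ)] : Measure E) (-u))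
      have hS : ∀ᵐ x ∂(sphMeas E (m + 1)), x ∈ sphere (0 : E) 1 :=
        ae_restrict_mem isClosed_sphere.measurableSet
      filter_upwards [hnu, hnu', hS] with x hx1 hx2 hx
      have hxn : ‖x‖ = 1 := by simpa using hx
      set t := ⟪x, u⟫_ℝ with ht
      have ht1 : t < 1 := by
        rw [ht, inner_lt_one_iff_real_of_norm_eq_one hxn hu]; exact hx1
      have ht2 : -1 < t := by
        have : ⟪x, -u⟫_ℝ < 1 := by
          rw [inner_lt_one_iff_real_of_norm_eq_one hxn (by simpa using hu)]; exact hx2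
        rw [inner_neg_right] at this
        linarith
      have ht3 : t ^ 2 < 1 := by nlinarith
      have hr : 0 < Real.sqrt (1 - t ^ 2) := Real.sqrt_pos.2 (by linarith)
      have hsl := h0 t ht3
      have himm : MeasurableSet (sphere (0 : E) 1 ∩ {z | ⟪z, u⟫_ℝ = t}) :=
        (isClosed_sphere.inter (isClosed_eq (by fun_prop) continuous_const)).measurableSet
      rw [slice_eq_image u hu t ht3] at hsl himm
      rw [conf_integral m _ (fun _ => Real.sqrt (1 - t ^ 2)) _ (measSet_eq u) measurable_const
        (fun _ _ => hr) ?_ (by fun_prop) himm G hG.continuousOn, integral_const_mul] at hsl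
      · have hsl2 := (mul_eq_zero.1 hsl).resolve_left (by positivity)
        have : ∫ v, F (Φ (x, v)) ∂(eqMeas m u) =
            ∫ v, h t * ((G (t • u + Real.sqrt (1 - t ^ 2) • v) : ℝ) : ℂ) ∂(eqMeas m u) := by
          refine setIntegral_congr_fun (measSet_eq u) fun η hη => ?_
          have h2 : ⟪η, u⟫_ℝ = 0 := hη.2
          simp only [hF, hΦ, ← ht]
          rw [inner_add_left, inner_smul_left, inner_smul_left, h2, huu]
          simp
        rw [this, integral_const_mul, integral_complex_ofReal]
        have h3 : ∫ v, G (t • u + Real.sqrt (1 - t ^ 2) • v) ∂(eqMeas m u) = 0 := hsl2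
        rw [h3]
        simp
      · intro x _ y _
        rw [dist_add_left, dist_smul₀, Real.norm_of_nonneg hr.le]
        ring
    rw [integral_congr_ae hae]
    simp
  exact (smul_eq_zero.1 e1).resolve_left (ENNReal.toReal_ne_zero.2 hc)

theorem proj_test (m : ℕ) (hm : Module.finrank ℝ E = m + 2) (G : E → ℝ) (hG : Continuous G)
    (e : E) (he : ‖e‖ = 1)
    (h0 : ∀ u : E, ‖u‖ = 1 → ⟪u, e⟫_ℝ = 0 → ∀ t : ℝ, t ^ 2 < 1 →
      ∫ z in sphere (0 : E) 1 ∩ {z | ⟪z, u⟫_ℝ = t}, G z ∂μH[(m : ℝ)] = 0)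
    (h : E → ℝ) (hh : Continuous h) :
    ∫ z, h (z - ⟪z, e⟫_ℝ • e) * G z ∂(sphMeas E (m + 1)) = 0 := by
  have he0 : e ≠ 0 := by rintro rfl; simp at he
  have hee : ⟪e, e⟫_ℝ = 1 := by rw [real_inner_self_eq_norm_sq, he]; norm_num
  have : CompleteSpace E := FiniteDimensional.complete ℝ E
  have := sph_finite (E := E) (m + 1) hm
  set σ := sphMeas E (m + 1) with hσ
  have hGi : ∀ (g : E → ℝ), Continuous g → Integrable g σ := fun g hg =>
    sph_integrable (m + 1) hm g hg
  let P : E → E := fun z => z - ⟪z, e⟫_ℝ • e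
  have hP : Continuous P := by fun_prop
  -- exponentials
  have hexp : ∀ ξ : E, ∫ z, chx ⟪P z, ξ⟫_ℝ * (G z : ℂ) ∂σ = 0 := by
    intro ξ
    have hsym : ∀ z, ⟪P z, ξ⟫_ℝ = ⟪z, P ξ⟫_ℝ := by
      intro z
      simp only [P]
      rw [inner_sub_left, inner_sub_right, inner_smul_left, inner_smul_right,
        real_inner_comm e ξ]
      simp
      ring
    have hPe : ⟪P ξ, e⟫_ℝ = 0 := by
      simp only [P]
      rw [inner_sub_left, inner_smul_left, hee]
      simp
    obtain ⟨u, c, hu, hue, huc⟩ : ∃ (u : E) (c : ℝ), ‖u‖ = 1 ∧ ⟪u, e⟫_ℝ = 0 ∧ P ξ = c • u := by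
      by_cases hz : P ξ = 0
      · have hK := finrank_orth_succ (m + 1) hm e he0
        have : Nontrivial (ℝ ∙ e)ᗮ := Module.nontrivial_of_finrank_pos (R := ℝ) (by omega)
        obtain ⟨w, hw⟩ := exists_norm_eq (ℝ ∙ e)ᗮ (zero_le_one)
        exact ⟨w, 0, hw, Submodule.mem_orthogonal_singleton_iff_inner_left.1 w.2, by simp [hz]⟩
      · have hn : ‖P ξ‖ ≠ 0 := norm_ne_zero_iff.2 hz
        refine ⟨‖P ξ‖⁻¹ • P ξ, ‖P ξ‖, ?_, ?_, ?_⟩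
        · rw [norm_smul, norm_inv, norm_norm, inv_mul_cancel₀ hn]
        · rw [inner_smul_left, hPe, mul_zero]
        · rw [smul_smul, mul_inv_cancel₀ hn, one_smul]
    have := slice_test m hm G hG u hu (h0 u hu hue) (fun t => chx (c * t))
      (chx_continuous.comp (by fun_prop))
    rw [← this]
    refine integral_congr_ae (Filter.Eventually.of_forall fun z => ?_)
    beta_reduce
    rw [hsym, huc, inner_smul_right]
  -- the two measures
  let Gp : E → ℝ := fun z => max (G z) 0
  let Gm : E → ℝ := fun z => max (-G z) 0
  have hGp : Continuous Gp := by fun_prop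
  have hGm : Continuous Gm := by fun_prop
  have hGpm : ∀ z, G z = Gp z - Gm z := by
    intro z
    simp only [Gp, Gm]
    rcases le_total (G z) 0 with h | h
    · rw [max_eq_right h, max_eq_left (by linarith)]; ring
    · rw [max_eq_left h, max_eq_right (by linarith)]; ring
  let M : (E → ℝ) → Measure E := fun g => (σ.withDensity fun z => ENNReal.ofReal (g z)).map P
  have hMint : ∀ (g : E → ℝ), Continuous g → (∀ z, 0 ≤ g z) → ∀ (F : E → ℂ), Continuous F →
      ∫ y, F y ∂(M g) = ∫ z, (g z : ℂ) * F (P z) ∂σ := by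
    intro g hg hg0 F hF
    simp only [M]
    rw [integral_map hP.aemeasurable hF.aestronglyMeasurable,
      integral_withDensity_eq_integral_toReal_smul hg.measurable.ennreal_ofReal (by simp)]
    refine integral_congr_ae (Filter.Eventually.of_forall fun z => ?_)
    simp [ENNReal.toReal_ofReal (hg0 z)]
  have hMfin : ∀ (g : E → ℝ), Continuous g → IsFiniteMeasure (M g) := by
    intro g hg
    have : IsFiniteMeasure (σ.withDensity fun z => ENNReal.ofReal (g z)) :=
      isFiniteMeasure_withDensity_ofReal (hGi g hg).2
    exact Measure.isFiniteMeasure_map _ _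
  have hdiff : ∀ (F : E → ℂ), Continuous F →
      ∫ y, F y ∂(M Gp) - ∫ y, F y ∂(M Gm) = ∫ z, F (P z) * (G z : ℂ) ∂σ := by
    intro F hF
    rw [hMint Gp hGp (fun z => le_max_right _ _) F hF,
      hMint Gm hGm (fun z => le_max_right _ _) F hF, ← integral_sub
        (sph_integrable (m + 1) hm _ (by fun_prop)) (sph_integrable (m + 1) hm _ (by fun_prop))]
    refine integral_congr_ae (Filter.Eventually.of_forall fun z => ?_)
    simp only [hGpm z]
    push_cast
    ring
  have hMeq : M Gp = M Gm := by
    have := hMfin Gp hGp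
    have := hMfin Gm hGm
    refine Measure.ext_of_charFun ?_
    funext ξ
    refine sub_eq_zero.1 ?_
    have hcf := hdiff (fun y => chx ⟪y, ξ⟫_ℝ) (chx_continuous.comp (by fun_prop))
    rw [hexp ξ] at hcf
    exact hcf
  have hfin := hdiff (fun y => (h y : ℂ)) (by fun_prop)
  rw [hMeq, sub_self] at hfin
  have : ((∫ z, h (P z) * G z ∂σ : ℝ) : ℂ) = 0 := by
    rw [← integral_complex_ofReal, hfin]
    refine integral_congr_ae (Filter.Eventually.of_forall fun z => ?_)
    push_cast
    rfl
  exact_mod_cast this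

theorem slice_odd_cont (m : ℕ) (hm : Module.finrank ℝ E = m + 2) (G : E → ℝ) (hG : Continuous G)
    (e : E) (he : ‖e‖ = 1)
    (h0 : ∀ u : E, ‖u‖ = 1 → ⟪u, e⟫_ℝ = 0 → ∀ t : ℝ, t ^ 2 < 1 →
      ∫ z in sphere (0 : E) 1 ∩ {z | ⟪z, u⟫_ℝ = t}, G z ∂μH[(m : ℝ)] = 0) :
    ∀ z ∈ sphere (0 : E) 1, G (z - (2 * ⟪z, e⟫_ℝ) • e) = - G z := by
  have he0 : e ≠ 0 := by rintro rfl; simp at he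
  have hee : ⟪e, e⟫_ℝ = 1 := by rw [real_inner_self_eq_norm_sq, he]; norm_num
  have : CompleteSpace E := FiniteDimensional.complete ℝ E
  have := sph_finite (E := E) (m + 1) hm
  let R : E ≃ₗᵢ[ℝ] E := (ℝ ∙ e)ᗮ.reflection
  have hR : ∀ z, R z = z - (2 * ⟪z, e⟫_ℝ) • e := by
    intro z
    simp only [R]
    rw [Submodule.reflection_orthogonal_apply, Submodule.reflection_singleton_apply, he,
      real_inner_comm]
    simp only [RCLike.ofReal_real_eq_id, id]
    rw [two_smul, mul_smul, two_smul]
    simp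
  have hRe : ∀ z, ⟪R z, e⟫_ℝ = - ⟪z, e⟫_ℝ := by
    intro z
    rw [hR, inner_sub_left, inner_smul_left, hee]
    simp
    ring
  have hRR : ∀ z, R (R z) = z := fun z => Submodule.reflection_reflection _ z
  let P : E → E := fun z => z - ⟪z, e⟫_ℝ • e
  have hPR : ∀ z, P (R z) = P z := by
    intro z
    simp only [P]
    rw [hRe, hR, two_mul, add_smul, neg_smul]
    abel
  have hP : Continuous P := by fun_prop
  let Ge : E → ℝ := fun z => G z + G (R z)
  have hGe : Continuous Ge := hG.add (hG.comp R.continuous)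
  have hGeR : ∀ z, Ge (R z) = Ge z := by
    intro z
    simp only [Ge, hRR]
    ring
  let H : E → ℝ := fun y => Ge (y + Real.sqrt (1 - ‖y‖ ^ 2) • e)
  have hH : Continuous H := hGe.comp (by fun_prop)
  have hHP : ∀ z ∈ sphere (0 : E) 1, H (P z) = Ge z := by
    intro z hz
    have hz1 : ‖z‖ = 1 := by simpa using hz
    have h1 : ‖P z‖ ^ 2 = 1 - ⟪z, e⟫_ℝ ^ 2 := by
      simp only [P]
      rw [norm_sub_sq_real, inner_smul_right, norm_smul, hz1, he, Real.norm_eq_abs, mul_one,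
        sq_abs]
      ring
    simp only [H]
    rw [h1, sub_sub_cancel, Real.sqrt_sq_eq_abs]
    rcases le_total 0 ⟪z, e⟫_ℝ with h | h
    · rw [abs_of_nonneg h]
      simp [P]
    · rw [abs_of_nonpos h, ← hGeR z]
      congr 1
      rw [hR]
      simp only [P]
      rw [two_mul, add_smul, neg_smul]
      abel
  have i1 : ∫ z, H (P z) * G z ∂(sphMeas E (m + 1)) = 0 := proj_test m hm G hG e he h0 H hH
  have i2 : ∫ z, H (P z) * G (R z) ∂(sphMeas E (m + 1)) = 0 := by
    rw [← i1]
    conv_rhs => rw [← sph_inv (m + 1) R]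
    rw [integral_map R.continuous.aemeasurable
      (by exact ((hH.comp hP).mul hG).aestronglyMeasurable)]
    simp only [hPR]
  have i3 : ∫ z, Ge z ^ 2 ∂(sphMeas E (m + 1)) = 0 := by
    have : ∫ z, Ge z ^ 2 ∂(sphMeas E (m + 1)) =
        ∫ z, (H (P z) * G z + H (P z) * G (R z)) ∂(sphMeas E (m + 1)) := by
      refine setIntegral_congr_fun isClosed_sphere.measurableSet fun z hz => ?_
      beta_reduce
      rw [hHP z hz]
      simp only [Ge]
      ring
    rw [this, integral_add (by exact sph_integrable (m + 1) hm _ ((hH.comp hP).mul hG))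
      (by exact sph_integrable (m + 1) hm _ ((hH.comp hP).mul (hG.comp R.continuous))), i1, i2, add_zero]
  rw [integral_eq_zero_iff_of_nonneg (fun z => sq_nonneg _)
    (sph_integrable (m + 1) hm _ (hGe.pow 2))] at i3
  intro z hz
  rw [← hR z]
  by_contra hne
  have hU : IsOpen {z | Ge z ≠ 0} := isOpen_ne_fun hGe continuous_const
  refine hausdorff_sphere_open_pos (m + 1) hm _ hU ⟨z, hz, ?_⟩ ?_
  · intro h
    apply hne
    simp only [Ge] at h
    linarith
  · have : (sphMeas E (m + 1)) {z | Ge z ≠ 0} = 0 := by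
      rw [← nonpos_iff_eq_zero]
      refine (measure_mono ?_).trans (nonpos_iff_eq_zero.2 (ae_iff.1 i3))
      intro z hz
      simpa using hz
    rw [sphMeas, Measure.restrict_apply hU.measurableSet, Set.inter_comm] at this
    exact this

theorem slice_odd (m : ℕ) (hm : Module.finrank ℝ E = m + 2) (G : E → ℝ)
    (hG : ContinuousOn G (sphere (0 : E) 1))
    (e : E) (he : ‖e‖ = 1)
    (h0 : ∀ u : E, ‖u‖ = 1 → ⟪u, e⟫_ℝ = 0 → ∀ t : ℝ, t ^ 2 < 1 →
      ∫ z in sphere (0 : E) 1 ∩ {z | ⟪z, u⟫_ℝ = t}, G z ∂μH[(m : ℝ)] = 0) :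
    ∀ z ∈ sphere (0 : E) 1, G (z - (2 * ⟪z, e⟫_ℝ) • e) = - G z := by
  have hee : ⟪e, e⟫_ℝ = 1 := by rw [real_inner_self_eq_norm_sq, he]; norm_num
  obtain ⟨G', hG'⟩ := ContinuousMap.exists_restrict_eq (isClosed_sphere (x := (0 : E)) (ε := 1))
    ⟨(sphere (0 : E) 1).domRestrict G, hG.domRestrict⟩
  have hGG : ∀ z ∈ sphere (0 : E) 1, G' z = G z := by
    intro z hz
    exact congrArg (fun k => k ⟨z, hz⟩) hG'
  have := slice_odd_cont m hm G' G'.continuous e he (by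
    intro u hu hue t ht
    rw [← h0 u hu hue t ht]
    refine setIntegral_congr_fun
      (isClosed_sphere.inter (isClosed_eq (by fun_prop) continuous_const)).measurableSet ?_
    intro z hz
    exact hGG z hz.1)
  intro z hz
  have h1 := this z hz
  rw [hGG z hz, hGG] at h1
  · exact h1
  · have hz1 : ‖z‖ = 1 := by simpa using hz
    rw [mem_sphere_zero_iff_norm, ← pow_left_inj₀ (norm_nonneg _) zero_le_one two_ne_zero,
      norm_sub_sq_real, inner_smul_right, norm_smul, hz1, he, Real.norm_eq_abs, mul_one, sq_abs]
    ring

end Slices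

section Inv

variable {E : Type*} [NormedAddCommGroup E] [InnerProductSpace ℝ E]

/-- inversion centred at `p` preserving the unit sphere -/
noncomputable def psi (p x : E) : E := p + ((‖p‖ ^ 2 - 1) / ‖x - p‖ ^ 2) • (x - p)

theorem sub_pos_of_out (p x : E) (hp : 1 < ‖p‖) (hx : ‖x‖ = 1) : 0 < ‖x - p‖ ^ 2 := by
  have : x - p ≠ 0 := by
    intro h
    rw [sub_eq_zero.1 h] at hx
    linarith
  positivity

theorem sq_sub_one_pos (p : E) (hp : 1 < ‖p‖) : 0 < ‖p‖ ^ 2 - 1 := by nlinarith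

theorem psi_norm_s9 (p x : E) (hp : 1 < ‖p‖) (hx : ‖x‖ = 1) : ‖psi p x‖ = 1 := by
  have hd := sub_pos_of_out p x hp hx
  have hd' : ‖x - p‖ ^ 2 = 1 - 2 * ⟪x, p⟫_ℝ + ‖p‖ ^ 2 := by
    rw [norm_sub_sq_real, hx]; ring
  have hi : ⟪p, x - p⟫_ℝ = ⟪x, p⟫_ℝ - ‖p‖ ^ 2 := by
    rw [inner_sub_right, real_inner_comm, real_inner_self_eq_norm_sq]
  rw [← pow_left_inj₀ (norm_nonneg _) zero_le_one two_ne_zero, psi, norm_add_sq_real,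
    inner_smul_right, norm_smul, mul_pow, Real.norm_eq_abs, sq_abs, hi]
  have : ⟪x, p⟫_ℝ = (1 + ‖p‖ ^ 2 - ‖x - p‖ ^ 2) / 2 := by linarith
  rw [this]
  generalize ‖x - p‖ ^ 2 = d at hd
  field_simp
  ring

theorem psi_sub_s9 (p x : E) (hp : 1 < ‖p‖) (hx : ‖x‖ = 1) :
    ‖psi p x - p‖ ^ 2 = (‖p‖ ^ 2 - 1) ^ 2 / ‖x - p‖ ^ 2 := by
  have hd := sub_pos_of_out p x hp hx
  rw [psi, add_sub_cancel_left, norm_smul, mul_pow, Real.norm_eq_abs, sq_abs]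
  field_simp

theorem psi_psi (p x : E) (hp : 1 < ‖p‖) (hx : ‖x‖ = 1) : psi p (psi p x) = x := by
  have hd := sub_pos_of_out p x hp hx
  have hp' := sq_sub_one_pos p hp
  conv_lhs => rw [psi]
  rw [psi_sub_s9 p x hp hx, psi, add_sub_cancel_left, smul_smul]
  have : (‖p‖ ^ 2 - 1) / ((‖p‖ ^ 2 - 1) ^ 2 / ‖x - p‖ ^ 2) * ((‖p‖ ^ 2 - 1) / ‖x - p‖ ^ 2) = 1 := by
    generalize ‖x - p‖ ^ 2 = d at hd
    field_simp
  rw [this, one_smul]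
  abel

theorem psi_dist_s9 (p x y : E) (hp : 1 < ‖p‖) (hx : ‖x‖ = 1) (hy : ‖y‖ = 1) :
    dist (psi p x) (psi p y) ^ 2 =
      ((‖p‖ ^ 2 - 1) / ‖x - p‖ ^ 2) * ((‖p‖ ^ 2 - 1) / ‖y - p‖ ^ 2) * dist x y ^ 2 := by
  have hd := sub_pos_of_out p x hp hx
  have hd2 := sub_pos_of_out p y hp hy
  have h1 : dist (psi p x) (psi p y) ^ 2 = ‖((‖p‖ ^ 2 - 1) / ‖x - p‖ ^ 2) • (x - p) -
      ((‖p‖ ^ 2 - 1) / ‖y - p‖ ^ 2) • (y - p)‖ ^ 2 := by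
    rw [dist_eq_norm, psi, psi, add_sub_add_left_eq_sub]
  have h2 : dist x y ^ 2 = ‖(x - p) - (y - p)‖ ^ 2 := by
    rw [dist_eq_norm, sub_sub_sub_cancel_right]
  rw [h1, h2, norm_sub_sq_real (x - p), norm_sub_sq_real (_ • (x - p)), inner_smul_left, inner_smul_right, norm_smul,
    norm_smul, mul_pow, mul_pow, Real.norm_eq_abs, Real.norm_eq_abs, sq_abs, sq_abs]
  simp only [conj_trivial]
  generalize ‖x - p‖ ^ 2 = d at hd
  generalize ‖y - p‖ ^ 2 = d' at hd2
  field_simp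
  ring

theorem psi_meas [FiniteDimensional ℝ E] [MeasurableSpace E] [BorelSpace E] (p : E) :
    Measurable (psi p) := by
  unfold psi; fun_prop

theorem psi_contOn (p : E) (hp : 1 < ‖p‖) : ContinuousOn (psi p) (sphere (0 : E) 1) := by
  unfold psi
  refine continuousOn_const.add (ContinuousOn.smul (continuousOn_const.div (by fun_prop) ?_)
    (by fun_prop))
  intro x hx
  exact (sub_pos_of_out p x hp (by simpa using hx)).ne'

theorem alg_one (s A ξ c ζ : ℝ) (hcd : c * (s ^ 2 + 1 - 2 * s * ξ) = s ^ 2 - 1)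
    (hζ : ζ = c * ξ + (1 - c) * s) (hsA : s ^ 2 + 1 = 2 * s * A) :
    (s ^ 2 + 1 + 2 * s * ζ) * (s ^ 2 + 1 - 2 * s * ξ) =
      4 * s ^ 2 * (1 - 2 * A * ξ + A ^ 2) := by
  subst hζ
  linear_combination (2 * s * (ξ - s)) * hcd + (s ^ 2 + 1 + 2 * s * A - 4 * s * ξ) * hsA

theorem alg_two (s A ξ c ζ K : ℝ) (hs : 0 < s)
    (hcd : c * (s ^ 2 + 1 - 2 * s * ξ) = s ^ 2 - 1)
    (hζ : ζ = c * ξ + (1 - c) * s) (hsA : s ^ 2 + 1 = 2 * s * A)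
    (hK : K * (s ^ 2 + 1 + 2 * s * ζ) = s ^ 2 - 1) :
    s + K * (-(c * s) - 2 * ζ) = (1 - K * c) * A := by
  have key : s ^ 2 + 1 - 2 * s * ζ = c * (s ^ 2 - 1) := by
    subst hζ
    linear_combination hcd
  have h2 : 2 * s ≠ 0 := by positivity
  refine mul_left_cancel₀ h2 ?_
  linear_combination (1 - K * c) * hsA - hK + K * key

theorem core_s9 [FiniteDimensional ℝ E] [MeasurableSpace E] [BorelSpace E] (m : ℕ)
    (hm : Module.finrank ℝ E = m + 2) (a : E) (ha : 1 < ‖a‖) (f : E → ℝ)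
    (hf : ContinuousOn f (sphere (0 : E) 1))
    (h0 : ∀ w : E, w ≠ 0 → (∃ z : E, ‖z‖ < 1 ∧ ⟪z - a, w⟫_ℝ = 0) →
      ∫ x in sphere (0 : E) 1 ∩ {x | ⟪x - a, w⟫_ℝ = 0}, f x ∂μH[(m : ℝ)] = 0) :
    ∀ x ∈ sphere (0 : E) 1, f x = -(((‖a‖ ^ 2 - 1) / ‖x - a‖ ^ 2) ^ m * f (psi a x)) := by
  have : CompleteSpace E := FiniteDimensional.complete ℝ E
  set A := ‖a‖ with hA
  have hA0 : 0 < A := by linarith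
  obtain ⟨e, he, hae⟩ : ∃ e : E, ‖e‖ = 1 ∧ a = A • e := by
    refine ⟨A⁻¹ • a, ?_, ?_⟩
    · rw [norm_smul, norm_inv, Real.norm_of_nonneg hA0.le, inv_mul_cancel₀ hA0.ne']
    · rw [smul_smul, mul_inv_cancel₀ hA0.ne', one_smul]
  have hee : ⟪e, e⟫_ℝ = 1 := by rw [real_inner_self_eq_norm_sq, he]; norm_num
  obtain ⟨s, hs1, hsA⟩ : ∃ s : ℝ, 1 < s ∧ s ^ 2 + 1 = 2 * s * A := by
    have hq : 0 ≤ A ^ 2 - 1 := by nlinarith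
    refine ⟨A + Real.sqrt (A ^ 2 - 1), by linarith [Real.sqrt_nonneg (A ^ 2 - 1)], ?_⟩
    nlinarith [Real.sq_sqrt hq]
  have hs0 : 0 < s := by linarith
  have hA' : A = (s ^ 2 + 1) / (2 * s) := by field_simp; linarith
  have hs2 : 0 < s ^ 2 - 1 := by nlinarith
  set p := s • e with hp
  have hpn : ‖p‖ = s := by rw [hp, norm_smul, he, Real.norm_of_nonneg hs0.le, mul_one]
  have hp1 : 1 < ‖p‖ := by rw [hpn]; exact hs1
  have hdp : ∀ x : E, ‖x‖ = 1 → ‖x - p‖ ^ 2 = s ^ 2 + 1 - 2 * s * ⟪x, e⟫_ℝ := by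
    intro x hx
    rw [norm_sub_sq_real, hpn, hx, hp, inner_smul_right]; ring
  set κ : E → ℝ := fun x => (‖p‖ ^ 2 - 1) / ‖x - p‖ ^ 2 with hκ
  have hκm : Measurable κ := by rw [hκ]; fun_prop
  have hκpos : ∀ x : E, ‖x‖ = 1 → 0 < κ x := fun x hx =>
    div_pos (sq_sub_one_pos p hp1) (sub_pos_of_out p x hp1 hx)
  have hκc : ContinuousOn κ (sphere (0 : E) 1) := by
    refine continuousOn_const.div (by fun_prop) ?_
    intro x hx
    exact (sub_pos_of_out p x hp1 (by simpa using hx)).ne'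
  have hmaps : Set.MapsTo (psi p) (sphere (0 : E) 1) (sphere (0 : E) 1) := by
    intro x hx
    simpa using psi_norm_s9 p x hp1 (by simpa using hx)
  set G : E → ℝ := fun z => κ z ^ m * f (psi p z) with hG
  have hGc : ContinuousOn G (sphere (0 : E) 1) :=
    (hκc.pow m).mul (hf.comp (psi_contOn p hp1) hmaps)
  have hodd := slice_odd m hm G hGc e he (by
    intro u hu hue t ht
    have huu : ⟪u, u⟫_ℝ = 1 := by rw [real_inner_self_eq_norm_sq, hu]; norm_num
    have heu : ⟪e, u⟫_ℝ = 0 := by rw [real_inner_comm]; exact hue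
    set w : E := (s ^ 2 - 1) • u + (2 * s * t) • e with hw
    have hwx : ∀ x : E, ⟪x - a, w⟫_ℝ = (s ^ 2 - 1) * ⟪x, u⟫_ℝ + 2 * s * t * (⟪x, e⟫_ℝ - A) := by
      intro x
      rw [hw, hae, inner_add_right, inner_smul_right, inner_smul_right, inner_sub_left,
        inner_sub_left, inner_smul_left, inner_smul_left, heu, hee]
      simp
    have hw0 : w ≠ 0 := by
      intro h
      have : ⟪w, u⟫_ℝ = 0 := by rw [h, inner_zero_left]
      rw [hw, inner_add_left, inner_smul_left, inner_smul_left, heu, huu] at this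
      simp at this
      linarith
    have hiff : ∀ z : E, ‖z‖ = 1 → (⟪psi p z - a, w⟫_ℝ = 0 ↔ ⟪z, u⟫_ℝ = t) := by
      intro z hz
      have e1 : ⟪psi p z, u⟫_ℝ = κ z * ⟪z, u⟫_ℝ := by
        have e0 : ⟪p, u⟫_ℝ = 0 := by rw [hp, inner_smul_left, heu, mul_zero]
        rw [psi, inner_add_left, e0, inner_smul_left, inner_sub_left, e0]
        simp [hκ]
      have e2 := hdp _ (psi_norm_s9 p z hp1 hz)
      rw [psi_sub_s9 p z hp1 hz] at e2
      have e3 : (‖p‖ ^ 2 - 1) ^ 2 / ‖z - p‖ ^ 2 = (s ^ 2 - 1) * κ z := by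
        simp only [hκ, hpn]; ring
      rw [e3] at e2
      have e4 : ⟪psi p z - a, w⟫_ℝ = (s ^ 2 - 1) * κ z * (⟪z, u⟫_ℝ - t) := by
        rw [hwx, e1]
        linear_combination t * e2 + t * hsA
      rw [e4, mul_eq_zero, sub_eq_zero, or_iff_right]
      exact (mul_pos hs2 (hκpos z hz)).ne'
    set L : Set E := sphere (0 : E) 1 ∩ {z | ⟪z, u⟫_ℝ = t} with hL
    have hLm : MeasurableSet L :=
      (isClosed_sphere.inter (isClosed_eq (by fun_prop) continuous_const)).measurableSet
    have him : psi p '' L = sphere (0 : E) 1 ∩ {x | ⟪x - a, w⟫_ℝ = 0} := by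
      ext x
      constructor
      · rintro ⟨z, ⟨hz1, hz2⟩, rfl⟩
        exact ⟨hmaps hz1, (hiff z (by simpa using hz1)).2 hz2⟩
      · rintro ⟨hx1, hx2⟩
        have hxn : ‖x‖ = 1 := by simpa using hx1
        have hx3 := psi_psi p x hp1 hxn
        refine ⟨psi p x, ⟨hmaps hx1, ?_⟩, hx3⟩
        refine (hiff _ (psi_norm_s9 p x hp1 hxn)).1 ?_
        rw [hx3]; exact hx2
    have himm : MeasurableSet (psi p '' L) := by
      rw [him]
      exact (isClosed_sphere.inter (isClosed_eq (by fun_prop) continuous_const)).measurableSet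
    have hIntg := conf_integral m (psi p) κ L hLm hκm (fun x hx => hκpos x (by simpa using hx.1))
      (fun x hx y hy => psi_dist_s9 p x y hp1 (by simpa using hx.1) (by simpa using hy.1))
      (psi_meas p) himm f (hf.mono (by rw [him]; exact Set.inter_subset_left))
    rw [him] at hIntg
    rw [← hIntg]
    refine h0 w hw0 ?_
    -- a point of the open ball on the hyperplane
    have hr : 0 < Real.sqrt (1 - t ^ 2) := Real.sqrt_pos.2 (by linarith)
    have hr2 : Real.sqrt (1 - t ^ 2) ^ 2 = 1 - t ^ 2 := Real.sq_sqrt (by linarith)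
    generalize Real.sqrt (1 - t ^ 2) = r at hr hr2
    have hn : ∀ q : ℝ, q ^ 2 = 1 - t ^ 2 → ‖t • u + q • e‖ = 1 ∧ ⟪t • u + q • e, u⟫_ℝ = t := by
      intro q hq
      constructor
      · rw [← pow_left_inj₀ (norm_nonneg _) zero_le_one two_ne_zero, norm_add_sq_real,
          inner_smul_left, inner_smul_right, hue, norm_smul, norm_smul, hu, he,
          Real.norm_eq_abs, Real.norm_eq_abs, mul_one, mul_one, sq_abs, sq_abs, hq]
        simp
      · rw [inner_add_left, inner_smul_left, inner_smul_left, heu, huu]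
        simp
    obtain ⟨n1, i1⟩ := hn r hr2
    obtain ⟨n2, i2⟩ := hn (-r) (by rw [neg_sq, hr2])
    set z1 := t • u + r • e with hz1
    set z2 := t • u + (-r) • e with hz2
    have hne : psi p z1 ≠ psi p z2 := by
      intro h
      have h' := congrArg (psi p) h
      rw [psi_psi p _ hp1 n1, psi_psi p _ hp1 n2, hz1, hz2, add_right_inj] at h'
      have := congrArg (fun v => ⟪v, e⟫_ℝ) h'
      simp only [inner_smul_left, hee] at this
      simp at this
      linarith
    have j1 := (hiff z1 n1).2 i1
    have j2 := (hiff z2 n2).2 i2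
    have k1 := psi_norm_s9 p z1 hp1 n1
    have k2 := psi_norm_s9 p z2 hp1 n2
    refine ⟨(1 / 2 : ℝ) • (psi p z1 + psi p z2), ?_, ?_⟩
    · have hpar := parallelogram_law_with_norm ℝ (psi p z1) (psi p z2)
      have hpos : 0 < ‖psi p z1 - psi p z2‖ := norm_pos_iff.2 (sub_ne_zero.2 hne)
      rw [k1, k2] at hpar
      rw [norm_smul, Real.norm_of_nonneg (by norm_num)]
      nlinarith [norm_nonneg (psi p z1 + psi p z2)]
    · rw [hwx] at j1 j2 ⊢
      rw [inner_smul_left, inner_smul_left, inner_add_left, inner_add_left]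
      simp only [conj_trivial]
      linear_combination j1 / 2 + j2 / 2)
  intro x hx
  have hxn : ‖x‖ = 1 := by simpa using hx
  set ξ := ⟪x, e⟫_ℝ with hξ
  have hd := sub_pos_of_out p x hp1 hxn
  rw [hdp x hxn, ← hξ] at hd
  have hda := sub_pos_of_out a x ha hxn
  have hda' : ‖x - a‖ ^ 2 = 1 - 2 * A * ξ + A ^ 2 := by
    rw [norm_sub_sq_real, hxn, ← hA]
    conv_lhs => rw [hae, inner_smul_right]
    ring
  set c := (s ^ 2 - 1) / (s ^ 2 + 1 - 2 * s * ξ) with hc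
  have hz : psi p x = c • x + ((1 - c) * s) • e := by
    rw [psi, hdp x hxn, hpn, ← hξ, ← hc, hp]
    module
  set z := psi p x with hzdef
  have hzn : ‖z‖ = 1 := psi_norm_s9 p x hp1 hxn
  set ζ := ⟪z, e⟫_ℝ with hζ
  have hζ' : ζ = c * ξ + (1 - c) * s := by
    rw [hζ, hz, inner_add_left, inner_smul_left, inner_smul_left, hee]
    simp [hξ]
  have hoz := hodd z (by simpa using hzn)
  rw [← hζ] at hoz
  set Z := z - (2 * ζ) • e with hZ
  have hZe : ⟪Z, e⟫_ℝ = -ζ := by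
    rw [hZ, inner_sub_left, inner_smul_left, hee, ← hζ]; simp; ring
  have hZn : ‖Z‖ = 1 := by
    rw [← pow_left_inj₀ (norm_nonneg _) zero_le_one two_ne_zero, hZ, norm_sub_sq_real,
      inner_smul_right, norm_smul, hzn, he, Real.norm_eq_abs, mul_one, sq_abs, ← hζ]
    ring
  have hd' := sub_pos_of_out p Z hp1 hZn
  rw [hdp Z hZn, hZe] at hd'
  have hκz : κ z = c⁻¹ := by
    simp only [hκ]
    rw [hzdef, psi_sub_s9 p x hp1 hxn, hdp x hxn, hpn, ← hξ, hc]
    field_simp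
  have hκZ : κ Z = (s ^ 2 - 1) / (s ^ 2 + 1 + 2 * s * ζ) := by
    simp only [hκ]
    rw [hdp Z hZn, hZe, hpn]
    ring
  have hcpos : 0 < c := div_pos hs2 hd
  have hcd : c * (s ^ 2 + 1 - 2 * s * ξ) = s ^ 2 - 1 := by
    rw [hc, div_mul_cancel₀ _ hd.ne']
  have hdd : (s ^ 2 + 1 + 2 * s * ζ) * (s ^ 2 + 1 - 2 * s * ξ) = 4 * s ^ 2 * ‖x - a‖ ^ 2 := by
    rw [hda']
    exact alg_one s A ξ c ζ hcd hζ' hsA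
  have hcc : κ Z * c = (A ^ 2 - 1) / ‖x - a‖ ^ 2 := by
    have : A ^ 2 - 1 = (s ^ 2 - 1) ^ 2 / (4 * s ^ 2) := by
      rw [hA']; field_simp; ring
    rw [hκZ, hc, div_mul_div_comm, hdd, this, div_div, sq (s ^ 2 - 1)]
  have hfin : psi p Z = psi a x := by
    have hl : psi p Z = (κ Z * c) • x + (s + κ Z * (-(c * s) - 2 * ζ)) • e := by
      have : psi p Z = p + κ Z • (Z - p) := rfl
      rw [this, hZ, hz, hp]
      module
    have hr : psi a x = ((A ^ 2 - 1) / ‖x - a‖ ^ 2) • x +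
        ((1 - (A ^ 2 - 1) / ‖x - a‖ ^ 2) * A) • e := by
      have h1 : psi a x = a + ((A ^ 2 - 1) / ‖x - a‖ ^ 2) • (x - a) := rfl
      rw [h1]
      generalize (A ^ 2 - 1) / ‖x - a‖ ^ 2 = q
      rw [hae]
      module
    rw [hl, hr, ← hcc]
    congr 2
    refine alg_two s A ξ c ζ (κ Z) hs0 hcd hζ' hsA ?_
    have hd2 : s ^ 2 + 1 + 2 * s * ζ ≠ 0 := by nlinarith
    rw [hκZ, div_mul_cancel₀ _ hd2]
  have hzx : psi p z = x := psi_psi p x hp1 hxn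
  simp only [hG] at hoz
  rw [hfin, hzx, hκz, inv_pow] at hoz
  rw [← hcc, mul_pow]
  have : c ^ m ≠ 0 := by positivity
  field_simp at hoz
  linear_combination hoz

end Inv

theorem exists_submodule_finrank {E : Type*} [NormedAddCommGroup E] [InnerProductSpace ℝ E]
    [FiniteDimensional ℝ E] (W : Submodule ℝ E) (j : ℕ) (h1 : Module.finrank ℝ W ≤ j)
    (h2 : j ≤ Module.finrank ℝ E) : ∃ V : Submodule ℝ E, W ≤ V ∧ Module.finrank ℝ V = j := by
  induction j with
  | zero => exact ⟨W, le_rfl, by omega⟩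
  | succ j ih =>
    rcases Nat.lt_or_ge j (Module.finrank ℝ W) with h | h
    · exact ⟨W, le_rfl, by omega⟩
    · obtain ⟨V, hWV, hV⟩ := ih h (by omega)
      have hne : V ≠ ⊤ := by
        rintro rfl
        rw [finrank_top] at hV
        omega
      obtain ⟨v, -, hv⟩ := SetLike.exists_of_lt (lt_top_iff_ne_top.2 hne)
      refine ⟨V ⊔ ℝ ∙ v, hWV.trans le_sup_left, ?_⟩
      have hlt : V < V ⊔ ℝ ∙ v := by
        refine lt_of_le_of_ne le_sup_left fun heq => hv ?_
        rw [heq]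
        exact le_sup_right (a := V) (Submodule.mem_span_singleton_self v)
      have a1 := Submodule.finrank_lt_finrank_of_lt hlt
      have a2 := Submodule.finrank_add_le_finrank_add_finrank V (ℝ ∙ v)
      have a3 := finrank_span_le_card (R := ℝ) ({v} : Set E)
      rw [Set.toFinset_singleton, Finset.card_singleton] at a3
      omega

theorem tauMap_eq_psi {n : ℕ} (a x : Euc (n + 1)) (ha : 1 < ‖a‖) (hx : ‖x‖ = 1) :
    tauMap a x = psi a x := by
  have hd := sub_pos_of_out a x ha hx
  have hd' : ‖x - a‖ ^ 2 = 1 - 2 * ⟪x, a⟫_ℝ + ‖a‖ ^ 2 := by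
    rw [norm_sub_sq_real, hx]; ring
  have h2 : 2 * (1 - ⟪x, a⟫_ℝ) = ‖x - a‖ ^ 2 - (‖a‖ ^ 2 - 1) := by linarith
  rw [tauMap, psi, h2]
  generalize ‖x - a‖ ^ 2 = d at hd
  generalize ‖a‖ ^ 2 - 1 = b
  have : a = (d⁻¹ * d) • a := by rw [inv_mul_cancel₀ hd.ne', one_smul]
  have h3 : d⁻¹ • (b • x + (d - b) • a) = (d⁻¹ * d) • a + (b / d) • (x - a) := by
    rw [div_eq_mul_inv]
    module
  rw [h3, ← this]

theorem forward {n : ℕ} (m : ℕ) (hmn : m + 1 ≤ n) (a : Euc (n + 1)) (ha : 1 < ‖a‖)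
    (f : Euc (n + 1) → ℝ) (hf : ContinuousOn f (sphere (0 : Euc (n + 1)) 1)) (hm : 1 ≤ m)
    (h : ∀ τ : AffineSubspace ℝ (Euc (n + 1)),
        Module.finrank ℝ τ.direction = m + 1 → a ∈ τ →
        (∃ z ∈ τ, ‖z‖ < 1) →
        (∫ x in sphere (0 : Euc (n + 1)) 1 ∩ (τ : Set (Euc (n + 1))), f x ∂μH[(m : ℝ)]) = 0) :
    ∀ x ∈ sphere (0 : Euc (n + 1)) 1,
      f x = -(((‖a‖ ^ 2 - 1) / ‖x - a‖ ^ 2) ^ m * f (psi a x)) := by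
  intro x hx
  have hxn : ‖x‖ = 1 := by simpa using hx
  have hE : Module.finrank ℝ (Euc (n + 1)) = n + 1 := by simp
  obtain ⟨V, hWV, hV⟩ := exists_submodule_finrank (Submodule.span ℝ {a, x}) (m + 2)
    ((finrank_span_le_card _).trans (by
      rw [Set.toFinset_card, ← Nat.card_eq_fintype_card, Nat.card_coe_set_eq]
      exact (Set.ncard_insert_le _ _).trans (by simp))) (by omega)
  have haV : a ∈ V := hWV (Submodule.subset_span (by simp))
  have hxV : x ∈ V := hWV (Submodule.subset_span (by simp))
  let a' : V := ⟨a, haV⟩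
  let x' : V := ⟨x, hxV⟩
  have hcomp : CompleteSpace V := FiniteDimensional.complete ℝ V
  have hco := core_s9 m hV a' ha (fun y : V => f y)
    (hf.comp continuous_subtype_val.continuousOn (fun y hy => by simpa using hy)) (by
      intro w hw hz
      let T : Submodule ℝ (Euc (n + 1)) := ((ℝ ∙ w)ᗮ).map V.subtype
      let τ : AffineSubspace ℝ (Euc (n + 1)) := AffineSubspace.mk' a T
      have hmem : ∀ y : V, (y : Euc (n + 1)) ∈ τ ↔ ⟪y - a', w⟫_ℝ = 0 := by
        intro y
        rw [AffineSubspace.mem_mk', vsub_eq_sub, Submodule.mem_map,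
          ← Submodule.mem_orthogonal_singleton_iff_inner_left]
        constructor
        · rintro ⟨q, hq, hqe⟩
          have : q = y - a' := Subtype.ext hqe
          rwa [← this]
        · intro hq
          exact ⟨y - a', hq, rfl⟩
      have hτV : ∀ y ∈ τ, y ∈ V := by
        intro y hy
        rw [AffineSubspace.mem_mk', vsub_eq_sub, Submodule.mem_map] at hy
        obtain ⟨q, -, hqe⟩ := hy
        have : y = q + a := by rw [eq_add_of_sub_eq hqe.symm]; rfl
        rw [this]
        exact V.add_mem q.2 haV
      have hfr : Module.finrank ℝ τ.direction = m + 1 := by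
        rw [AffineSubspace.direction_mk', Submodule.finrank_map_subtype_eq]
        exact finrank_orth_succ (m + 1) hV w hw
      have hIntg := h τ hfr (AffineSubspace.self_mem_mk' _ _) (by
        obtain ⟨z, hz1, hz2⟩ := hz
        exact ⟨z, (hmem z).2 hz2, hz1⟩)
      set L : Set V := sphere (0 : V) 1 ∩ {y | ⟪y - a', w⟫_ℝ = 0} with hL
      have him : ((↑) : V → Euc (n + 1)) '' L =
          sphere (0 : Euc (n + 1)) 1 ∩ (τ : Set (Euc (n + 1))) := by
        ext y
        constructor
        · rintro ⟨q, ⟨hq1, hq2⟩, rfl⟩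
          exact ⟨by simpa using hq1, (hmem q).2 hq2⟩
        · rintro ⟨hy1, hy2⟩
          exact ⟨⟨y, hτV y hy2⟩, ⟨by simpa using hy1, (hmem ⟨y, hτV y hy2⟩).1 hy2⟩, rfl⟩
      have hLc : IsCompact L := (isCompact_sphere (0 : V) 1).inter_right
        (isClosed_eq (by fun_prop) continuous_const)
      have hconf := conf_integral m ((↑) : V → Euc (n + 1)) (fun _ => 1) L hLc.measurableSet
        measurable_const (fun _ _ => one_pos)
        (fun y _ z _ => by rw [one_mul, one_mul]; rfl) measurable_subtype_coe
        (hLc.image continuous_subtype_val).measurableSet f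
        (hf.mono (by rw [him]; exact Set.inter_subset_left))
      rw [him, hIntg] at hconf
      simpa using hconf.symm)
  have := hco x' (by simpa [x'] using hxn)
  exact this

theorem backward {n : ℕ} (m : ℕ) (a : Euc (n + 1)) (ha : 1 < ‖a‖)
    (f : Euc (n + 1) → ℝ) (hf : ContinuousOn f (sphere (0 : Euc (n + 1)) 1))
    (h : ∀ x ∈ sphere (0 : Euc (n + 1)) 1,
      f x = -(((‖a‖ ^ 2 - 1) / ‖x - a‖ ^ 2) ^ m * f (psi a x)))
    (τ : AffineSubspace ℝ (Euc (n + 1))) (haτ : a ∈ τ) :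
    (∫ x in sphere (0 : Euc (n + 1)) 1 ∩ (τ : Set (Euc (n + 1))), f x ∂μH[(m : ℝ)]) = 0 := by
  set L := sphere (0 : Euc (n + 1)) 1 ∩ (τ : Set (Euc (n + 1))) with hL
  have hLm : MeasurableSet L :=
    (isClosed_sphere.inter (AffineSubspace.closed_of_finiteDimensional τ)).measurableSet
  have hn : ∀ x ∈ L, ‖x‖ = 1 := fun x hx => by simpa using hx.1
  have hmap : ∀ x ∈ L, psi a x ∈ L := by
    intro x hx
    refine ⟨by simpa using psi_norm_s9 a x ha (hn x hx), ?_⟩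
    have := AffineMap.lineMap_mem (Q := τ) ((‖a‖ ^ 2 - 1) / ‖x - a‖ ^ 2) haτ hx.2
    rw [AffineMap.lineMap_apply, vsub_eq_sub, vadd_eq_add] at this
    rw [SetLike.mem_coe, psi, add_comm a]
    exact this
  have him : psi a '' L = L := by
    ext x
    constructor
    · rintro ⟨y, hy, rfl⟩
      exact hmap y hy
    · intro hx
      exact ⟨psi a x, hmap x hx, psi_psi a x ha (hn x hx)⟩
  have hconf := conf_integral m (psi a) (fun x => (‖a‖ ^ 2 - 1) / ‖x - a‖ ^ 2) L hLm
    (by fun_prop)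
    (fun x hx => div_pos (sq_sub_one_pos a ha) (sub_pos_of_out a x ha (hn x hx)))
    (fun x hx y hy => psi_dist_s9 a x y ha (hn x hx) (hn y hy))
    (psi_meas a) (by rw [him]; exact hLm) f (hf.mono (by rw [him]; exact Set.inter_subset_left))
  rw [him] at hconf
  have h2 : ∫ x in L, ((‖a‖ ^ 2 - 1) / ‖x - a‖ ^ 2) ^ m * f (psi a x) ∂μH[(m : ℝ)] =
      ∫ x in L, -f x ∂μH[(m : ℝ)] :=
    setIntegral_congr_fun hLm fun x hx => by
      have := h x hx.1
      linarith
  rw [integral_neg] at h2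
  linarith

/-- Kernel of the shifted Funk transform with exterior center:
for `f` continuous on `S^n`, the integrals of `f` over all sections of `S^n` by
`k`-planes through `a` meeting the open unit ball vanish iff `f = −W_a f` on `S^n`. -/
theorem statement9 (n k : ℕ) (hn : 2 ≤ n) (hk : 1 < k) (hkn : k ≤ n)
    (a : Euc (n + 1)) (ha : 1 < ‖a‖)
    (f : Euc (n + 1) → ℝ)
    (hf : ContinuousOn f (sphere (0 : Euc (n + 1)) 1)) :
    (∀ τ : AffineSubspace ℝ (Euc (n + 1)),
        Module.finrank ℝ τ.direction = k → a ∈ τ →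
        (∃ z ∈ τ, ‖z‖ < 1) →
        (∫ x in sphere (0 : Euc (n + 1)) 1 ∩ (τ : Set (Euc (n + 1))),
          f x ∂μH[(k : ℝ) - 1]) = 0) ↔
      ∀ x ∈ sphere (0 : Euc (n + 1)) 1, f x = -Wop k a f x := by
  obtain ⟨m, rfl⟩ : ∃ m, k = m + 1 := ⟨k - 1, by omega⟩
  have hcast : ((m + 1 : ℕ) : ℝ) - 1 = (m : ℝ) := by push_cast; ring
  rw [hcast]
  have hW : ∀ x ∈ sphere (0 : Euc (n + 1)) 1, Wop (m + 1) a f x =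
      ((‖a‖ ^ 2 - 1) / ‖x - a‖ ^ 2) ^ m * f (psi a x) := by
    intro x hx
    rw [Wop, tauMap_eq_psi a x ha (by simpa using hx), norm_sub_rev a x, Nat.add_sub_cancel]
  constructor
  · intro h x hx
    rw [hW x hx]
    exact forward m hkn a ha f hf (by omega) h x hx
  · intro h τ _ haτ _
    exact backward m a ha f hf (fun x hx => by rw [h x hx, hW x hx]) τ haτ
end

section
/- Let n ≥ 1 and let b ∈ ℝ^{n+1} with 0 < |b| < 1. Then for every x ∈ ℝ^{n+1} with x·b ≠ 1, (1 − b·(φ_b x)) (1 − b·x) = 1 − |b|². -/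
open MeasureTheory Metric Matrix
open scoped InnerProductSpace ENNReal

/-- For `0 < |b| < 1` and `x·b ≠ 1`,
`(1 − b·(φ_b x))(1 − b·x) = 1 − |b|²`. -/
theorem statement13 (n : ℕ) (hn : 1 ≤ n)
    (b : Euc (n + 1)) (hb0 : 0 < ‖b‖) (hb1 : ‖b‖ < 1) :
    ∀ x : Euc (n + 1), ⟪x, b⟫_ℝ ≠ 1 →
      (1 - ⟪b, phiMap b x⟫_ℝ) * (1 - ⟪b, x⟫_ℝ) = 1 - ‖b‖ ^ 2 := by
  intro x hx
  have hb : ‖b‖ ≠ 0 := hb0.ne'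
  rw [real_inner_comm] at hx
  have h1 : 1 - ⟪b, x⟫_ℝ ≠ 0 := fun h => hx (by linarith)
  have hc : ⟪x, b⟫_ℝ = ⟪b, x⟫_ℝ := real_inner_comm _ _
  have hp : ⟪b, x⟫_ℝ / ‖b‖ ^ 2 * ‖b‖ ^ 2 = ⟪b, x⟫_ℝ :=
    div_mul_cancel₀ _ (pow_ne_zero 2 hb)
  simp only [phiMap, inner_smul_right, inner_sub_right, real_inner_self_eq_norm_sq, hc, hp]
  field_simp
  ring
end

section
/- Let n ≥ 1 and let a ∈ ℝ^{n+1} with |a| > 1. Then for every y ∈ ℝ^{n+1} with y·a* ≠ 1, φ_{a*} y − a = −( s_{a*}/(1 − y·a*) ) ( Q_{a*} y + s_{a*} a ), where Q_{a*} y = y − ((y·a)/|a|²) a. -/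
open MeasureTheory Metric Matrix
open scoped InnerProductSpace ENNReal

/-- Formula (4.8): for `|a| > 1` and `y·a* ≠ 1`,
`φ_{a*} y − a = −(s_{a*}/(1 − y·a*)) (Q_{a*} y + s_{a*} a)`,
where `Q_{a*} y = y − ((y·a)/|a|²) a`. -/
theorem statement16 (n : ℕ) (hn : 1 ≤ n)
    (a : Euc (n + 1)) (ha : 1 < ‖a‖) :
    ∀ y : Euc (n + 1), ⟪y, aStar a⟫_ℝ ≠ 1 →
      phiMap (aStar a) y - a =
        (-(sStar a / (1 - ⟪y, aStar a⟫_ℝ))) •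
          ((y - (⟪y, a⟫_ℝ / ‖a‖ ^ 2) • a) + sStar a • a) := by
  intro y hy
  have hr : (‖a‖ ^ 2) ≠ 0 := by positivity
  have hr1 : 1 < ‖a‖ ^ 2 := by nlinarith
  have hb : ‖aStar a‖ ^ 2 = (‖a‖ ^ 2)⁻¹ := by
    unfold aStar
    rw [norm_smul, mul_pow, Real.norm_eq_abs, sq_abs]
    field_simp
  have hin : ⟪y, aStar a⟫_ℝ = ⟪y, a⟫_ℝ / ‖a‖ ^ 2 := by
    unfold aStar
    rw [real_inner_smul_right]
    field_simp
  have hs : sStar a ^ 2 = 1 - (‖a‖ ^ 2)⁻¹ := by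
    unfold sStar
    rw [hb, Real.sq_sqrt]
    have := inv_lt_one_of_one_lt₀ hr1
    linarith
  have hs' : Real.sqrt (1 - ‖aStar a‖ ^ 2) = sStar a := rfl
  unfold phiMap
  rw [hs', real_inner_comm y (aStar a), hb]
  rw [hin] at hy ⊢
  have hP : (⟪y, a⟫_ℝ / ‖a‖ ^ 2 / (‖a‖ ^ 2)⁻¹) • aStar a = (⟪y, a⟫_ℝ / ‖a‖ ^ 2) • a := by
    unfold aStar
    rw [smul_smul]
    congr 1
    field_simp
  rw [hP]
  unfold aStar
  generalize sStar a = s at *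
  generalize ⟪y, a⟫_ℝ / ‖a‖ ^ 2 = t at *
  generalize (‖a‖ ^ 2)⁻¹ = q at *
  have hD : 1 - t ≠ 0 := fun h => hy (by linarith)
  have hq : q = 1 - s ^ 2 := by linarith
  subst hq
  match_scalars <;> field_simp <;> ring
end
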